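/- arXiv:1802.03814 — 2 statements merged into one kernel-verified Lean document; each statement's English description precedes it below -/
import Mathlib

section
/- Let $S$ be a real-analytic function on a neighborhood of the origin in $\mathbf{R}^n$, not identically zero, with $S(0)=0$ and $\nabla S(0)=0$. Then there exist $r_0>0$, $a_0>0$, and an integer $d_0$ with $0\le d_0\le n-1$, such that for every $0<r<r_0$ there are positive constants $b_r$ and $B_r$ with $b_r\,\epsilon^{a_0}|\ln\epsilon|^{d_0} < \mu(\{\mathbf{t}\in(0,r)^n : S^*(\mathbf{t})<\epsilon\}) < B_r\,\epsilon^{a_0}|\ln\epsilon|^{d_0}$ for all $0<\epsilon<1/2$. -/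
open MeasureTheory Real Filter Topology Set
open scoped ENNReal

noncomputable section

namespace Paper

variable {n m : ℕ}

/-- The monomial `t ^ α`. -/
def monomial (α : Fin n → ℕ) (t : Fin n → ℝ) : ℝ := ∏ i, t i ^ α i

/-- `S` is real-analytic near the origin with Taylor coefficient family `c`:
its Taylor series at the origin converges to it near `0`. -/
def HasTaylorSeriesAtOrigin (S : (Fin n → ℝ) → ℝ) (c : (Fin n → ℕ) → ℝ) : Prop :=
  ∀ᶠ t in 𝓝 (0 : Fin n → ℝ), HasSum (fun α => c α * monomial α t) (S t)

/-- The Newton polyhedron of the Taylor coefficient family `c`: the convex hull of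
the octants above the exponents of the nonzero coefficients. -/
def newtonPolyhedron (c : (Fin n → ℕ) → ℝ) : Set (Fin n → ℝ) :=
  convexHull ℝ {x : Fin n → ℝ | ∃ α : Fin n → ℕ, c α ≠ 0 ∧ ∀ i, (α i : ℝ) ≤ x i}

/-- The vertices (extreme points) of the Newton polyhedron. -/
def newtonVertices (c : (Fin n → ℕ) → ℝ) : Set (Fin n → ℝ) :=
  Set.extremePoints ℝ (newtonPolyhedron c)

/-- `f^*`, the sum of the absolute values of the vertex monomials. -/
def starFn (c : (Fin n → ℕ) → ℝ) (t : Fin n → ℝ) : ℝ :=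
  ∑' v : newtonVertices c, ∏ i, |t i| ^ ((v : Fin n → ℝ) i)

/-- Compact (exposed) faces of the Newton polyhedron; a vertex is a face of dimension zero. -/
def IsCompactFace (c : (Fin n → ℕ) → ℝ) (F : Set (Fin n → ℝ)) : Prop :=
  IsExposed ℝ (newtonPolyhedron c) F ∧ F.Nonempty ∧ IsCompact F

/-- The face polynomial `f_F(t) = ∑_{α ∈ F} f_α t^α`. -/
def facePoly (c : (Fin n → ℕ) → ℝ) (F : Set (Fin n → ℝ)) (t : Fin n → ℝ) : ℝ :=
  ∑' α : {α : Fin n → ℕ // (fun i => (α i : ℝ)) ∈ F}, c α.1 * monomial α.1 t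

/-- The order of vanishing of `g` at `x`. -/
def vanishingOrder (g : (Fin n → ℝ) → ℝ) (x : Fin n → ℝ) : ℕ∞ :=
  sSup {k : ℕ∞ | ∀ j : ℕ, (j : ℕ∞) < k → iteratedFDeriv ℝ j g x = 0}

/-- `o(f)`: the maximum order of a zero of a compact face polynomial on `(ℝ ∖ {0})^n`
(`0` if there are no such zeroes). -/
def newtonOrder (c : (Fin n → ℕ) → ℝ) : ℕ∞ :=
  sSup {k : ℕ∞ | ∃ F : Set (Fin n → ℝ), IsCompactFace c F ∧
    ∃ x : Fin n → ℝ, (∀ i, x i ≠ 0) ∧ facePoly c F x = 0 ∧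
      k ≤ vanishingOrder (facePoly c F) x}

/-- The Euclidean norm `|t_k|` of the `k`-th group of variables. -/
def grpNorm (grp : Fin n → Fin m) (k : Fin m) (t : Fin n → ℝ) : ℝ :=
  Real.sqrt (∑ i ∈ Finset.univ.filter (fun i => grp i = k), t i ^ 2)

/-- The weight `∏_k |t_k|^{-α_k}`. -/
def kernelWeight (grp : Fin n → Fin m) (a : Fin m → ℝ) (t : Fin n → ℝ) : ℝ :=
  ∏ k, grpNorm grp k t ^ (-(a k))

/-- The measure `dμ = ∏_k |t_k|^{-α_k} dm`, `m` being Lebesgue measure. -/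
def fracMeasure (grp : Fin n → Fin m) (a : Fin m → ℝ) : Measure (Fin n → ℝ) :=
  volume.withDensity fun t => ENNReal.ofReal (kernelWeight grp a t)

/-- The characterization (1.5) of the sublevel growth exponents `a₀`, `d₀`. -/
def IsSublevelExponent (grp : Fin n → Fin m) (a : Fin m → ℝ) (c : (Fin n → ℕ) → ℝ)
    (a₀ : ℝ) (d₀ : ℕ) : Prop :=
  0 < a₀ ∧ d₀ ≤ n - 1 ∧ ∃ r₀ > (0 : ℝ), ∀ r : ℝ, 0 < r → r < r₀ →
    ∃ b B : ℝ, 0 < b ∧ 0 < B ∧ ∀ ε : ℝ, 0 < ε → ε < 1/2 →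
      ENNReal.ofReal (b * ε ^ a₀ * |Real.log ε| ^ d₀) <
          fracMeasure grp a {t | (∀ i, t i ∈ Set.Ioo 0 r) ∧ starFn c t < ε} ∧
        fracMeasure grp a {t | (∀ i, t i ∈ Set.Ioo 0 r) ∧ starFn c t < ε} <
          ENNReal.ofReal (B * ε ^ a₀ * |Real.log ε| ^ d₀)

/-- The kernel bounds (1.2a)-(1.2b): `K` is `C¹` off the coordinate hyperplanes,
`|K(t)| ≤ C ∏_k |t_k|^{-α_k}` and `|∂_{t_i} K(t)| ≤ C |t_i|⁻¹ ∏_k |t_k|^{-α_k}`. -/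
def KernelBounds (grp : Fin n → Fin m) (a : Fin m → ℝ) (K : (Fin n → ℝ) → ℝ) : Prop :=
  ContDiffOn ℝ 1 K {t | ∀ i, t i ≠ 0} ∧
  ∃ C : ℝ, ∀ t : Fin n → ℝ, (∀ i, t i ≠ 0) →
    |K t| ≤ C * kernelWeight grp a t ∧
    ∀ i : Fin n, |fderiv ℝ K t (Pi.single i 1)| ≤ C / |t i| * kernelWeight grp a t

/-- The averaging operator (1.1),
`Tf(x, x_{n+1}) = ∫ f(x - t, x_{n+1} - S(t)) K(t) dt`. -/
def radonOp (S K : (Fin n → ℝ) → ℝ) (f : (Fin (n+1) → ℝ) → ℂ) :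
    (Fin (n+1) → ℝ) → ℂ :=
  fun x => ∫ t : Fin n → ℝ, (K t : ℂ) * f (fun j => x j - Fin.snoc (α := fun _ => ℝ) t (S t) j)

/-- The Fourier transform on `ℝ^N`. -/
def fourierTransform {N : ℕ} (g : (Fin N → ℝ) → ℂ) (ξ : Fin N → ℝ) : ℂ :=
  ∫ x : Fin N → ℝ,
    Complex.exp (-2 * (Real.pi : ℂ) * Complex.I * ((∑ i, x i * ξ i : ℝ) : ℂ)) * g x

/-- The inverse Fourier transform on `ℝ^N`. -/
def fourierInv {N : ℕ} (g : (Fin N → ℝ) → ℂ) (x : Fin N → ℝ) : ℂ :=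
  ∫ ξ : Fin N → ℝ,
    Complex.exp (2 * (Real.pi : ℂ) * Complex.I * ((∑ i, x i * ξ i : ℝ) : ℂ)) * g ξ

/-- The Bessel potential `(I - Δ)^{β/2} g`, defined via the Fourier transform. -/
def besselPotential {N : ℕ} (β : ℝ) (g : (Fin N → ℝ) → ℂ) : (Fin N → ℝ) → ℂ :=
  fun x => fourierInv
    (fun ξ => (((1 + ∑ i, ξ i ^ 2) ^ (β / 2) : ℝ) : ℂ) * fourierTransform g ξ) x

/-- `T` is bounded from `L^p(ℝ^N)` to the `L^p` Sobolev space `L^p_β(ℝ^N)`,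
whose norm is `‖(I - Δ)^{β/2} f‖_{L^p}`. -/
def BddLpSobolev {N : ℕ} (p β : ℝ)
    (T : ((Fin N → ℝ) → ℂ) → ((Fin N → ℝ) → ℂ)) : Prop :=
  ∃ C : ℝ, 0 ≤ C ∧ ∀ f : SchwartzMap (Fin N → ℝ) ℂ,
    eLpNorm (besselPotential β (T ⇑f)) (ENNReal.ofReal p) volume ≤
      ENNReal.ofReal C * eLpNorm (⇑f) (ENNReal.ofReal p) volume

/-- `min(|t₁|,...,|tₙ|, S^*(t))`. -/
def minFactor (c : (Fin n → ℕ) → ℝ) (t : Fin n → ℝ) : ℝ :=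
  min (⨅ i, |t i|) (starFn c t)

/-- The analytic family (3.1):
`T_z f(x) = e^{z²} ∫ (min(|t₁|,...,|tₙ|,S^*(t)))^z f(x - t, x_{n+1} - S(t)) K(t) dt`. -/
def radonOpZ (S K : (Fin n → ℝ) → ℝ) (c : (Fin n → ℕ) → ℝ) (z : ℂ)
    (f : (Fin (n+1) → ℝ) → ℂ) : (Fin (n+1) → ℝ) → ℂ :=
  fun x => Complex.exp (z ^ 2) *
    ∫ t : Fin n → ℝ,
      ((minFactor c t : ℂ) ^ z) * (K t : ℂ) * f (fun j => x j - Fin.snoc (α := fun _ => ℝ) t (S t) j)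

/-- The Fourier transform (3.8) of the convolution kernel `ν_z` of `T_z`. -/
def nuHatZ (S K : (Fin n → ℝ) → ℝ) (c : (Fin n → ℕ) → ℝ) (z : ℂ)
    (lam : Fin (n+1) → ℝ) : ℂ :=
  Complex.exp (z ^ 2) *
    ∫ t : Fin n → ℝ,
      Complex.exp (Complex.I *
          (((∑ i, lam i.castSucc * t i) + lam (Fin.last n) * S t : ℝ) : ℂ)) *
        ((minFactor c t : ℂ) ^ z) * (K t : ℂ)

/-!
Put `t_i = exp (-y_i)` and `ε = exp (-L)`. The sublevel set becomes, up to a shift by a constant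
independent of `L`, the polyhedron `P_L` of the points `y ≥ 0` with `v ⬝ᵥ y ≥ L` for all vertices
`v`, and the density becomes comparable to `exp (-h y)`, where `h` is the maximum of finitely many
linear forms; the condition `α_k < l_k` makes `h` positive on the orthant away from the origin.
Minimizing `h` over `P_L` is a linear program with value `a L`, and its optimal points form `L`
times a polytope of some dimension `d`. Since the program cone is polyhedral, points of `P_L` with
`h y ≤ a L + k` lie within `O(k + 1)` of that polytope, so the slice `a L + k ≤ h ≤ a L + k + 1`
has volume at most a constant times `(k + 1) ^ n * L ^ d`. Summing `exp (-(a L + k))` times this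
gives `∫ exp (-h) ≍ exp (-a L) * L ^ d = ε ^ a * |log ε| ^ d`. Finally `d < n`, for otherwise no
constraint `v ⬝ᵥ y ≥ L` would be tight on the whole optimal face, and its barycentre could be
scaled down to a better point.
-/

section PolyhedralCones

variable {R E : Type*} [Field R] [LinearOrder R] [IsStrictOrderedRing R] [AddCommGroup E]
  [Module R E]

lemma nonneg_of_mem_hull {s : Set E} {ψ : E →ₗ[R] R} (hs : ∀ g ∈ s, 0 ≤ ψ g) {x : E}
    (hx : x ∈ PointedCone.hull R s) : 0 ≤ ψ x := by
  have hle : PointedCone.hull R s ≤ (PointedCone.positive R R).comap ψ := Submodule.span_le.2 hs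
  exact hle hx

lemma eq_zero_or_neg_of_mem_hull {s : Set E} {ψ : E →ₗ[R] R} (hs : ∀ g ∈ s, ψ g < 0) {x : E}
    (hx : x ∈ PointedCone.hull R s) : x = 0 ∨ ψ x < 0 := by
  induction hx using Submodule.span_induction with
  | mem x hx => exact .inr (hs x hx)
  | zero => exact .inl rfl
  | add x y _ _ hx hy =>
    rcases hx with rfl | hx
    · rwa [zero_add]
    rcases hy with rfl | hy
    · exact .inr (by rwa [add_zero])
    · exact .inr (by rw [map_add]; exact add_neg hx hy)
  | smul r x _ hx =>
    obtain ⟨r, hr⟩ := r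
    rw [Nonneg.mk_smul]
    rcases hx with rfl | hx
    · exact .inl (smul_zero r)
    rcases hr.eq_or_lt with rfl | hr
    · exact .inl (zero_smul R x)
    · exact .inr (by rw [map_smul]; exact mul_neg_of_pos_of_neg hr hx)

lemma smul_sub_smul_mem_of_mem_hull {s t : Set E} {C : PointedCone R E} {ψ : E →ₗ[R] R}
    (h : ∀ g ∈ s, ∀ g' ∈ t, ψ g • g' - ψ g' • g ∈ C) {x y : E}
    (hx : x ∈ PointedCone.hull R s) (hy : y ∈ PointedCone.hull R t) :
    ψ x • y - ψ y • x ∈ C := by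
  have hleft (g' : E) (hg' : g' ∈ t) :
      PointedCone.hull R s ≤ C.comap (ψ.smulRight g' - ψ g' • LinearMap.id) :=
    Submodule.span_le.2 fun g hg => h g hg g' hg'
  have hright : PointedCone.hull R t ≤ C.comap (ψ x • LinearMap.id - ψ.smulRight x) :=
    Submodule.span_le.2 fun g' hg' => hleft g' hg' hx
  exact hright hy

/- Cutting `C` by the half-space `0 ≤ ψ` replaces each generator `g'` on the negative side by the
points where the segments from `g'` to the generators `g` on the other side meet `ψ = 0`. -/
lemma fg_inf_comap_positive {C : PointedCone R E} (hC : C.FG) (ψ : E →ₗ[R] R) :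
    (C ⊓ (PointedCone.positive R R).comap ψ).FG := by
  obtain ⟨s, hs, rfl⟩ := Submodule.fg_def.1 hC
  set P := {g ∈ s | 0 ≤ ψ g}
  set N := {g ∈ s | ψ g < 0}
  set Q := P ∪ Set.image2 (fun g g' => ψ g • g' - ψ g' • g) P N
  have hPN : s = P ∪ N := by
    ext g
    simp only [P, N, mem_union, mem_ofPred_eq, ← and_or_left, le_or_gt, and_true]
  have hQ : Q.Finite := (hs.sep _).union ((hs.sep _).image2 _ (hs.sep _))
  refine Submodule.fg_def.2 ⟨Q, hQ, le_antisymm (Submodule.span_le.2 ?_) ?_⟩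
  · rintro _ (hg | ⟨g, hg, g', hg', rfl⟩)
    · exact ⟨PointedCone.subset_hull hg.1, hg.2⟩
    · refine ⟨?_, by simp [mul_comm]⟩
      change ψ g • g' - ψ g' • g ∈ PointedCone.hull R s
      rw [sub_eq_add_neg, ← neg_smul]
      exact add_mem (PointedCone.smul_mem _ hg.2 (PointedCone.subset_hull hg'.1))
        (PointedCone.smul_mem _ (neg_nonneg.2 hg'.2.le) (PointedCone.subset_hull hg.1))
  · rintro x ⟨hx, hψx⟩
    rw [hPN, Submodule.span_union] at hx
    obtain ⟨p, hp, q, hq, rfl⟩ := Submodule.mem_sup.1 hx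
    have hpQ : p ∈ PointedCone.hull R Q := Submodule.span_mono subset_union_left hp
    rcases eq_zero_or_neg_of_mem_hull (fun g hg => hg.2) hq with rfl | hψq
    · rwa [add_zero]
    replace hψx : 0 ≤ ψ p + ψ q := by simpa using hψx
    have hcross : ψ p • q - ψ q • p ∈ PointedCone.hull R Q :=
      smul_sub_smul_mem_of_mem_hull
        (fun g hg g' hg' => PointedCone.subset_hull (.inr ⟨g, hg, g', hg', rfl⟩)) hp hq
    have hψp : 0 < ψ p := by linarith [show ψ q < 0 from hψq]
    refine (PointedCone.smul_mem_iff _ hψp).1 ?_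
    convert add_mem hcross (PointedCone.smul_mem _ hψx hpQ) using 1
    module

lemma fg_top_pointedCone [FiniteDimensional R E] : (⊤ : PointedCone R E).FG := by
  let b := Module.finBasis R E
  refine Submodule.fg_def.2 ⟨Set.range b ∪ Set.range fun i => -b i,
    (finite_range _).union (finite_range _), eq_top_iff.2 fun x _ => ?_⟩
  rw [← b.sum_repr x]
  refine sum_mem fun i _ => ?_
  rcases le_total 0 (b.repr x i) with h | h
  · exact PointedCone.smul_mem _ h (PointedCone.subset_hull (.inl ⟨i, rfl⟩))
  · rw [← neg_smul_neg]
    exact PointedCone.smul_mem _ (neg_nonneg.2 h) (PointedCone.subset_hull (.inr ⟨i, rfl⟩))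

theorem fg_dual_id_of_finite [FiniteDimensional R E] {F : Set (E →ₗ[R] R)} (hF : F.Finite) :
    (PointedCone.dual .id F).FG := by
  induction F, hF using Set.Finite.induction_on with
  | empty => rw [PointedCone.dual_empty]; exact fg_top_pointedCone
  | insert _ _ ih =>
    rw [PointedCone.dual_insert, inf_comm, PointedCone.dual_singleton]
    exact fg_inf_comap_positive ih _

lemma exists_abs_le_mul_of_fg {C : PointedCone R E} (hC : C.FG) {φ ψ : E →ₗ[R] R}
    (hψ : ∀ x ∈ C, 0 ≤ ψ x) (hφ : ∀ x ∈ C, ψ x = 0 → φ x = 0) :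
    ∃ K, 0 ≤ K ∧ ∀ x ∈ C, |φ x| ≤ K * ψ x := by
  obtain ⟨s, rfl⟩ := hC
  have hratio (g : E) (hg : g ∈ s) : |φ g| ≤ |φ g| / ψ g * ψ g := by
    have hmem := PointedCone.subset_hull (R := R) (Finset.mem_coe.2 hg)
    by_cases h0 : ψ g = 0
    · simp [hφ g hmem h0, h0]
    · rw [div_mul_cancel₀ _ h0]
  have hnonneg (g : E) (hg : g ∈ s) : 0 ≤ |φ g| / ψ g :=
    div_nonneg (abs_nonneg _) (hψ g (PointedCone.subset_hull (Finset.mem_coe.2 hg)))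
  refine ⟨∑ g ∈ s, |φ g| / ψ g, Finset.sum_nonneg hnonneg, fun x hx => ?_⟩
  set K := ∑ g ∈ s, |φ g| / ψ g
  have hgen (g : E) (hg : g ∈ s) : |φ g| ≤ K * ψ g :=
    (hratio g hg).trans (mul_le_mul_of_nonneg_right (Finset.single_le_sum hnonneg hg)
      (hψ g (PointedCone.subset_hull (Finset.mem_coe.2 hg))))
  have hupper := nonneg_of_mem_hull (ψ := K • ψ - φ)
    (fun g hg => sub_nonneg.2 ((le_abs_self _).trans (hgen g hg))) hx
  have hlower := nonneg_of_mem_hull (ψ := K • ψ + φ)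
    (fun g hg => by simpa using neg_le_iff_add_nonneg.1 ((neg_le_abs _).trans (hgen g hg))) hx
  simp only [LinearMap.sub_apply, LinearMap.add_apply, LinearMap.smul_apply, smul_eq_mul]
    at hupper hlower
  exact abs_le.2 ⟨by linarith, by linarith⟩

lemma exists_min_ratio_of_fg {C : PointedCone R E} (hC : C.FG) {φ ψ : E →ₗ[R] R}
    (hψ : ∀ x ∈ C, 0 ≤ ψ x) (hφ : ∀ x ∈ C, 0 ≤ φ x) (hpos : ∃ x ∈ C, 0 < ψ x) :
    ∃ x ∈ C, ψ x = 1 ∧ ∀ y ∈ C, φ x * ψ y ≤ φ y := by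
  obtain ⟨s, rfl⟩ := hC
  have hmem {g : E} (hg : g ∈ s) := PointedCone.subset_hull (R := R) (Finset.mem_coe.2 hg)
  have hne : (s.filter fun g => 0 < ψ g).Nonempty := by
    by_contra! hempty
    obtain ⟨x, hx, hψx⟩ := hpos
    have hnonpos := nonneg_of_mem_hull (ψ := -ψ) (fun g hg => by
      simpa using Finset.filter_eq_empty_iff.1 hempty hg) hx
    exact hψx.not_ge (by simpa using hnonpos)
  obtain ⟨g, hg, hmin⟩ := Finset.exists_min_image _ (fun g => φ g / ψ g) hne
  obtain ⟨hgs, hψg⟩ := Finset.mem_filter.1 hg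
  refine ⟨(ψ g)⁻¹ • g, PointedCone.smul_mem _ (inv_nonneg.2 hψg.le) (hmem hgs),
    by simp [hψg.ne'], fun y hy => ?_⟩
  have hle (g' : E) (hg' : g' ∈ s) : φ g / ψ g * ψ g' ≤ φ g' := by
    rcases (hψ g' (hmem hg')).eq_or_lt with h0 | hψg'
    · simpa [← h0] using hφ g' (hmem hg')
    · exact (le_div_iff₀ hψg').1 (hmin g' (Finset.mem_filter.2 ⟨hg', hψg'⟩))
  have := nonneg_of_mem_hull (ψ := φ - (φ g / ψ g) • ψ) (fun g' hg' => by simpa using hle g' hg') hy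
  simpa [div_eq_inv_mul] using this

end PolyhedralCones

section LinearProgram

variable {E ι κ σ : Type*} [AddCommGroup E] [Module ℝ E] {p : ι → E →ₗ[ℝ] ℝ}
  {v : κ → E →ₗ[ℝ] ℝ} {ℓ : σ → E →ₗ[ℝ] ℝ}

/-- The linear programs `min (maxₛ ℓ s y)` over `0 ≤ p i y`, `L ≤ v j y` for all right-hand sides
`L ≥ 0` at once: the cone of the triples `(y, L, τ)` for which `y` is feasible for `L` and has
value at most `τ`. -/
def programCone (p : ι → E →ₗ[ℝ] ℝ) (v : κ → E →ₗ[ℝ] ℝ) (ℓ : σ → E →ₗ[ℝ] ℝ) :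
    PointedCone ℝ (E × ℝ × ℝ) where
  carrier := {x | (∀ i, 0 ≤ p i x.1) ∧ 0 ≤ x.2.1 ∧ (∀ j, x.2.1 ≤ v j x.1) ∧ ∀ s, ℓ s x.1 ≤ x.2.2}
  zero_mem' := by simp
  add_mem' := by
    rintro x y ⟨hpx, hLx, hvx, hℓx⟩ ⟨hpy, hLy, hvy, hℓy⟩
    simp only [mem_ofPred_eq, Prod.fst_add, Prod.snd_add, map_add]
    exact ⟨fun i => add_nonneg (hpx i) (hpy i), add_nonneg hLx hLy,
      fun j => add_le_add (hvx j) (hvy j), fun s => add_le_add (hℓx s) (hℓy s)⟩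
  smul_mem' := by
    rintro ⟨r, hr⟩ x ⟨hp, hL, hv, hℓ⟩
    simp only [mem_ofPred_eq, Nonneg.mk_smul, Prod.smul_fst, Prod.smul_snd, map_smul, smul_eq_mul]
    exact ⟨fun i => mul_nonneg hr (hp i), mul_nonneg hr hL,
      fun j => mul_le_mul_of_nonneg_left (hv j) hr, fun s => mul_le_mul_of_nonneg_left (hℓ s) hr⟩

lemma mem_programCone {y : E} {L τ : ℝ} : (y, L, τ) ∈ programCone p v ℓ ↔
    (∀ i, 0 ≤ p i y) ∧ 0 ≤ L ∧ (∀ j, L ≤ v j y) ∧ ∀ s, ℓ s y ≤ τ :=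
  .rfl

lemma programCone_fg [FiniteDimensional ℝ E] [Finite ι] [Finite κ] [Finite σ] :
    (programCone p v ℓ).FG := by
  let pE : E × ℝ × ℝ →ₗ[ℝ] E := .fst ℝ E (ℝ × ℝ)
  let pL : E × ℝ × ℝ →ₗ[ℝ] ℝ := .fst ℝ ℝ ℝ ∘ₗ .snd ℝ E (ℝ × ℝ)
  let pτ : E × ℝ × ℝ →ₗ[ℝ] ℝ := .snd ℝ ℝ ℝ ∘ₗ .snd ℝ E (ℝ × ℝ)
  let F : Set (E × ℝ × ℝ →ₗ[ℝ] ℝ) := range (fun i => p i ∘ₗ pE) ∪ ({pL} ∪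
    (range (fun j => v j ∘ₗ pE - pL) ∪ range (fun s => pτ - ℓ s ∘ₗ pE)))
  have hF : F.Finite := (finite_range _).union <| (finite_singleton _).union <|
    (finite_range _).union (finite_range _)
  have hdual : programCone p v ℓ = PointedCone.dual .id F := by
    ext ⟨y, L, τ⟩
    simp only [F, mem_programCone, PointedCone.dual_union, PointedCone.dual_singleton,
      Submodule.mem_inf, PointedCone.mem_dual, forall_mem_range, PointedCone.mem_comap,
      PointedCone.mem_positive, LinearMap.id_apply, LinearMap.sub_apply, LinearMap.comp_apply,
      LinearMap.fst_apply, LinearMap.snd_apply, sub_nonneg, pE, pL, pτ]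
  exact hdual ▸ fg_dual_id_of_finite hF

/-- Coercivity of the programs: on the cone `0 ≤ p i y` the objective `maxₛ ℓ s y` is positive
except at the origin. -/
def IsCoerciveProgram (p : ι → E →ₗ[ℝ] ℝ) (ℓ : σ → E →ₗ[ℝ] ℝ) : Prop :=
  ∀ y, (∀ i, 0 ≤ p i y) → (∀ s, ℓ s y ≤ 0) → y = 0

lemma IsCoerciveProgram.eq_zero_of_mem_programCone (hcoer : IsCoerciveProgram p ℓ) {y : E} {L τ : ℝ}
    (h : (y, L, τ) ∈ programCone p v ℓ) (hτ : τ ≤ 0) : y = 0 :=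
  hcoer y h.1 fun s => (h.2.2.2 s).trans hτ

lemma IsCoerciveProgram.level_eq_zero_of_mem_programCone [Nonempty κ]
    (hcoer : IsCoerciveProgram p ℓ) {y : E} {L τ : ℝ} (h : (y, L, τ) ∈ programCone p v ℓ)
    (hτ : τ ≤ 0) : L = 0 := by
  obtain ⟨j⟩ := ‹Nonempty κ›
  have hL : L ≤ v j y := h.2.2.1 j
  rw [hcoer.eq_zero_of_mem_programCone h hτ, map_zero] at hL
  exact hL.antisymm h.2.1

lemma IsCoerciveProgram.value_nonneg_of_mem_programCone [Nonempty σ]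
    (hcoer : IsCoerciveProgram p ℓ) {y : E} {L τ : ℝ} (h : (y, L, τ) ∈ programCone p v ℓ) :
    0 ≤ τ := by
  obtain ⟨s⟩ := ‹Nonempty σ›
  by_contra! hτ
  have hle : ℓ s y ≤ τ := h.2.2.2 s
  rw [hcoer.eq_zero_of_mem_programCone h hτ.le, map_zero] at hle
  exact hτ.not_ge hle

/-- `a` is the optimal value of the program with right-hand side `L = 1`; by homogeneity that of
the program with right-hand side `L` is then `a * L`. -/
def IsOptimalValue (p : ι → E →ₗ[ℝ] ℝ) (v : κ → E →ₗ[ℝ] ℝ) (ℓ : σ → E →ₗ[ℝ] ℝ) (a : ℝ) : Prop :=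
  IsLeast {τ | ∃ y, (y, 1, τ) ∈ programCone p v ℓ} a

variable {a : ℝ}

lemma IsOptimalValue.mul_le [Nonempty σ] (ha : IsOptimalValue p v ℓ a)
    (hcoer : IsCoerciveProgram p ℓ) {y : E} {L τ : ℝ} (h : (y, L, τ) ∈ programCone p v ℓ) :
    a * L ≤ τ := by
  rcases h.2.1.eq_or_lt with rfl | hL
  · simpa using hcoer.value_nonneg_of_mem_programCone h
  replace hL : 0 < L := hL
  have hscaled : (L⁻¹ • y, 1, L⁻¹ * τ) ∈ programCone p v ℓ := by
    simpa [hL.ne'] using PointedCone.smul_mem _ (inv_nonneg.2 hL.le) h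
  have := ha.2 ⟨_, hscaled⟩
  rwa [← div_eq_inv_mul, le_div_iff₀ hL] at this

lemma exists_isOptimalValue [FiniteDimensional ℝ E] [Finite ι] [Finite κ] [Finite σ] [Nonempty κ]
    [Nonempty σ] (hcoer : IsCoerciveProgram p ℓ)
    (hfeas : ∃ y, (∀ i, 0 ≤ p i y) ∧ ∀ j, 0 < v j y) : ∃ a > 0, IsOptimalValue p v ℓ a := by
  have hpos : ∃ x ∈ programCone p v ℓ, 0 < x.2.1 := by
    obtain ⟨y, hpy, hvy⟩ := hfeas
    obtain ⟨j, hj⟩ := Finite.exists_min fun j => v j y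
    obtain ⟨s, hs⟩ := Finite.exists_max fun s => ℓ s y
    exact ⟨(y, v j y, ℓ s y), ⟨hpy, (hvy j).le, hj, hs⟩, hvy j⟩
  obtain ⟨⟨y, L, a⟩, hmem, hL, hmin⟩ := exists_min_ratio_of_fg programCone_fg
    (ψ := .fst ℝ ℝ ℝ ∘ₗ .snd ℝ E (ℝ × ℝ)) (φ := .snd ℝ ℝ ℝ ∘ₗ .snd ℝ E (ℝ × ℝ))
    (fun _ h => (mem_programCone.1 h).2.1) (fun _ h => hcoer.value_nonneg_of_mem_programCone h) hpos
  obtain rfl : L = 1 := hL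
  refine ⟨a, ?_, ⟨y, hmem⟩, fun τ ⟨y', hy'⟩ => by simpa using hmin _ hy'⟩
  by_contra! ha
  exact one_ne_zero (hcoer.level_eq_zero_of_mem_programCone hmem ha)

/- If every constraint were slack somewhere on the optimal face, all would be slack at the
barycentre, which could then be scaled down. -/
lemma IsOptimalValue.exists_tight_constraint [Finite κ] [Nonempty κ] [Nonempty σ]
    (ha : IsOptimalValue p v ℓ a) (hcoer : IsCoerciveProgram p ℓ) (hpos : 0 < a) :
    ∃ j, ∀ y, (y, 1, a) ∈ programCone p v ℓ → v j y = 1 := by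
  cases nonempty_fintype κ
  by_contra! hslack
  choose y hy hne using hslack
  have hsum : (∑ j, y j, (Fintype.card κ : ℝ), Fintype.card κ * a) ∈ programCone p v ℓ := by
    convert sum_mem fun j (_ : j ∈ Finset.univ) => hy j using 1
    simp [Prod.ext_iff, Prod.fst_sum, Prod.snd_sum]
  have hlt (j : κ) : (Fintype.card κ : ℝ) < v j (∑ k, y k) := by
    rw [map_sum, ← nsmul_one, ← Finset.card_univ, ← Finset.sum_const]
    exact Finset.sum_lt_sum (fun k _ => (hy k).2.2.1 j)
      ⟨j, Finset.mem_univ j, ((hy j).2.2.1 j).lt_of_ne' (hne j)⟩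
  obtain ⟨j, hj⟩ := Finite.exists_min fun j => v j (∑ k, y k)
  have hle := ha.mul_le hcoer (mem_programCone.2
    ⟨hsum.1, (Nat.cast_nonneg _).trans (hlt j).le, hj, hsum.2.2.2⟩)
  nlinarith [hlt j]

lemma IsOptimalValue.exists_abs_le_gap [FiniteDimensional ℝ E] [Finite ι] [Finite κ] [Finite σ]
    [Nonempty σ] (ha : IsOptimalValue p v ℓ a) (hcoer : IsCoerciveProgram p ℓ)
    {φ : E →ₗ[ℝ] ℝ} {y₀ : E} (hφ : ∀ y, (y, 1, a) ∈ programCone p v ℓ → φ y = φ y₀) :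
    ∃ C, 0 ≤ C ∧ ∀ y L τ, (y, L, τ) ∈ programCone p v ℓ → |φ (y - L • y₀)| ≤ C * (τ - a * L) := by
  have hvanish {y : E} {L : ℝ} (h : (y, L, a * L) ∈ programCone p v ℓ) : φ (y - L • y₀) = 0 := by
    rcases (mem_programCone.1 h).2.1.eq_or_lt with rfl | hL
    · simp [hcoer.eq_zero_of_mem_programCone h (mul_zero a).le]
    have hscaled : (L⁻¹ • y, 1, a) ∈ programCone p v ℓ := by
      simpa [hL.ne', mul_comm a] using PointedCone.smul_mem _ (inv_nonneg.2 hL.le) h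
    rw [map_sub, map_smul, ← hφ _ hscaled, map_smul, smul_inv_smul₀ hL.ne', sub_self]
  obtain ⟨C, hC, hle⟩ := exists_abs_le_mul_of_fg (programCone_fg (p := p) (v := v) (ℓ := ℓ))
    (φ := φ ∘ₗ (.fst ℝ E (ℝ × ℝ) - (.fst ℝ ℝ ℝ ∘ₗ .snd ℝ E (ℝ × ℝ)).smulRight y₀))
    (ψ := .snd ℝ ℝ ℝ ∘ₗ .snd ℝ E (ℝ × ℝ) - a • (.fst ℝ ℝ ℝ ∘ₗ .snd ℝ E (ℝ × ℝ)))
    (fun _ h => sub_nonneg.2 (ha.mul_le hcoer h)) fun ⟨y, L, τ⟩ h hgap => by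
      obtain rfl : τ = a * L := sub_eq_zero.1 hgap
      exact hvanish h
  exact ⟨C, hC, fun y L τ h => by simpa using hle _ h⟩

lemma IsOptimalValue.exists_abs_le_level_add_gap [FiniteDimensional ℝ E] [Finite ι] [Finite κ]
    [Finite σ] [Nonempty σ] (ha : IsOptimalValue p v ℓ a)
    (hcoer : IsCoerciveProgram p ℓ) (φ : E →ₗ[ℝ] ℝ) (y₀ : E) :
    ∃ C, 0 ≤ C ∧ ∀ y L τ, (y, L, τ) ∈ programCone p v ℓ →
      |φ (y - L • y₀)| ≤ C * (L + (τ - a * L)) := by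
  obtain ⟨C, hC, hle⟩ := exists_abs_le_mul_of_fg (programCone_fg (p := p) (v := v) (ℓ := ℓ))
    (φ := φ ∘ₗ (.fst ℝ E (ℝ × ℝ) - (.fst ℝ ℝ ℝ ∘ₗ .snd ℝ E (ℝ × ℝ)).smulRight y₀))
    (ψ := .fst ℝ ℝ ℝ ∘ₗ .snd ℝ E (ℝ × ℝ) + (.snd ℝ ℝ ℝ ∘ₗ .snd ℝ E (ℝ × ℝ) -
      a • (.fst ℝ ℝ ℝ ∘ₗ .snd ℝ E (ℝ × ℝ))))
    (fun _ h => add_nonneg (mem_programCone.1 h).2.1 (sub_nonneg.2 (ha.mul_le hcoer h)))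
    fun ⟨y, L, τ⟩ h hgap => by
      replace hgap : L + (τ - a * L) = 0 := hgap
      obtain rfl : L = 0 := by linarith [(mem_programCone.1 h).2.1, ha.mul_le hcoer h]
      obtain rfl : τ = 0 := by linarith
      simp [hcoer.eq_zero_of_mem_programCone h le_rfl]
  exact ⟨C, hC, fun y L τ h => by simpa using hle _ h⟩

end LinearProgram

lemma exists_basis_sum_of_span {𝕜 E : Type*} [Field 𝕜] [AddCommGroup E] [Module 𝕜 E]
    [FiniteDimensional 𝕜 E] (T : Set E) :
    ∃ (d e : ℕ) (b : Module.Basis (Fin d ⊕ Fin e) 𝕜 E), (∀ i, b (.inl i) ∈ T) ∧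
      ∀ w ∈ Submodule.span 𝕜 T, ∀ j, b.repr w (.inr j) = 0 := by
  obtain ⟨f, hf, hspan, hli⟩ := Submodule.exists_fun_fin_finrank_span_eq 𝕜 T
  obtain ⟨W, hW⟩ := Submodule.exists_isCompl (Submodule.span 𝕜 (range f))
  let b := ((Module.Basis.span hli).prod (Module.finBasis 𝕜 W)).map
    (Submodule.prodEquivOfIsCompl _ _ hW)
  refine ⟨_, _, b, fun i => ?_, fun w hw j => ?_⟩
  · simpa [b, Module.Basis.span_apply] using hf i
  · rw [← hspan] at hw
    lift w to Submodule.span 𝕜 (range f) using hw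
    simp [b]

lemma exists_addHaar_basis_box {E K : Type*} [NormedAddCommGroup E] [NormedSpace ℝ E]
    [MeasurableSpace E] [BorelSpace E] [Fintype K] (μ : Measure E) [μ.IsAddHaarMeasure]
    (b : Module.Basis K ℝ E) :
    ∃ c : ℝ, 0 < c ∧ ∀ (z : E) (lo hi : K → ℝ),
      μ {y | ∀ k, b.repr (y - z) k ∈ Icc (lo k) (hi k)} =
        ENNReal.ofReal c * ∏ k, ENNReal.ofReal (hi k - lo k) := by
  have := b.finiteDimensional_of_finite
  let f := b.equivFun.toContinuousLinearEquiv
  obtain ⟨c, hc, hscale⟩ : ∃ c : NNReal, 0 < c ∧ μ.map f = c • volume :=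
    ⟨_, Measure.addHaarScalarFactor_pos_of_isAddHaarMeasure _ _,
      Measure.isAddLeftInvariant_eq_smul (μ.map f) (volume : Measure (K → ℝ))⟩
  refine ⟨c, hc, fun z lo hi => ?_⟩
  calc μ {y | ∀ k, b.repr (y - z) k ∈ Icc (lo k) (hi k)}
      = μ ((fun y => y - z) ⁻¹' (f ⁻¹' Icc lo hi)) := by
        congr 1
        ext y
        simp only [mem_ofPred_eq, mem_preimage, mem_Icc, Pi.le_def, ← forall_and]
        rfl
    _ = μ.map f (Icc lo hi) := by
        simp only [sub_eq_add_neg]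
        rw [measure_preimage_add_right, Measure.map_apply f.continuous.measurable measurableSet_Icc]
    _ = _ := by
        rw [hscale, Measure.smul_apply, Real.volume_Icc_pi, ENNReal.ofReal_coe_nnreal]
        rfl

lemma setLIntegral_exp_neg_le_tsum {α : Type*} {_ : MeasurableSpace α} (μ : Measure α) {D : Set α}
    {ψ : α → ℝ} (hψ : ∀ x ∈ D, 0 ≤ ψ x) :
    ∫⁻ x in D, ENNReal.ofReal (exp (-ψ x)) ∂μ ≤
      ∑' k : ℕ, ENNReal.ofReal (exp (-k)) * μ {x ∈ D | ψ x ≤ k + 1} := by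
  let layer (k : ℕ) : Set α := {x ∈ D | k ≤ ψ x ∧ ψ x ≤ k + 1}
  have hcover : D ⊆ ⋃ k, layer k := fun x hx => mem_iUnion.2
    ⟨⌊ψ x⌋₊, hx, Nat.floor_le (hψ x hx), (Nat.lt_floor_add_one _).le⟩
  calc ∫⁻ x in D, ENNReal.ofReal (exp (-ψ x)) ∂μ
      ≤ ∑' k, ∫⁻ x in layer k, ENNReal.ofReal (exp (-ψ x)) ∂μ :=
        (lintegral_mono_set hcover).trans (lintegral_iUnion_le _ _)
    _ ≤ ∑' k : ℕ, ENNReal.ofReal (exp (-k)) * μ {x ∈ D | ψ x ≤ k + 1} := by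
        refine ENNReal.tsum_le_tsum fun k => ?_
        calc ∫⁻ x in layer k, ENNReal.ofReal (exp (-ψ x)) ∂μ
            ≤ ∫⁻ _ in layer k, ENNReal.ofReal (exp (-k)) ∂μ :=
              setLIntegral_mono measurable_const fun x hx => by gcongr; exact hx.2.1
          _ ≤ _ := by
              have hsub : layer k ⊆ {x ∈ D | ψ x ≤ k + 1} := fun x hx => ⟨hx.1, hx.2.2⟩
              rw [setLIntegral_const]
              exact mul_right_mono (measure_mono hsub)

lemma abs_map_sum_smul_le {E J : Type*} [AddCommGroup E] [Module ℝ E] [Fintype J] (f : E →ₗ[ℝ] ℝ)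
    (w : J → E) {z : J → ℝ} (hz : ∀ j, z j ∈ Icc 0 1) :
    |f (∑ j, z j • w j)| ≤ ∑ j, |f (w j)| := by
  rw [map_sum]
  refine (Finset.abs_sum_le_sum_abs _ _).trans (Finset.sum_le_sum fun j _ => ?_)
  rw [map_smul, smul_eq_mul, abs_mul, abs_of_nonneg (hz j).1]
  exact mul_le_of_le_one_left (abs_nonneg _) (hz j).2

lemma eventually_forall_lt_map_smul_add_sum {E I J : Type*} [AddCommGroup E] [Module ℝ E]
    [Finite I] [Fintype J] {f : I → E →ₗ[ℝ] ℝ} {u : E} (hu : ∀ i, 0 < f i u) (w : J → E) (ρ : ℝ) :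
    ∀ᶠ T : ℝ in atTop, ∀ i, ∀ z : J → ℝ, (∀ j, z j ∈ Icc 0 1) →
      ρ < f i (T • u + ∑ j, z j • w j) := by
  refine eventually_all.2 fun i => ?_
  filter_upwards [(tendsto_id.atTop_mul_const (hu i)).eventually_gt_atTop (ρ + ∑ j, |f i (w j)|)]
    with T hT z hz
  have hsum := neg_le_of_abs_le (abs_map_sum_smul_le (f i) w hz)
  rw [map_add, map_smul, smul_eq_mul]
  linarith [show ρ + ∑ j, |f i (w j)| < T * f i u from hT]

section OptimalFace

variable {E ι κ σ : Type*} [NormedAddCommGroup E] [NormedSpace ℝ E] {p : ι → E →ₗ[ℝ] ℝ}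
  {v : κ → E →ₗ[ℝ] ℝ} {ℓ : σ → E →ₗ[ℝ] ℝ} {a : ℝ} {d e : ℕ} {y₀ : E}
  {b : Module.Basis (Fin d ⊕ Fin e) ℝ E}

/-- The basis `b` is adapted, at the base point `y₀`, to the face of optimal solutions for `L = 1`:
its first `d` vectors lead from `y₀` to further points of the face, and together they span the
directions of the face. Thus `d` is the dimension of the face. -/
structure IsFaceBasis (p : ι → E →ₗ[ℝ] ℝ) (v : κ → E →ₗ[ℝ] ℝ) (ℓ : σ → E →ₗ[ℝ] ℝ) (a : ℝ) (y₀ : E)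
    (b : Module.Basis (Fin d ⊕ Fin e) ℝ E) : Prop where
  base_mem : (y₀, 1, a) ∈ programCone p v ℓ
  base_add_mem : ∀ i, (y₀ + b (.inl i), 1, a) ∈ programCone p v ℓ
  repr_inr_eq : ∀ y, (y, 1, a) ∈ programCone p v ℓ → ∀ j, b.repr y (.inr j) = b.repr y₀ (.inr j)

lemma IsOptimalValue.exists_isFaceBasis [FiniteDimensional ℝ E] (ha : IsOptimalValue p v ℓ a) :
    ∃ (d e : ℕ) (y₀ : E) (b : Module.Basis (Fin d ⊕ Fin e) ℝ E), IsFaceBasis p v ℓ a y₀ b := by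
  obtain ⟨y₀, hy₀⟩ := ha.1
  obtain ⟨d, e, b, hb, hspan⟩ := exists_basis_sum_of_span (𝕜 := ℝ)
    {w | (y₀ + w, 1, a) ∈ programCone p v ℓ}
  refine ⟨d, e, y₀, b, hy₀, hb, fun y hy j => sub_eq_zero.1 ?_⟩
  simpa using hspan (y - y₀) (Submodule.subset_span (by simpa using hy)) j

lemma IsFaceBasis.lt_finrank [Finite κ] [Nonempty κ] [Nonempty σ] (hb : IsFaceBasis p v ℓ a y₀ b)
    (ha : IsOptimalValue p v ℓ a) (hcoer : IsCoerciveProgram p ℓ) (hpos : 0 < a) :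
    d < Module.finrank ℝ E := by
  obtain ⟨j, hj⟩ := ha.exists_tight_constraint hcoer hpos
  rw [Module.finrank_eq_card_basis b, Fintype.card_sum, Fintype.card_fin, Fintype.card_fin]
  rcases e.eq_zero_or_pos with rfl | he
  · have hzero : v j = 0 := b.ext <| Sum.rec
      (fun i => by simpa [hj y₀ hb.base_mem] using hj _ (hb.base_add_mem i)) finZeroElim
    simpa [hzero] using hj y₀ hb.base_mem
  · omega

lemma IsFaceBasis.add_sum_mem (hb : IsFaceBasis p v ℓ a y₀ b) {L : ℝ} {x : Fin d → ℝ}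
    (hx : ∀ i, 0 ≤ x i) (hsum : ∑ i, x i ≤ L) :
    (L • y₀ + ∑ i, x i • b (.inl i), L, a * L) ∈ programCone p v ℓ := by
  convert add_mem (PointedCone.smul_mem _ (sub_nonneg.2 hsum) hb.base_mem)
    (sum_mem fun i (_ : i ∈ Finset.univ) => PointedCone.smul_mem _ (hx i) (hb.base_add_mem i))
    using 1
  simp only [Prod.ext_iff, Prod.fst_add, Prod.snd_add, Prod.fst_sum, Prod.snd_sum, Prod.smul_fst,
    Prod.smul_snd, smul_add, Finset.sum_add_distrib, ← Finset.sum_smul, smul_eq_mul]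
  exact ⟨by module, by ring, by ring⟩

lemma IsFaceBasis.exists_addHaar_slice_le [FiniteDimensional ℝ E] [MeasurableSpace E] [BorelSpace E]
    [Finite ι] [Finite κ] [Finite σ] [Nonempty σ] (μ : Measure E) [μ.IsAddHaarMeasure]
    (hb : IsFaceBasis p v ℓ a y₀ b) (ha : IsOptimalValue p v ℓ a) (hcoer : IsCoerciveProgram p ℓ) :
    ∃ C : ℝ, 0 ≤ C ∧ ∀ L s, 0 ≤ L → 0 ≤ s →
      μ {y | (y, L, a * L + s) ∈ programCone p v ℓ} ≤
        ENNReal.ofReal (C * (L + s) ^ d * s ^ e) := by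
  obtain ⟨c, hc, hbox⟩ := exists_addHaar_basis_box μ b
  choose C hC hface using fun i =>
    ha.exists_abs_le_level_add_gap (v := v) hcoer (b.coord (.inl i)) y₀
  choose C' hC' htrans using fun j =>
    ha.exists_abs_le_gap hcoer (φ := b.coord (.inr j)) fun y hy => hb.repr_inr_eq y hy j
  refine ⟨c * (∏ i, 2 * C i) * ∏ j, 2 * C' j,
    mul_nonneg (mul_nonneg hc.le (Finset.prod_nonneg fun i _ => mul_nonneg zero_le_two (hC i)))
      (Finset.prod_nonneg fun j _ => mul_nonneg zero_le_two (hC' j)), fun L s hL hs => ?_⟩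
  let R : Fin d ⊕ Fin e → ℝ := Sum.elim (fun i => C i * (L + s)) fun j => C' j * s
  have hR : ∀ k, 0 ≤ R k := Sum.rec (fun i => mul_nonneg (hC i) (add_nonneg hL hs))
    fun j => mul_nonneg (hC' j) hs
  calc μ {y | (y, L, a * L + s) ∈ programCone p v ℓ}
      ≤ μ {y | ∀ k, b.repr (y - L • y₀) k ∈ Icc (-R k) (R k)} := by
        refine measure_mono fun y hy => Sum.rec (fun i => ?_) fun j => ?_
        · simpa [R] using abs_le.1 (hface i _ _ _ hy)
        · simpa [R] using abs_le.1 (htrans j _ _ _ hy)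
    _ = ENNReal.ofReal (c * ∏ k, 2 * R k) := by
        simp only [hbox, sub_neg_eq_add, ← two_mul]
        rw [ENNReal.ofReal_mul hc.le, ENNReal.ofReal_prod_of_nonneg fun k _ =>
          mul_nonneg zero_le_two (hR k)]
    _ = _ := by
        simp only [R, Fintype.prod_sum_type, Sum.elim_inl, Sum.elim_inr, ← mul_assoc]
        simp only [Finset.prod_mul_distrib, Finset.prod_const, Finset.card_univ, Fintype.card_fin]
        ring_nf

lemma IsFaceBasis.exists_box_subset_slice [Finite ι] [Finite κ] [Finite σ]
    (hb : IsFaceBasis p v ℓ a y₀ b) {u : E} (hpu : ∀ i, 0 < p i u) (hvu : ∀ j, 0 < v j u) (ρ : ℝ) :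
    ∃ (w : E) (N : ℝ), ∀ (L : ℝ) y, 0 ≤ L →
      (∀ i, b.repr (y - (L • y₀ + w)) (.inl i) ∈ Icc 0 (L / (d + 1))) →
      (∀ j, b.repr (y - (L • y₀ + w)) (.inr j) ∈ Icc 0 1) →
      (∀ i, ρ < p i y) ∧ (∀ j, L + ρ ≤ v j y) ∧ ∀ s, ℓ s y ≤ a * L + N := by
  obtain ⟨T, hpT, hvT⟩ :=
    ((eventually_forall_lt_map_smul_add_sum hpu (fun j => b (.inr j)) ρ).and
      (eventually_forall_lt_map_smul_add_sum hvu (fun j => b (.inr j)) ρ)).exists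
  obtain ⟨N, hN⟩ := (finite_range fun s => ℓ s (T • u) + ∑ j, |ℓ s (b (.inr j))|).bddAbove
  refine ⟨T • u, N, fun L y hL hx hz => ?_⟩
  set x := fun i => b.repr (y - (L • y₀ + T • u)) (.inl i)
  set z := fun j => b.repr (y - (L • y₀ + T • u)) (.inr j)
  have hsum : ∑ i, x i ≤ L := by
    calc ∑ i, x i ≤ ∑ _ : Fin d, L / (d + 1) := Finset.sum_le_sum fun i _ => (hx i).2
      _ = L * (d / (d + 1)) := by simp; ring
      _ ≤ L := mul_le_of_le_one_right hL (div_le_one_of_le₀ (by linarith) (by positivity))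
  obtain ⟨hp, -, hv, hℓ⟩ := hb.add_sum_mem (fun i => (hx i).1) hsum
  have hdecomp : y = (L • y₀ + ∑ i, x i • b (.inl i)) + (T • u + ∑ j, z j • b (.inr j)) := by
    have := b.sum_repr (y - (L • y₀ + T • u))
    rw [Fintype.sum_sum_type] at this
    rw [add_add_add_comm, this, add_sub_cancel]
  rw [hdecomp]
  refine ⟨fun i => ?_, fun j => ?_, fun s => ?_⟩ <;> rw [map_add]
  · exact (hpT i z hz).trans_le (le_add_of_nonneg_left (hp i))
  · exact add_le_add (hv j) (hvT j z hz).le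
  · refine add_le_add (hℓ s) (le_trans ?_ (hN ⟨s, rfl⟩))
    rw [map_add]
    exact add_le_add_right (le_of_abs_le (abs_map_sum_smul_le _ _ hz)) _

lemma IsFaceBasis.exists_le_addHaar_slice [MeasurableSpace E] [BorelSpace E]
    [Finite ι] [Finite κ] [Finite σ] (μ : Measure E) [μ.IsAddHaarMeasure]
    (hb : IsFaceBasis p v ℓ a y₀ b) {u : E} (hpu : ∀ i, 0 < p i u) (hvu : ∀ j, 0 < v j u) (ρ : ℝ) :
    ∃ N β : ℝ, 0 < β ∧ ∀ L : ℝ, 0 ≤ L → ENNReal.ofReal (β * L ^ d) ≤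
      μ {y | (∀ i, ρ < p i y) ∧ (∀ j, L + ρ ≤ v j y) ∧ ∀ s, ℓ s y ≤ a * L + N} := by
  obtain ⟨c, hc, hbox⟩ := exists_addHaar_basis_box μ b
  obtain ⟨w, N, hsub⟩ := hb.exists_box_subset_slice hpu hvu ρ
  refine ⟨N, c * (1 / (d + 1 : ℝ)) ^ d, by positivity, fun L hL => ?_⟩
  let hi : Fin d ⊕ Fin e → ℝ := Sum.elim (fun _ => L / (d + 1)) fun _ => 1
  calc ENNReal.ofReal (c * (1 / (d + 1 : ℝ)) ^ d * L ^ d)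
      = μ {y | ∀ k, b.repr (y - (L • y₀ + w)) k ∈ Icc 0 (hi k)} := by
        simp only [hbox, sub_zero, hi, Fintype.prod_sum_type, Sum.elim_inl, Sum.elim_inr,
          ENNReal.ofReal_one, Finset.prod_const, one_pow, mul_one, Finset.card_univ,
          Fintype.card_fin]
        rw [← ENNReal.ofReal_pow (by positivity), ← ENNReal.ofReal_mul hc.le, mul_assoc, ← mul_pow,
          one_div_mul_eq_div]
    _ ≤ _ := measure_mono fun y hy => hsub L y hL (fun i => hy (.inl i)) fun j => hy (.inr j)

end OptimalFace

lemma summable_exp_neg_nat_mul_add_one_pow (N : ℕ) :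
    Summable fun k : ℕ => exp (-k) * (k + 1 : ℝ) ^ N := by
  refine (((summable_nat_add_iff 1).2 (summable_pow_mul_exp_neg_nat_mul N one_pos)).mul_left
    (exp 1)).congr fun k => ?_
  rw [mul_left_comm, ← exp_add, mul_comm]
  congr 2 <;> push_cast <;> ring

section LaplaceIntegral

variable {E ι κ σ : Type*} [NormedAddCommGroup E] [NormedSpace ℝ E] [MeasurableSpace E] [Finite σ]
  [Nonempty σ] {p : ι → E →ₗ[ℝ] ℝ} {v : κ → E →ₗ[ℝ] ℝ} {ℓ : σ → E →ₗ[ℝ] ℝ} {a : ℝ} {d e : ℕ}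
  {y₀ : E} {b : Module.Basis (Fin d ⊕ Fin e) ℝ E} (μ : Measure E)

lemma IsOptimalValue.lintegral_exp_neg_iSup_le_tsum (ha : IsOptimalValue p v ℓ a)
    (hcoer : IsCoerciveProgram p ℓ) {L : ℝ} (hL : 0 ≤ L) :
    ∫⁻ y in {y | (∀ i, 0 ≤ p i y) ∧ ∀ j, L ≤ v j y}, ENNReal.ofReal (exp (-⨆ s, ℓ s y)) ∂μ ≤
      ENNReal.ofReal (exp (-(a * L))) * ∑' k : ℕ, ENNReal.ofReal (exp (-k)) *
        μ {y | (y, L, a * L + (k + 1)) ∈ programCone p v ℓ} := by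
  let D : Set E := {y | (∀ i, 0 ≤ p i y) ∧ ∀ j, L ≤ v j y}
  have hmem {y : E} (hy : y ∈ D) {τ : ℝ} (hτ : ⨆ s, ℓ s y ≤ τ) : (y, L, τ) ∈ programCone p v ℓ :=
    ⟨hy.1, hL, hy.2, fun s => (le_ciSup (finite_range _).bddAbove s).trans hτ⟩
  calc ∫⁻ y in D, ENNReal.ofReal (exp (-⨆ s, ℓ s y)) ∂μ
      = ENNReal.ofReal (exp (-(a * L))) *
          ∫⁻ y in D, ENNReal.ofReal (exp (-((⨆ s, ℓ s y) - a * L))) ∂μ := by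
        rw [← lintegral_const_mul' _ _ ENNReal.ofReal_ne_top]
        refine lintegral_congr fun y => ?_
        rw [← ENNReal.ofReal_mul (exp_nonneg _), ← exp_add]
        ring_nf
    _ ≤ _ := mul_right_mono <|
        (setLIntegral_exp_neg_le_tsum μ fun y hy =>
          sub_nonneg.2 (ha.mul_le hcoer (hmem hy le_rfl))).trans <| ENNReal.tsum_le_tsum fun k =>
            mul_right_mono <| measure_mono fun y hy => hmem hy.1 (sub_le_iff_le_add'.1 hy.2)

variable [FiniteDimensional ℝ E] [BorelSpace E] [Finite ι] [Finite κ] [μ.IsAddHaarMeasure]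

lemma IsFaceBasis.exists_lintegral_exp_neg_iSup_le (hb : IsFaceBasis p v ℓ a y₀ b)
    (ha : IsOptimalValue p v ℓ a) (hcoer : IsCoerciveProgram p ℓ) :
    ∃ B : ℝ, ∀ L : ℝ, 1 / 2 ≤ L →
      ∫⁻ y in {y | (∀ i, 0 ≤ p i y) ∧ ∀ j, L ≤ v j y}, ENNReal.ofReal (exp (-⨆ s, ℓ s y)) ∂μ ≤
        ENNReal.ofReal (B * exp (-(a * L)) * L ^ d) := by
  obtain ⟨C, hC, hslice⟩ := hb.exists_addHaar_slice_le μ ha hcoer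
  let g (k : ℕ) : ℝ := C * 3 ^ d * (exp (-k) * (k + 1 : ℝ) ^ (d + e))
  have hg : Summable g := (summable_exp_neg_nat_mul_add_one_pow _).mul_left _
  refine ⟨∑' k, g k, fun L hL => ?_⟩
  calc ∫⁻ y in {y | (∀ i, 0 ≤ p i y) ∧ ∀ j, L ≤ v j y}, ENNReal.ofReal (exp (-⨆ s, ℓ s y)) ∂μ
      ≤ ENNReal.ofReal (exp (-(a * L))) * ∑' k : ℕ, ENNReal.ofReal (exp (-k)) *
          μ {y | (y, L, a * L + (k + 1)) ∈ programCone p v ℓ} :=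
        ha.lintegral_exp_neg_iSup_le_tsum μ hcoer (by linarith)
    _ ≤ ENNReal.ofReal (exp (-(a * L))) * ∑' k, ENNReal.ofReal (g k * L ^ d) := by
        refine mul_right_mono (ENNReal.tsum_le_tsum fun k => ?_)
        calc ENNReal.ofReal (exp (-k)) * μ {y | (y, L, a * L + (k + 1)) ∈ programCone p v ℓ}
            ≤ ENNReal.ofReal (exp (-k)) *
                ENNReal.ofReal (C * (3 * L * (k + 1)) ^ d * (k + 1) ^ e) := by
              refine mul_right_mono ((hslice L (k + 1) (by linarith) (by positivity)).trans ?_)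
              gcongr
              nlinarith
          _ = ENNReal.ofReal (g k * L ^ d) := by
              rw [← ENNReal.ofReal_mul (exp_nonneg _)]
              simp only [g, mul_pow, pow_add]
              ring_nf
    _ = ENNReal.ofReal ((∑' k, g k) * exp (-(a * L)) * L ^ d) := by
        rw [← ENNReal.ofReal_tsum_of_nonneg (fun k => by positivity) (hg.mul_right _),
          tsum_mul_right, ← ENNReal.ofReal_mul (exp_nonneg _)]
        ring_nf

lemma IsFaceBasis.exists_le_lintegral_exp_neg_iSup (hb : IsFaceBasis p v ℓ a y₀ b) {u : E}
    (hpu : ∀ i, 0 < p i u) (hvu : ∀ j, 0 < v j u) (ρ : ℝ) :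
    ∃ β : ℝ, 0 < β ∧ ∀ L : ℝ, 0 ≤ L → ENNReal.ofReal (β * exp (-(a * L)) * L ^ d) ≤
      ∫⁻ y in {y | (∀ i, ρ < p i y) ∧ ∀ j, L + ρ ≤ v j y},
        ENNReal.ofReal (exp (-⨆ s, ℓ s y)) ∂μ := by
  obtain ⟨N, β, hβ, hslice⟩ := hb.exists_le_addHaar_slice μ hpu hvu ρ
  refine ⟨exp (-N) * β, by positivity, fun L hL => ?_⟩
  calc ENNReal.ofReal (exp (-N) * β * exp (-(a * L)) * L ^ d)
      = ENNReal.ofReal (exp (-(a * L + N))) * ENNReal.ofReal (β * L ^ d) := by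
        rw [← ENNReal.ofReal_mul (exp_nonneg _), neg_add, exp_add]
        ring_nf
    _ ≤ ENNReal.ofReal (exp (-(a * L + N))) *
          μ {y | (∀ i, ρ < p i y) ∧ (∀ j, L + ρ ≤ v j y) ∧ ∀ s, ℓ s y ≤ a * L + N} :=
        mul_right_mono (hslice L hL)
    _ ≤ ∫⁻ y in {y | (∀ i, ρ < p i y) ∧ (∀ j, L + ρ ≤ v j y) ∧ ∀ s, ℓ s y ≤ a * L + N},
          ENNReal.ofReal (exp (-⨆ s, ℓ s y)) ∂μ := by
        rw [← setLIntegral_const]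
        have hmeas : Measurable fun y => ⨆ s, ℓ s y :=
          .iSup fun s => (ℓ s).continuous_of_finiteDimensional.measurable
        refine setLIntegral_mono hmeas.neg.exp.ennreal_ofReal fun y hy => ?_
        gcongr
        exact ciSup_le hy.2.2
    _ ≤ _ := lintegral_mono_set <| ofPred_subset_ofPred.2 fun _ hy => ⟨hy.1, hy.2.1⟩

/- The exponents are those of the linear program: `a` is its value, `d` the dimension of its
optimal face. -/
theorem exists_lintegral_exp_neg_iSup_bounds [Nonempty κ] (hcoer : IsCoerciveProgram p ℓ) {u : E}
    (hpu : ∀ i, 0 < p i u) (hvu : ∀ j, 0 < v j u) :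
    ∃ a > 0, ∃ d < Module.finrank ℝ E,
      (∃ B : ℝ, ∀ L : ℝ, 1 / 2 ≤ L →
        ∫⁻ y in {y | (∀ i, 0 ≤ p i y) ∧ ∀ j, L ≤ v j y}, ENNReal.ofReal (exp (-⨆ s, ℓ s y)) ∂μ ≤
          ENNReal.ofReal (B * exp (-(a * L)) * L ^ d)) ∧
      ∀ ρ : ℝ, ∃ β : ℝ, 0 < β ∧ ∀ L : ℝ, 0 ≤ L → ENNReal.ofReal (β * exp (-(a * L)) * L ^ d) ≤
        ∫⁻ y in {y | (∀ i, ρ < p i y) ∧ ∀ j, L + ρ ≤ v j y},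
          ENNReal.ofReal (exp (-⨆ s, ℓ s y)) ∂μ := by
  obtain ⟨a, hpos, ha⟩ := exists_isOptimalValue hcoer ⟨u, fun i => (hpu i).le, hvu⟩
  obtain ⟨d, e, y₀, b, hb⟩ := ha.exists_isFaceBasis
  exact ⟨a, hpos, d, hb.lt_finrank ha hcoer hpos, hb.exists_lintegral_exp_neg_iSup_le μ ha hcoer,
    hb.exists_le_lintegral_exp_neg_iSup μ hpu hvu⟩

end LaplaceIntegral

section NewtonPolyhedron

lemma mem_extremePoints_convexHull_of_forall_le {𝕜 E M : Type*} [Semiring 𝕜]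
    [PartialOrder 𝕜] [AddCommGroup E] [Module 𝕜 E] [AddCommGroup M] [LinearOrder M]
    [IsOrderedAddMonoid M] [Module 𝕜 M] [PosSMulStrictMono 𝕜 M] {f : E →ₗ[𝕜] M}
    (hf : Function.Injective f) {A : Set E} {x : E} (hx : x ∈ A) (hmin : ∀ y ∈ A, f x ≤ f y) :
    x ∈ extremePoints 𝕜 (convexHull 𝕜 A) := by
  have hle : ∀ y ∈ convexHull 𝕜 A, f x ≤ f y :=
    convexHull_min hmin (convex_halfSpace_ge f.isLinear _)
  refine ⟨subset_convexHull _ _ hx, fun y hy z hz ⟨p, q, hp, hq, hpq, hxyz⟩ => ?_⟩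
  by_contra hne
  have hlt : f x < f y := (hle y hy).lt_of_ne' (hf.ne hne)
  have hsum : p • f x + q • f x < p • f y + q • f z :=
    add_lt_add_of_lt_of_le (smul_lt_smul_of_pos_left hlt hp)
      (smul_le_smul_of_nonneg_left (hle z hz) hq.le)
  rw [← add_smul, hpq, one_smul, ← map_smul, ← map_smul, ← map_add, hxyz] at hsum
  exact hsum.false

instance instPosSMulStrictMonoLexPi {𝕜 ι : Type*} [LinearOrder ι] [Ring 𝕜] [PartialOrder 𝕜]
    [IsStrictOrderedRing 𝕜] : PosSMulStrictMono 𝕜 (Lex (ι → 𝕜)) where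
  smul_lt_smul_of_pos_left r hr _ _ := fun ⟨i, heq, hlt⟩ =>
    ⟨i, fun j hj => congrArg (r * ·) (heq j hj), mul_lt_mul_of_pos_left hlt hr⟩

variable {c : (Fin n → ℕ) → ℝ}

/- The lexicographically smallest exponent is a vertex. -/
lemma newtonVertices_nonempty (hc : c ≠ 0) : (newtonVertices c).Nonempty := by
  obtain ⟨α, hα, hmin⟩ := WellFounded.has_min
    (inferInstance : WellFoundedLT (Lex (Fin n → ℕ))).wf {α | c (ofLex α) ≠ 0}
    (Function.ne_iff.1 hc)
  have hcast : StrictMono fun β : Lex (Fin n → ℕ) => toLex fun i => (ofLex β i : ℝ) :=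
    fun _ _ ⟨i, heq, hlt⟩ =>
      ⟨i, fun j hj => congrArg Nat.cast (heq j hj), Nat.cast_lt.2 hlt⟩
  refine ⟨fun i => ofLex α i, mem_extremePoints_convexHull_of_forall_le
    (f := (toLexLinearEquiv ℝ (Fin n → ℝ)).toLinearMap) (LinearEquiv.injective _)
    ⟨ofLex α, hα, fun _ => le_rfl⟩ ?_⟩
  rintro y ⟨β, hβ, hle⟩
  exact (hcast.monotone (not_lt.1 (hmin (toLex β) hβ))).trans (Pi.toLex_monotone hle)

lemma eq_natCast_of_mem_newtonVertices {v : Fin n → ℝ} (hv : v ∈ newtonVertices c) {α : Fin n → ℕ}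
    (hα : c α ≠ 0) (hle : ∀ i, (α i : ℝ) ≤ v i) : v = fun i => (α i : ℝ) := by
  have hmem : (fun i => (α i : ℝ)) ∈ newtonPolyhedron c :=
    subset_convexHull ℝ _ ⟨α, hα, fun _ => le_rfl⟩
  have hreflect : (fun i => 2 * v i - α i) ∈ newtonPolyhedron c :=
    subset_convexHull ℝ _ ⟨α, hα, fun i => by linarith [hle i]⟩
  refine (hv.2 hmem hreflect ⟨1 / 2, 1 / 2, by norm_num, by norm_num, by norm_num, ?_⟩).symm
  ext i
  simp only [Pi.add_apply, Pi.smul_apply, smul_eq_mul]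
  ring

lemma exists_natCast_eq_of_mem_newtonVertices {v : Fin n → ℝ} (hv : v ∈ newtonVertices c) :
    ∃ α : Fin n → ℕ, c α ≠ 0 ∧ v = fun i => (α i : ℝ) := by
  obtain ⟨α, hα, hle⟩ := extremePoints_convexHull_subset hv
  exact ⟨α, hα, eq_natCast_of_mem_newtonVertices hv hα hle⟩

/- Dickson's lemma: the exponents of the vertices form an antichain in `ℕⁿ`. -/
lemma newtonVertices_finite (c : (Fin n → ℕ) → ℝ) : (newtonVertices c).Finite := by
  let cast (α : Fin n → ℕ) (i : Fin n) : ℝ := α i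
  let W : Set (Fin n → ℕ) := {α | c α ≠ 0 ∧ cast α ∈ newtonVertices c}
  have hanti : IsAntichain (· ≤ ·) W := fun α hα β hβ hne hle =>
    hne <| funext fun i => Nat.cast_injective (R := ℝ) <| .symm <| congrFun
      (eq_natCast_of_mem_newtonVertices hβ.2 hα.1 fun i => Nat.cast_le.2 (hle i)) i
  have hW : W.Finite := hanti.finite_of_partiallyWellOrderedOn (isPWO_of_wellQuasiOrderedLE W)
  refine (hW.image cast).subset fun v hv => ?_
  obtain ⟨α, hα, rfl⟩ := exists_natCast_eq_of_mem_newtonVertices hv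
  exact mem_image_of_mem _ ⟨hα, hv⟩

lemma sum_pos_of_mem_newtonVertices (hc : c 0 = 0) {v : Fin n → ℝ} (hv : v ∈ newtonVertices c) :
    0 < ∑ i, v i := by
  obtain ⟨α, hα, rfl⟩ := exists_natCast_eq_of_mem_newtonVertices hv
  have hα0 : α ≠ 0 := fun h => hα (h ▸ hc)
  obtain ⟨i, hi⟩ := Function.ne_iff.1 hα0
  exact Finset.sum_pos' (fun _ _ => Nat.cast_nonneg _)
    ⟨i, Finset.mem_univ i, Nat.cast_pos.2 (Nat.pos_of_ne_zero hi)⟩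

lemma starFn_exp_neg [Fintype (newtonVertices c)] (y : Fin n → ℝ) :
    starFn c (fun i => exp (-y i)) = ∑ v : newtonVertices c, exp (-(v.1 ⬝ᵥ y)) := by
  rw [starFn, tsum_fintype]
  refine Finset.sum_congr rfl fun v _ => ?_
  rw [dotProduct, ← Finset.sum_neg_distrib, exp_sum]
  refine Finset.prod_congr rfl fun i _ => ?_
  rw [abs_exp, ← exp_mul, neg_mul, mul_comm]

lemma le_dotProduct_of_starFn_exp_neg_lt {y : Fin n → ℝ} {L : ℝ}
    (hy : starFn c (fun i => exp (-y i)) < exp (-L)) (v : newtonVertices c) : L ≤ v.1 ⬝ᵥ y := by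
  have := (newtonVertices_finite c).fintype
  rw [starFn_exp_neg] at hy
  have hv : exp (-(v.1 ⬝ᵥ y)) < exp (-L) :=
    (Finset.single_le_sum (f := fun v : newtonVertices c => exp (-(v.1 ⬝ᵥ y)))
      (fun _ _ => exp_nonneg _) (Finset.mem_univ v)).trans_lt hy
  exact (neg_lt_neg_iff.1 (exp_lt_exp.1 hv)).le

lemma starFn_exp_neg_lt (hc : c ≠ 0) {y : Fin n → ℝ} {L ρ : ℝ}
    (hρ : log (Nat.card (newtonVertices c)) < ρ)
    (hy : ∀ v : newtonVertices c, L + ρ ≤ v.1 ⬝ᵥ y) :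
    starFn c (fun i => exp (-y i)) < exp (-L) := by
  have := (newtonVertices_finite c).fintype
  have := (newtonVertices_nonempty hc).to_subtype
  have hcard : (0 : ℝ) < Nat.card (newtonVertices c) := Nat.cast_pos.2 Nat.card_pos
  calc starFn c (fun i => exp (-y i))
      = ∑ v : newtonVertices c, exp (-(v.1 ⬝ᵥ y)) := starFn_exp_neg y
    _ ≤ ∑ _v : newtonVertices c, exp (-(L + ρ)) :=
        Finset.sum_le_sum fun v _ => exp_le_exp.2 (neg_le_neg (hy v))
    _ = exp (log (Nat.card (newtonVertices c)) - ρ) * exp (-L) := by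
        rw [Finset.sum_const, Finset.card_univ, nsmul_eq_mul, ← Nat.card_eq_fintype_card, exp_sub,
          exp_log hcard, neg_add, exp_add, exp_neg ρ]
        ring
    _ < exp (-L) :=
        mul_lt_of_lt_one_left (exp_pos _) (exp_lt_one_iff.2 (sub_neg.2 hρ))

end NewtonPolyhedron

lemma coeff_zero_eq_apply_zero {S : (Fin n → ℝ) → ℝ} {c : (Fin n → ℕ) → ℝ}
    (hSc : HasTaylorSeriesAtOrigin S c) : c 0 = S 0 := by
  have hmonomial (α) (hα : α ≠ 0) : c α * monomial α (0 : Fin n → ℝ) = 0 := by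
    obtain ⟨i, hi⟩ := Function.ne_iff.1 hα
    rw [monomial, Finset.prod_eq_zero (Finset.mem_univ i) (zero_pow hi), mul_zero]
  have hzero : c 0 * monomial 0 (0 : Fin n → ℝ) = c 0 := by simp [monomial]
  exact (hzero ▸ hasSum_single 0 hmonomial).unique hSc.self_of_nhds

section LogCoordinates

lemma hasFDerivAt_pi_exp_neg {ι : Type*} [Finite ι] (y : ι → ℝ) :
    HasFDerivAt (fun (y : ι → ℝ) i => exp (-y i))
      (.pi fun i => (-exp (-y i) • ContinuousLinearMap.id ℝ ℝ).comp (.proj i)) y := by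
  have := Fintype.ofFinite ι
  refine hasFDerivAt_pi.2 fun i => ?_
  have hcoord : HasFDerivAt (fun y : ι → ℝ => y i) (ContinuousLinearMap.proj (R := ℝ) i) y :=
    hasFDerivAt_apply i y
  refine hcoord.neg.exp.congr_fderiv ?_
  ext x
  simp

lemma abs_det_pi_neg_exp_neg {ι : Type*} [Fintype ι] (y : ι → ℝ) :
    |(ContinuousLinearMap.pi fun i => (-exp (-y i) • ContinuousLinearMap.id ℝ ℝ).comp
      (ContinuousLinearMap.proj (φ := fun _ : ι => ℝ) i)).det| = exp (-∑ i, y i) := by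
  rw [ContinuousLinearMap.det_pi, Finset.abs_prod, ← Finset.sum_neg_distrib, exp_sum]
  refine Finset.prod_congr rfl fun i _ => ?_
  simp [ContinuousLinearMap.det]

lemma lintegral_image_pi_exp_neg {ι : Type*} [Fintype ι] {A : Set (ι → ℝ)} (hA : MeasurableSet A)
    (f : (ι → ℝ) → ℝ≥0∞) : ∫⁻ t in (fun (y : ι → ℝ) i => exp (-y i)) '' A, f t =
      ∫⁻ y in A, ENNReal.ofReal (exp (-∑ i, y i)) * f fun i => exp (-y i) := by
  have hinj : InjOn (fun (y : ι → ℝ) i => exp (-y i)) A := fun x _ y _ h =>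
    funext fun i => neg_injective (exp_injective (congrFun h i))
  rw [lintegral_image_eq_lintegral_abs_det_fderiv_mul volume hA
    (fun y _ => (hasFDerivAt_pi_exp_neg y).hasFDerivWithinAt) hinj]
  simp_rw [abs_det_pi_neg_exp_neg]

lemma setOf_Ioo_and_eq_image_pi_exp_neg {ι : Type*} {r : ℝ} (hr : 0 < r) (P : (ι → ℝ) → Prop) :
    {t | (∀ i, t i ∈ Ioo 0 r) ∧ P t} = (fun (y : ι → ℝ) i => exp (-y i)) ''
      {y | (∀ i, -log r < y i) ∧ P fun i => exp (-y i)} := by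
  ext t
  constructor
  · rintro ⟨ht, hP⟩
    have hexp : (fun i => exp (-(-log (t i)))) = t := funext fun i => by
      rw [neg_neg, exp_log (ht i).1]
    exact ⟨fun i => -log (t i), ⟨fun i => neg_lt_neg (log_lt_log (ht i).1 (ht i).2),
      hexp.symm ▸ hP⟩, hexp⟩
  · rintro ⟨y, ⟨hy, hP⟩, rfl⟩
    exact ⟨fun i => ⟨exp_pos _, (lt_log_iff_exp_lt hr).1 (neg_lt.1 (hy i))⟩, hP⟩

end LogCoordinates

section LogDensity

variable {grp : Fin n → Fin m} {a : Fin m → ℝ}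

lemma exists_rightInverse_forall_le {ι κ α : Type*} [Finite ι] [LinearOrder α] {g : ι → κ}
    (hg : Function.Surjective g) (y : ι → α) :
    ∃ s, Function.RightInverse s g ∧ ∀ i, y (s (g i)) ≤ y i := by
  choose s hs hmin using fun k => (toFinite (g ⁻¹' {k})).exists_minimalFor y _ (hg k)
  exact ⟨s, hs, fun i => (le_total _ _).elim id (hmin (g i) rfl)⟩

lemma abs_le_grpNorm (grp : Fin n → Fin m) (t : Fin n → ℝ) (i : Fin n) :
    |t i| ≤ grpNorm grp (grp i) t :=
  abs_le_sqrt <| Finset.single_le_sum (f := fun i => t i ^ 2) (fun _ _ => sq_nonneg _) (by simp)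

lemma grpNorm_le_sqrt_mul {k : Fin m} {t : Fin n → ℝ} {M : ℝ} (hM : 0 ≤ M)
    (ht : ∀ i, grp i = k → |t i| ≤ M) : grpNorm grp k t ≤ √n * M := by
  rw [grpNorm, ← sqrt_sq hM, ← sqrt_mul n.cast_nonneg]
  refine sqrt_le_sqrt ?_
  calc ∑ i with grp i = k, t i ^ 2
      ≤ (Finset.univ.filter (grp · = k)).card • M ^ 2 :=
        Finset.sum_le_card_nsmul _ _ _ fun i hi => sq_le_sq.2 <|
          (ht i (Finset.mem_filter.1 hi).2).trans (le_abs_self M)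
    _ ≤ n * M ^ 2 := by
        rw [nsmul_eq_mul]
        gcongr
        simpa using Finset.card_filter_le Finset.univ (grp · = k)

/-- A choice of one variable from each group. -/
abbrev GroupSelection (grp : Fin n → Fin m) : Type :=
  {s : Fin m → Fin n // Function.RightInverse s grp}

/-- The exponent of the monomial density `∏_k |t_{s k}|^{-α_k} dm` in the coordinates
`t_i = exp (-y_i)`. As `|t_k|` is comparable to its largest component, the density of `fracMeasure`
is comparable to the smallest of these monomials over all selections `s`. -/
def selectionForm (grp : Fin n → Fin m) (a : Fin m → ℝ) (s : GroupSelection grp) :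
    (Fin n → ℝ) →ₗ[ℝ] ℝ :=
  ∑ i, .proj i - ∑ k, a k • .proj (s.1 k)

lemma selectionForm_apply (s : GroupSelection grp) (y : Fin n → ℝ) :
    selectionForm grp a s y = ∑ i, y i - ∑ k, a k * y (s.1 k) := by
  simp [selectionForm]

lemma exp_neg_selectionForm (s : GroupSelection grp) (y : Fin n → ℝ) :
    exp (-selectionForm grp a s y) = exp (-∑ i, y i) * ∏ k, exp (-y (s.1 k)) ^ (-a k) := by
  simp_rw [← exp_mul, neg_mul_neg, ← exp_sum, ← exp_add, selectionForm_apply, mul_comm (a _)]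
  ring_nf

/-- The density of `fracMeasure` in the coordinates `t_i = exp (-y_i)`. -/
def logDensity (grp : Fin n → Fin m) (a : Fin m → ℝ) (y : Fin n → ℝ) : ℝ :=
  exp (-∑ i, y i) * kernelWeight grp a fun i => exp (-y i)

lemma fracMeasure_image_pi_exp_neg {A : Set (Fin n → ℝ)} (hA : MeasurableSet A) :
    fracMeasure grp a ((fun (y : Fin n → ℝ) i => exp (-y i)) '' A) =
      ∫⁻ y in A, ENNReal.ofReal (logDensity grp a y) := by
  rw [fracMeasure, withDensity_apply', lintegral_image_pi_exp_neg hA]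
  simp_rw [← ENNReal.ofReal_mul (exp_nonneg _), logDensity]

lemma logDensity_le_exp_neg_iSup (hgrp : Function.Surjective grp) (ha : ∀ k, 0 ≤ a k)
    (y : Fin n → ℝ) : logDensity grp a y ≤ exp (-⨆ s, selectionForm grp a s y) := by
  have : Nonempty (GroupSelection grp) := ⟨_, Function.rightInverse_surjInv hgrp⟩
  obtain ⟨s, hs⟩ := exists_eq_ciSup_of_finite (f := fun s => selectionForm grp a s y)
  rw [← hs, exp_neg_selectionForm, logDensity, kernelWeight]
  refine mul_le_mul_of_nonneg_left (Finset.prod_le_prod (fun k _ => rpow_nonneg (sqrt_nonneg _) _)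
    fun k _ => rpow_le_rpow_of_nonpos (exp_pos _) ?_ (neg_nonpos.2 (ha k))) (exp_nonneg _)
  simpa [s.2 k] using abs_le_grpNorm grp (fun i => exp (-y i)) (s.1 k)

lemma exists_mul_exp_neg_iSup_le_logDensity [NeZero n] (hgrp : Function.Surjective grp)
    (ha : ∀ k, 0 ≤ a k) :
    ∃ C : ℝ, 0 < C ∧ ∀ y, C * exp (-⨆ s, selectionForm grp a s y) ≤ logDensity grp a y := by
  have hn : 0 < √n := sqrt_pos.2 (Nat.cast_pos.2 (NeZero.pos n))
  refine ⟨∏ k, √n ^ (-a k), Finset.prod_pos fun k _ => rpow_pos_of_pos hn _, fun y => ?_⟩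
  obtain ⟨s, hs, hmin⟩ := exists_rightInverse_forall_le hgrp y
  have hnorm (k) : grpNorm grp k (fun i => exp (-y i)) ≤ √n * exp (-y (s k)) := by
    refine grpNorm_le_sqrt_mul (exp_nonneg _) ?_
    rintro i rfl
    rw [abs_exp]
    exact exp_le_exp.2 (neg_le_neg (hmin i))
  have hpos (k) : 0 < grpNorm grp k (fun i => exp (-y i)) := by
    obtain ⟨i, rfl⟩ := hgrp k
    exact (abs_pos.2 (exp_ne_zero (-y i))).trans_le (abs_le_grpNorm grp (fun i => exp (-y i)) i)
  calc (∏ k, √n ^ (-a k)) * exp (-⨆ s, selectionForm grp a s y)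
      ≤ (∏ k, √n ^ (-a k)) * exp (-selectionForm grp a ⟨s, hs⟩ y) := by
        gcongr
        exact le_ciSup (f := fun s => selectionForm grp a s y) (finite_range _).bddAbove ⟨s, hs⟩
    _ = exp (-∑ i, y i) * ∏ k, (√n * exp (-y (s k))) ^ (-a k) := by
        simp_rw [exp_neg_selectionForm, mul_rpow hn.le (exp_nonneg _), Finset.prod_mul_distrib]
        ring
    _ ≤ logDensity grp a y :=
        mul_le_mul_of_nonneg_left (Finset.prod_le_prod (fun k _ => by positivity) fun k _ =>
          rpow_le_rpow_of_nonpos (hpos k) (hnorm k) (neg_nonpos.2 (ha k))) (exp_nonneg _)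

lemma isCoerciveProgram_selectionForm (hgrp : Function.Surjective grp)
    (ha : ∀ k, a k < (Finset.univ.filter (grp · = k)).card) :
    IsCoerciveProgram (fun i => .proj i : Fin n → (Fin n → ℝ) →ₗ[ℝ] ℝ) (selectionForm grp a) := by
  intro y hy hform
  simp only [LinearMap.proj_apply] at hy
  obtain ⟨s, hs, hmin⟩ := exists_rightInverse_forall_le hgrp y
  have hcard (k) : (Finset.univ.filter (grp · = k)).card * y (s k) ≤ ∑ i with grp i = k, y i := by
    rw [← nsmul_eq_mul]
    refine Finset.card_nsmul_le_sum _ _ _ fun i hi => ?_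
    obtain rfl := (Finset.mem_filter.1 hi).2
    exact hmin i
  have hnonneg (k) : 0 ≤ ∑ i with grp i = k, y i - a k * y (s k) := by
    nlinarith [hcard k, ha k, hy (s k)]
  have hsum : ∑ k, (∑ i with grp i = k, y i - a k * y (s k)) ≤ 0 := by
    simpa [selectionForm_apply, Finset.sum_fiberwise] using hform ⟨s, hs⟩
  have hzero (k) : ∑ i with grp i = k, y i - a k * y (s k) = 0 :=
    (Finset.sum_eq_zero_iff_of_nonneg fun k _ => hnonneg k).1
      (hsum.antisymm (Finset.sum_nonneg fun k _ => hnonneg k)) k (Finset.mem_univ k)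
  have hmin_zero (k) : y (s k) = 0 := by
    nlinarith [hcard k, ha k, hy (s k), hzero k]
  ext i
  have hfiber : ∑ j with grp j = grp i, y j = 0 := by simpa [hmin_zero] using hzero (grp i)
  exact (Finset.sum_eq_zero_iff_of_nonneg fun j _ => hy j).1 hfiber i (by simp)

end LogDensity

section SublevelSets

variable {grp : Fin n → Fin m} {a : Fin m → ℝ} {c : (Fin n → ℕ) → ℝ} {r : ℝ}

lemma fracMeasure_sublevel (hr : 0 < r) (ε : ℝ) :
    fracMeasure grp a {t | (∀ i, t i ∈ Ioo 0 r) ∧ starFn c t < ε} =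
      ∫⁻ y in {y | (∀ i, -log r < y i) ∧ starFn c (fun i => exp (-y i)) < ε},
        ENNReal.ofReal (logDensity grp a y) := by
  have := (newtonVertices_finite c).fintype
  have hopen : IsOpen {y : Fin n → ℝ | (∀ i, -log r < y i) ∧
      starFn c (fun i => exp (-y i)) < ε} := by
    simp only [starFn_exp_neg, dotProduct, ofPred_and, ofPred_forall]
    exact (isOpen_iInter_of_finite fun i => isOpen_lt continuous_const (continuous_apply i)).inter
      (isOpen_lt (by fun_prop) continuous_const)
  rw [setOf_Ioo_and_eq_image_pi_exp_neg hr, fracMeasure_image_pi_exp_neg hopen.measurableSet]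

lemma fracMeasure_sublevel_le (hgrp : Function.Surjective grp) (ha : ∀ k, 0 ≤ a k) (hr : 0 < r)
    (hr1 : r ≤ 1) (L : ℝ) :
    fracMeasure grp a {t | (∀ i, t i ∈ Ioo 0 r) ∧ starFn c t < exp (-L)} ≤
      ∫⁻ y in {y | (∀ i, 0 ≤ y i) ∧ ∀ v : newtonVertices c, L ≤ v.1 ⬝ᵥ y},
        ENNReal.ofReal (exp (-⨆ s, selectionForm grp a s y)) := by
  have hlog : 0 ≤ -log r := neg_nonneg.2 (log_nonpos hr.le hr1)
  rw [fracMeasure_sublevel hr]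
  refine (lintegral_mono_set ?_).trans
    (lintegral_mono fun y => ENNReal.ofReal_le_ofReal (logDensity_le_exp_neg_iSup hgrp ha y))
  exact fun y hy => ⟨fun i => hlog.trans (hy.1 i).le, le_dotProduct_of_starFn_exp_neg_lt hy.2⟩

lemma exists_le_fracMeasure_sublevel (hgrp : Function.Surjective grp) (ha : ∀ k, 0 ≤ a k)
    [NeZero n] (hc : c ≠ 0) (hr : 0 < r) :
    ∃ ρ C : ℝ, 0 < C ∧ ∀ L : ℝ, ENNReal.ofReal C *
      ∫⁻ y in {y | (∀ i, ρ < y i) ∧ ∀ v : newtonVertices c, L + ρ ≤ v.1 ⬝ᵥ y},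
        ENNReal.ofReal (exp (-⨆ s, selectionForm grp a s y)) ≤
      fracMeasure grp a {t | (∀ i, t i ∈ Ioo 0 r) ∧ starFn c t < exp (-L)} := by
  obtain ⟨C, hC, hdensity⟩ := exists_mul_exp_neg_iSup_le_logDensity hgrp ha
  obtain ⟨ρ, hρ⟩ := exists_gt (max (-log r) (log (Nat.card (newtonVertices c))))
  obtain ⟨hρr, hρcard⟩ := max_lt_iff.1 hρ
  refine ⟨ρ, C, hC, fun L => ?_⟩
  rw [fracMeasure_sublevel hr, ← lintegral_const_mul' _ _ ENNReal.ofReal_ne_top]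
  simp_rw [← ENNReal.ofReal_mul hC.le]
  refine (lintegral_mono_set ?_).trans
    (lintegral_mono fun y => ENNReal.ofReal_le_ofReal (hdensity y))
  exact fun y hy => ⟨fun i => hρr.trans (hy.1 i), starFn_exp_neg_lt hc hρcard hy.2⟩

lemma isSublevelExponent_of_exp_neg_bounds {a₀ : ℝ} {d₀ : ℕ} (ha₀ : 0 < a₀) (hd₀ : d₀ ≤ n - 1)
    (hbound : ∀ r : ℝ, 0 < r → r < 1 → ∃ b B : ℝ, 0 < b ∧ ∀ L : ℝ, 1 / 2 ≤ L →
      ENNReal.ofReal (b * exp (-(a₀ * L)) * L ^ d₀) ≤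
          fracMeasure grp a {t | (∀ i, t i ∈ Ioo 0 r) ∧ starFn c t < exp (-L)} ∧
        fracMeasure grp a {t | (∀ i, t i ∈ Ioo 0 r) ∧ starFn c t < exp (-L)} ≤
          ENNReal.ofReal (B * exp (-(a₀ * L)) * L ^ d₀)) :
    IsSublevelExponent grp a c a₀ d₀ := by
  refine ⟨ha₀, hd₀, 1, one_pos, fun r hr hr1 => ?_⟩
  obtain ⟨b, B, hb, hbound⟩ := hbound r hr hr1
  refine ⟨b / 2, |B| + 1, half_pos hb, by positivity, fun ε hε hε2 => ?_⟩
  obtain ⟨L, rfl⟩ : ∃ L, exp (-L) = ε := ⟨-log ε, by rw [neg_neg, exp_log hε]⟩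
  have hL : 1 / 2 ≤ L := by linarith [add_one_le_exp (-L)]
  have hL0 : 0 < L := by linarith
  obtain ⟨hlower, hupper⟩ := hbound L hL
  rw [log_exp, abs_neg, abs_of_pos hL0, ← exp_mul, neg_mul, mul_comm L]
  refine ⟨hlower.trans_lt' ?_, hupper.trans_lt ?_⟩ <;>
    rw [ENNReal.ofReal_lt_ofReal_iff (by positivity)] <;> gcongr
  · exact half_lt_self hb
  · exact (le_abs_self B).trans_lt (lt_add_one _)

end SublevelSets

theorem lemma_2_1_general {grp : Fin n → Fin m} {a : Fin m → ℝ} {c : (Fin n → ℕ) → ℝ}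
    (ha : ∀ k, 0 ≤ a k ∧ a k < (Finset.univ.filter (grp · = k)).card) (hc : c ≠ 0)
    (hc0 : c 0 = 0) : ∃ a₀ d₀, IsSublevelExponent grp a c a₀ d₀ := by
  have hgrp : Function.Surjective grp := fun k => by
    obtain ⟨i, hi⟩ := Finset.card_pos.1 (Nat.cast_pos.1 ((ha k).1.trans_lt (ha k).2))
    exact ⟨i, (Finset.mem_filter.1 hi).2⟩
  have := (newtonVertices_finite c).to_subtype
  have := (newtonVertices_nonempty hc).to_subtype
  have : Nonempty (GroupSelection grp) := ⟨_, Function.rightInverse_surjInv hgrp⟩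
  obtain ⟨a₀, ha₀, d₀, hd₀, ⟨B, hupper⟩, hlower⟩ := exists_lintegral_exp_neg_iSup_bounds
    (v := fun v : newtonVertices c => dotProductBilin ℝ ℝ v.1) (u := 1) volume
    (isCoerciveProgram_selectionForm hgrp fun k => (ha k).2) (fun _ => one_pos)
    fun v => by simpa [dotProduct] using sum_pos_of_mem_newtonVertices hc0 v.2
  rw [Module.finrank_fin_fun] at hd₀
  have : NeZero n := ⟨by lia⟩
  refine ⟨a₀, d₀, isSublevelExponent_of_exp_neg_bounds ha₀ (by lia) fun r hr hr1 => ?_⟩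
  obtain ⟨ρ, C, hC, hsublevel⟩ := exists_le_fracMeasure_sublevel hgrp (fun k => (ha k).1) hc hr
  obtain ⟨β, hβ, hlower⟩ := hlower ρ
  refine ⟨C * β, B, mul_pos hC hβ, fun L hL => ⟨?_, ?_⟩⟩
  · rw [mul_assoc C, mul_assoc C, ENNReal.ofReal_mul hC.le]
    exact (mul_right_mono (hlower L (by linarith))).trans (hsublevel L)
  · exact (fracMeasure_sublevel_le hgrp (fun k => (ha k).1) hr hr1.le L).trans (hupper L hL)

/-- **Lemma 2.1.** There are `r₀ > 0`, `a₀ > 0` and an integer `0 ≤ d₀ ≤ n-1` such that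
for every `0 < r < r₀` there are positive constants `b_r`, `B_r` with
`b_r ε^{a₀} |ln ε|^{d₀} < μ({t ∈ (0,r)^n : S^*(t) < ε}) < B_r ε^{a₀} |ln ε|^{d₀}`
for all `0 < ε < 1/2`. -/
theorem lemma_2_1
    (n m : ℕ) (hn : 0 < n) (hm : 0 < m)
    (grp : Fin n → Fin m) (hgrp : Function.Surjective grp)
    (l : Fin m → ℕ) (hl : ∀ k, l k = (Finset.univ.filter (fun i => grp i = k)).card)
    (a : Fin m → ℝ) (ha : ∀ k, 0 ≤ a k ∧ a k < l k)
    (S : (Fin n → ℝ) → ℝ) (c : (Fin n → ℕ) → ℝ)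
    (hSc : HasTaylorSeriesAtOrigin S c) (hc : c ≠ 0)
    (hS0 : S 0 = 0) (hS1 : fderiv ℝ S 0 = 0) :
    ∃ r₀ > (0 : ℝ), ∃ a₀ : ℝ, 0 < a₀ ∧ ∃ d₀ : ℕ, d₀ ≤ n - 1 ∧
      ∀ r : ℝ, 0 < r → r < r₀ →
        ∃ b B : ℝ, 0 < b ∧ 0 < B ∧ ∀ ε : ℝ, 0 < ε → ε < 1/2 →
          ENNReal.ofReal (b * ε ^ a₀ * |Real.log ε| ^ d₀) <
              fracMeasure grp a {t | (∀ i, t i ∈ Set.Ioo 0 r) ∧ starFn c t < ε} ∧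
            fracMeasure grp a {t | (∀ i, t i ∈ Set.Ioo 0 r) ∧ starFn c t < ε} <
              ENNReal.ofReal (B * ε ^ a₀ * |Real.log ε| ^ d₀) := by
  obtain ⟨a₀, d₀, ha₀, hd₀, r₀, hr₀, hbounds⟩ := lemma_2_1_general (fun k => hl k ▸ ha k) hc
    ((coeff_zero_eq_apply_zero hSc).trans hS0)
  exact ⟨r₀, hr₀, a₀, ha₀, d₀, hd₀, hbounds⟩

end Paper
end
end

section
/- Suppose $f$ is a smooth function on a neighborhood of the origin in $\mathbf{R}^n$ with $f(0)=0$ and $\nabla f(0)=0$, whose Taylor expansion at the origin does not vanish identically, and that either $f$ is real-analytic or $f$ is smooth with Newton polyhedron intersecting each coordinate axis. Then there is a neighborhood $U$ of the origin and constants $K$ and $\eta>0$ such that any dyadic rectangle $R\subset U$ (with side length $2^{-k_i}$ in the $x_i$ direction) may be divided into at most $K$ rectangles $R_j$ such that for each $R_j$ there exist an integer $a$ and a single vector $y=(y_1,\dots,y_n)$ with $|y_i|\le 2^{-k_i}$ for all $i$, such that $|(y\cdot\nabla)^a f(\mathbf{x})| \ge \eta\, \sup_{R_j} f^*$ for all $\mathbf{x}\in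 R_j$. Moreover, for each $j$ one can arrange either that $0\le a\le o(f)$ or that $2\le a\le\max(2,o(f))$. -/
open MeasureTheory Real Filter Topology Set
open scoped ENNReal

noncomputable section

namespace Paper

variable {n m : ℕ}

/-- `c` is the (possibly non-convergent) Taylor coefficient family of the smooth
function `f` at the origin, in the sense of Peano remainders. -/
def IsTaylorSeriesAt (f : (Fin n → ℝ) → ℝ) (c : (Fin n → ℕ) → ℝ) : Prop :=
  ∀ N : ℕ,
    (fun x : Fin n → ℝ => f x -
        ∑ α ∈ (Fintype.piFinset fun _ : Fin n => Finset.range (N + 1)).filter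
          (fun α => ∑ i, α i ≤ N), c α * monomial α x)
      =o[𝓝 (0 : Fin n → ℝ)] fun x => ‖x‖ ^ N

/-- The dyadic rectangle `∏_i ±[2^{-k_i-1}, 2^{-k_i}]`, the sign in the `i`-th
coordinate being determined by `σ i`. -/
def dyadicRect (k : Fin n → ℤ) (σ : Fin n → Bool) : Set (Fin n → ℝ) :=
  Set.univ.pi fun i =>
    if σ i then Set.Icc ((2 : ℝ) ^ (-(k i) - 1)) ((2 : ℝ) ^ (-(k i)))
    else Set.Icc (-((2 : ℝ) ^ (-(k i)))) (-((2 : ℝ) ^ (-(k i) - 1)))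

/-- An axis-parallel closed rectangle. -/
def boxOf (lo hi : Fin n → ℝ) : Set (Fin n → ℝ) :=
  Set.univ.pi fun i => Set.Icc (lo i) (hi i)

/-!
Rescale `f` on the dyadic rectangles to the fixed rectangles `∏ ±[1/2, 1]`, dividing by the size of
the dominant monomial. Along any ultrafilter of scales tending to the origin the dominant monomials
are those of a compact face `F` of the Newton polyhedron, and the rescaled functions converge, with
all their derivatives, to a rescaling of `f_F`. Since `f_F` vanishes to order at most `o(f)` at
points off the coordinate hyperplanes, some derivative of the limit is nonzero at every point of the
fixed rectangle, hence, by polarization, a pure derivative in a single direction. Compactness of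
the rectangle turns these local bounds into finitely many boxes, and an ultrafilter argument makes
their number and the constant uniform in the scale. For orders between `2` and `max(2, o(f))`, the
point is that Euler's relation for the quasi-homogeneous `f_F` shows that if its second derivative
vanishes at a point then so do the first derivative and the value.
-/

section Calculus

variable {ι E F G : Type*} [NormedAddCommGroup E] [NormedSpace ℝ E]
  [NormedAddCommGroup F] [NormedSpace ℝ F] [NormedAddCommGroup G] [NormedSpace ℝ G]

lemma exists_eventually_of_forall_ultrafilter {L : Filter ι} {P : ℕ → ι → Prop}
    (hmono : Monotone P)
    (h : ∀ l : Ultrafilter ι, ↑l ≤ L → ∃ K, ∀ᶠ x in (l : Filter ι), P K x) :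
    ∃ K, ∀ᶠ x in L, P K x := by
  by_contra! hfail
  have hne : NeBot (⨅ K, L ⊓ 𝓟 {x | ¬P K x}) := by
    refine iInf_neBot_of_directed' (fun K K' => ⟨max K K', ?_, ?_⟩) fun K =>
      frequently_iff_neBot.mp (hfail K)
    · exact inf_le_inf_left _ (principal_mono.mpr fun x hx h => hx (hmono (le_max_left _ _) x h))
    · exact inf_le_inf_left _ (principal_mono.mpr fun x hx h => hx (hmono (le_max_right _ _) x h))
  obtain ⟨l, hl⟩ := Ultrafilter.exists_le (⨅ K, L ⊓ 𝓟 {x | ¬P K x})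
  obtain ⟨K, hK⟩ := h l (hl.trans ((iInf_le _ 0).trans inf_le_left))
  have hnot : ∀ᶠ x in (l : Filter ι), ¬P K x :=
    hl.trans ((iInf_le _ K).trans inf_le_right) (mem_principal_self _)
  obtain ⟨x, hx, hx'⟩ := (hK.and hnot).exists
  exact hx' hx

/-- Landau's inequality for intermediate derivatives. -/
lemma mul_norm_fderiv_le {g : E → F} {x : E} {τ B M : ℝ} (hτ : 0 ≤ τ)
    (hg : ∀ y ∈ Metric.closedBall x τ, DifferentiableAt ℝ g y)
    (hB : ∀ y ∈ Metric.closedBall x τ, ‖g y‖ ≤ B)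
    (hM : ∀ y ∈ Metric.closedBall x τ, ‖fderiv ℝ g y - fderiv ℝ g x‖ ≤ M * τ) :
    τ * ‖fderiv ℝ g x‖ ≤ 2 * B + M * τ ^ 2 := by
  have hx : x ∈ Metric.closedBall x τ := Metric.mem_closedBall_self hτ
  have hB0 : 0 ≤ B := (norm_nonneg _).trans (hB x hx)
  have hM0 : 0 ≤ M * τ := (norm_nonneg _).trans (hM x hx)
  rw [← Real.norm_of_nonneg hτ, ← norm_smul, Real.norm_of_nonneg hτ]
  refine ContinuousLinearMap.opNorm_le_of_unit_norm (by nlinarith) fun v hv => ?_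
  have hnorm : ‖τ • v‖ = τ := by rw [norm_smul, hv, mul_one, Real.norm_of_nonneg hτ]
  have hy : x + τ • v ∈ Metric.closedBall x τ := by simp [hnorm]
  have hmean : ‖g (x + τ • v) - g x - fderiv ℝ g x (τ • v)‖ ≤ M * τ * τ := by
    simpa [hnorm] using
      (convex_closedBall x τ).norm_image_sub_le_of_norm_hasFDerivWithin_le'
        (fun y hy => (hg y hy).hasFDerivAt.hasFDerivWithinAt) hM hx hy
  calc ‖(τ • fderiv ℝ g x) v‖
      = ‖g (x + τ • v) - g x - (g (x + τ • v) - g x - fderiv ℝ g x (τ • v))‖ := by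
        rw [sub_sub_cancel, map_smul, smul_apply]
    _ ≤ ‖g (x + τ • v)‖ + ‖g x‖ + ‖g (x + τ • v) - g x - fderiv ℝ g x (τ • v)‖ :=
        (norm_sub_le _ _).trans (by gcongr; exact norm_sub_le _ _)
    _ ≤ 2 * B + M * τ ^ 2 := by linarith [hB _ hy, hB x hx]

lemma isBigO_fderiv_of_isBigO_norm_pow {g : E → F} (hg : ContDiffAt ℝ 2 g 0) {p : ℕ}
    (hp : p ≠ 0) (h : g =O[𝓝 0] fun x => ‖x‖ ^ (2 * p)) :
    fderiv ℝ g =O[𝓝 0] fun x => ‖x‖ ^ p := by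
  obtain ⟨C, hC, hbound⟩ := h.exists_pos
  obtain ⟨M, t, ht, hLip⟩ :=
    (hg.fderiv_right (m := 1) (by norm_num)).exists_lipschitzOnWith
  have hdiff : ∀ᶠ x in 𝓝 (0 : E), DifferentiableAt ℝ g x :=
    (hg.eventually (by simp)).mono fun x hx => hx.differentiableAt (by simp)
  have hzero : fderiv ℝ g 0 = 0 :=
    (h.congr_right fun x => by rw [sub_zero]).hasFDerivAt (n := 2 * p) (by lia) |>.fderiv
  obtain ⟨ρ, hρ, hball⟩ := Metric.eventually_nhds_iff_ball.mp (hbound.bound.and (hdiff.and ht))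
  refine Asymptotics.IsBigO.of_bound (2 * (C * 4 ^ p) + M) ?_
  filter_upwards [Metric.ball_mem_nhds (0 : E) (show 0 < min (ρ / 2) 1 by positivity)] with x hx
  rw [mem_ball_zero_iff, lt_min_iff] at hx
  rcases eq_or_ne x 0 with rfl | hx0
  · simp [hzero, hp]
  have hτ : 0 < ‖x‖ ^ p := by positivity
  have hτx : ‖x‖ ^ p ≤ ‖x‖ := pow_le_of_le_one (norm_nonneg x) hx.2.le hp
  have hnear : ∀ y ∈ Metric.closedBall x (‖x‖ ^ p), ‖y‖ ≤ 2 * ‖x‖ := fun y hy => by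
    rw [mem_closedBall_iff_norm] at hy
    linarith [norm_le_norm_add_norm_sub' y x]
  have hmem : ∀ y ∈ Metric.closedBall x (‖x‖ ^ p), y ∈ Metric.ball (0 : E) ρ := fun y hy => by
    rw [mem_ball_zero_iff]
    linarith [hnear y hy]
  have hlandau := mul_norm_fderiv_le (g := g) (B := C * 4 ^ p * (‖x‖ ^ p) ^ 2) (M := M) hτ.le
    (fun y hy => (hball y (hmem y hy)).2.1)
    (fun y hy => by
      refine (hball y (hmem y hy)).1.trans ?_
      rw [norm_pow, norm_norm]
      calc C * ‖y‖ ^ (2 * p) ≤ C * (2 * ‖x‖) ^ (2 * p) := by gcongr; exact hnear y hy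
        _ = C * 4 ^ p * (‖x‖ ^ p) ^ 2 := by
          rw [mul_pow, pow_mul, ← pow_mul ‖x‖ p, mul_comm p 2]; norm_num; ring)
    (fun y hy => (hLip.norm_sub_le (hball y (hmem y hy)).2.2
        (hball x (hmem x (Metric.mem_closedBall_self hτ.le))).2.2).trans (by
          gcongr; exact mem_closedBall_iff_norm.mp hy))
  rw [norm_pow, norm_norm]
  exact le_of_mul_le_mul_left (hlandau.trans_eq (by ring)) hτ

lemma isBigO_iteratedFDeriv_of_isBigO_norm_pow {g : E → F} {a p : ℕ} (hp : p ≠ 0)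
    (hg : ContDiffAt ℝ (a + 1) g 0) (h : g =O[𝓝 0] fun x => ‖x‖ ^ (2 ^ a * p)) :
    iteratedFDeriv ℝ a g =O[𝓝 0] fun x => ‖x‖ ^ p := by
  induction a generalizing p with
  | zero =>
    refine Asymptotics.IsBigO.of_norm_left ?_
    simpa using h
  | succ a ih =>
    have hlower : iteratedFDeriv ℝ a g =O[𝓝 0] fun x => ‖x‖ ^ (2 * p) :=
      ih (by lia) (hg.of_le (by exact_mod_cast Nat.le_succ _)) (by rwa [← mul_assoc, ← pow_succ])
    have hC2 : ContDiffAt ℝ 2 (iteratedFDeriv ℝ a g) 0 :=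
      hg.iteratedFDeriv_right (by norm_cast; lia)
    refine Asymptotics.IsBigO.of_norm_left ?_
    simpa only [norm_fderiv_iteratedFDeriv] using
      (isBigO_fderiv_of_isBigO_norm_pow hC2 hp hlower).norm_left

lemma iteratedFDeriv_comp_continuousLinearMap {f : F → G} (L : E →L[ℝ] F) {x : E} {a : ℕ}
    (hf : ContDiffAt ℝ a f (L x)) :
    iteratedFDeriv ℝ a (f ∘ L) x =
      (iteratedFDeriv ℝ a f (L x)).compContinuousLinearMap fun _ => L := by
  obtain ⟨s, hs, hfs⟩ := hf.contDiffOn le_rfl (by simp)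
  obtain ⟨t, hts, ht, hxt⟩ := mem_nhds_iff.mp hs
  have hpre : IsOpen (L ⁻¹' t) := ht.preimage L.continuous
  simpa only [iteratedFDerivWithin_of_isOpen a ht hxt,
    iteratedFDerivWithin_of_isOpen a hpre (show x ∈ L ⁻¹' t from hxt)] using
    L.iteratedFDerivWithin_comp_right (hfs.mono hts) ht.uniqueDiffOn
      hpre.uniqueDiffOn hxt le_rfl

lemma iteratedFDeriv_comp_prodMk {Φ : E × F → G} {p : E} {u : F} {a : ℕ}
    (hΦ : ContDiffAt ℝ a Φ (p, u)) :
    iteratedFDeriv ℝ a (fun v => Φ (p, v)) u =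
      (iteratedFDeriv ℝ a Φ (p, u)).compContinuousLinearMap
        fun _ => ContinuousLinearMap.inr ℝ E F := by
  have hshift : ContDiffAt ℝ a (fun q => Φ (q + (p, 0))) (ContinuousLinearMap.inr ℝ E F u) :=
    ContDiffAt.comp _ (by simpa using hΦ) (contDiff_id.add contDiff_const).contDiffAt
  have hcomp := iteratedFDeriv_comp_continuousLinearMap _ hshift
  rw [iteratedFDeriv_comp_add_right] at hcomp
  simpa [Function.comp_def] using hcomp

lemma tendsto_iteratedFDeriv_of_contDiffAt {Φ : E × F → G} {p₀ : E} {u₀ : F} {a : ℕ}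
    (hΦ : ContDiffAt ℝ a Φ (p₀, u₀)) {l : Filter ι} {p : ι → E} (hp : Tendsto p l (𝓝 p₀)) :
    Tendsto (fun q : ι × F => iteratedFDeriv ℝ a (fun v => Φ (p q.1, v)) q.2) (l ×ˢ 𝓝 u₀)
      (𝓝 (iteratedFDeriv ℝ a (fun v => Φ (p₀, v)) u₀)) := by
  have hpair : Tendsto (fun q : ι × F => (p q.1, q.2)) (l ×ˢ 𝓝 u₀) (𝓝 (p₀, u₀)) := by
    rw [nhds_prod_eq]
    exact hp.prodMap tendsto_id
  have hcont : ContinuousAt (iteratedFDeriv ℝ a Φ) (p₀, u₀) :=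
    (hΦ.iteratedFDeriv_right (m := 0) (by simp)).continuousAt
  rw [iteratedFDeriv_comp_prodMk hΦ]
  refine Tendsto.congr' ?_ (((ContinuousMultilinearMap.compContinuousLinearMapL
    fun _ : Fin a => ContinuousLinearMap.inr ℝ E F).continuous.tendsto _).comp
      (hcont.tendsto.comp hpair))
  filter_upwards [hpair.eventually (hΦ.eventually (by simp))] with q hq
  exact (iteratedFDeriv_comp_prodMk hq).symm

/-- Polarization: a symmetric multilinear map is determined by its values on the diagonal. -/
lemma exists_norm_le_one_iteratedFDeriv_ne_zero {P : E → F} {x : E} {a : ℕ}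
    (hP : ContDiffAt ℝ (⊤ : WithTop ℕ∞) P x) (h : iteratedFDeriv ℝ a P x ≠ 0) :
    ∃ z : E, ‖z‖ ≤ 1 ∧ iteratedFDeriv ℝ a P x (fun _ => z) ≠ 0 := by
  set B := iteratedFDeriv ℝ a P x
  obtain ⟨z, hz⟩ : ∃ z, B (fun _ => z) ≠ 0 := by
    by_contra! hdiag
    refine h (ContinuousMultilinearMap.ext fun v => ?_)
    have hsum := B.iteratedFDeriv_comp_diagonal 0 v
    have hperm : ∀ σ : Equiv.Perm (Fin a), B (fun i => v (σ i)) = B v := fun σ =>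
      hP.iteratedFDeriv_comp_perm v σ
    simp only [hdiag, iteratedFDeriv_fun_zero, hperm, Finset.sum_const, Finset.card_univ,
      Fintype.card_perm, Fintype.card_fin, ← Nat.cast_smul_eq_nsmul ℝ] at hsum
    exact (smul_eq_zero.mp hsum.symm).resolve_left (mod_cast a.factorial_ne_zero)
  refine ⟨(‖z‖ + 1)⁻¹ • z, ?_, ?_⟩
  · rw [norm_smul, Real.norm_of_nonneg (by positivity), inv_mul_le_iff₀ (by positivity)]
    linarith
  · rw [B.map_smul_univ (fun _ => (‖z‖ + 1)⁻¹) fun _ => z]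
    exact smul_ne_zero (Finset.prod_ne_zero_iff.mpr fun _ _ => by positivity) hz

end Calculus

section Rescaling

lemma iteratedFDeriv_comp_mul_left {F : Type*} [NormedAddCommGroup F] [NormedSpace ℝ F]
    {s : Fin n → ℝ} (hs : ∀ i, s i ≠ 0) (g : (Fin n → ℝ) → F) (u : Fin n → ℝ) {a : ℕ}
    (v : Fin a → Fin n → ℝ) :
    iteratedFDeriv ℝ a (fun x => g (s * x)) u v =
      iteratedFDeriv ℝ a g (s * u) fun j => s * v j := by
  let L : (Fin n → ℝ) ≃L[ℝ] (Fin n → ℝ) := ContinuousLinearEquiv.piCongrRight fun i =>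
    ContinuousLinearEquiv.unitsEquivAut ℝ (Units.mk0 (s i) (hs i))
  have hL : ⇑L = fun x => s * x := by
    ext x i
    simp [L, mul_comm]
  have h := L.iteratedFDerivWithin_comp_right g uniqueDiffOn_univ (mem_univ (L u)) a
  rw [preimage_univ, iteratedFDerivWithin_univ, iteratedFDerivWithin_univ] at h
  simpa [hL, Function.comp_def] using congr($h v)

/-- The function `f` seen in the coordinates `v = x / s` and measured in units of `μ`. -/
def rescale (f : (Fin n → ℝ) → ℝ) (μ : ℝ) (s v : Fin n → ℝ) : ℝ :=
  μ⁻¹ * f (s * v)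

variable {f : (Fin n → ℝ) → ℝ} {μ : ℝ} {s : Fin n → ℝ}

lemma iteratedFDeriv_rescale (hμ : μ ≠ 0) (hs : ∀ i, s i ≠ 0) (u : Fin n → ℝ) {a : ℕ}
    (v : Fin a → Fin n → ℝ) :
    iteratedFDeriv ℝ a (rescale f μ s) u v =
      μ⁻¹ * iteratedFDeriv ℝ a f (s * u) fun j => s * v j := by
  let L : ℝ ≃L[ℝ] ℝ := ContinuousLinearEquiv.smulLeft (Units.mk0 μ⁻¹ (inv_ne_zero hμ))
  have hL : rescale f μ s = L ∘ fun x => f (s * x) := rfl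
  rw [hL, L.iteratedFDeriv_comp_left, ← iteratedFDeriv_comp_mul_left hs]
  rfl

lemma norm_iteratedFDeriv_rescale_le (hμ : μ ≠ 0) (hs : ∀ i, s i ≠ 0) (u : Fin n → ℝ) (a : ℕ) :
    ‖iteratedFDeriv ℝ a (rescale f μ s) u‖ ≤
      |μ|⁻¹ * ‖iteratedFDeriv ℝ a f (s * u)‖ * ‖s‖ ^ a := by
  refine ContinuousMultilinearMap.opNorm_le_bound (by positivity) fun v => ?_
  rw [iteratedFDeriv_rescale hμ hs, norm_mul, norm_inv, Real.norm_eq_abs μ, mul_assoc, mul_assoc]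
  gcongr
  calc ‖iteratedFDeriv ℝ a f (s * u) fun j => s * v j‖
      ≤ ‖iteratedFDeriv ℝ a f (s * u)‖ * ∏ j, ‖s * v j‖ :=
        ContinuousMultilinearMap.le_opNorm _ _
    _ ≤ ‖iteratedFDeriv ℝ a f (s * u)‖ * ∏ j, ‖s‖ * ‖v j‖ := by
        gcongr with j
        exact norm_mul_le _ _
    _ = ‖iteratedFDeriv ℝ a f (s * u)‖ * (‖s‖ ^ a * ∏ j, ‖v j‖) := by
        rw [Finset.prod_mul_distrib, Finset.prod_const, Finset.card_univ, Fintype.card_fin]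

end Rescaling

section Monomials

lemma contDiff_monomial (α : Fin n → ℕ) {k : WithTop ℕ∞} : ContDiff ℝ k (monomial α) :=
  contDiff_prod fun i _ => (contDiff_apply ℝ ℝ i).pow _

lemma monomial_mul (α : Fin n → ℕ) (x y : Fin n → ℝ) :
    monomial α (x * y) = monomial α x * monomial α y := by
  simp [monomial, mul_pow, Finset.prod_mul_distrib]

lemma monomial_add (α β : Fin n → ℕ) (x : Fin n → ℝ) :
    monomial (α + β) x = monomial α x * monomial β x := by
  simp [monomial, pow_add, Finset.prod_mul_distrib]

lemma monomial_zero_exponent (x : Fin n → ℝ) : monomial 0 x = 1 := by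
  simp [monomial]

lemma monomial_apply_zero {α : Fin n → ℕ} (hα : α ≠ 0) : monomial α 0 = 0 := by
  obtain ⟨i, hi⟩ := Function.ne_iff.mp hα
  exact Finset.prod_eq_zero (Finset.mem_univ i) (zero_pow hi)

lemma monomial_pos (α : Fin n → ℕ) {x : Fin n → ℝ} (hx : ∀ i, 0 < x i) : 0 < monomial α x :=
  Finset.prod_pos fun i _ => pow_pos (hx i) _

lemma monomial_single (i : Fin n) (p : ℕ) (x : Fin n → ℝ) :
    monomial (Pi.single i p) x = x i ^ p := by
  rw [monomial, Finset.prod_eq_single i (fun j _ hj => by simp [hj]) (by simp), Pi.single_eq_same]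

lemma abs_monomial_le (α : Fin n → ℕ) {x : Fin n → ℝ} {r : ℝ} (hx : ‖x‖ ≤ r) :
    |monomial α x| ≤ r ^ ∑ i, α i := by
  rw [monomial, Finset.abs_prod, ← Finset.prod_pow_eq_pow_sum]
  refine Finset.prod_le_prod (fun i _ => abs_nonneg _) fun i _ => ?_
  rw [abs_pow]
  gcongr
  exact (norm_le_pi_norm x i).trans hx

lemma hasFDerivAt_monomial (α : Fin n → ℕ) (x : Fin n → ℝ) :
    HasFDerivAt (monomial α)
      (∑ i, (α i * monomial (α - Pi.single i 1) x) •
        (ContinuousLinearMap.proj i : (Fin n → ℝ) →L[ℝ] ℝ)) x := by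
  have h := HasFDerivAt.finsetProd (u := Finset.univ) (x := x) fun i _ =>
    (hasFDerivAt_apply (𝕜 := ℝ) i x).pow (α i)
  refine h.congr_fderiv (Finset.sum_congr rfl fun i hi => ?_)
  have hrest : ∏ j ∈ Finset.univ.erase i, x j ^ (α - Pi.single i 1 : Fin n → ℕ) j =
      ∏ j ∈ Finset.univ.erase i, x j ^ α j :=
    Finset.prod_congr rfl fun j hj => by simp [Finset.ne_of_mem_erase hj]
  have hfactor : monomial (α - Pi.single i 1) x =
      x i ^ (α i - 1) * ∏ j ∈ Finset.univ.erase i, x j ^ α j := by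
    rw [monomial, ← Finset.mul_prod_erase _ _ hi, hrest, Pi.sub_apply, Pi.single_eq_same]
  rw [hfactor, smul_smul, nsmul_eq_mul]
  congr 1
  ring

end Monomials

section PowerSeries

lemma exists_multilinear_eq_monomial (γ : Fin n → ℕ) {j : ℕ} (hγ : ∑ i, γ i = j) :
    ∃ M : ContinuousMultilinearMap ℝ (fun _ : Fin j => Fin n → ℝ) ℝ,
      ‖M‖ ≤ 1 ∧ ∀ x, M (fun _ => x) = monomial γ x := by
  let e : (Σ i, Fin (γ i)) ≃ Fin j := Fintype.equivFinOfCardEq (by simp [hγ])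
  refine ⟨(ContinuousMultilinearMap.mkPiAlgebra ℝ (Fin j) ℝ).compContinuousLinearMap
    fun t => ContinuousLinearMap.proj (R := ℝ) (φ := fun _ : Fin n => ℝ) (e.symm t).1, ?_, ?_⟩
  · refine (ContinuousMultilinearMap.norm_compContinuousLinearMap_le _ _).trans ?_
    rw [ContinuousMultilinearMap.norm_mkPiAlgebra, one_mul]
    refine Finset.prod_le_one (fun i _ => norm_nonneg _) fun i _ => ?_
    refine ContinuousLinearMap.opNorm_le_bound _ zero_le_one fun x => ?_
    rw [one_mul]
    exact norm_le_pi_norm x _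
  · intro x
    simp only [ContinuousMultilinearMap.compContinuousLinearMap_apply,
      ContinuousMultilinearMap.mkPiAlgebra_apply, ContinuousLinearMap.proj_apply]
    rw [Equiv.prod_comp e.symm (fun t => x t.1), Fintype.prod_sigma]
    simp [monomial]

variable {d : (Fin n → ℕ) → ℝ} {r : ℝ}

lemma summable_mul_monomial (hd : Summable fun γ => |d γ| * r ^ ∑ i, γ i) {x : Fin n → ℝ}
    (hx : ‖x‖ ≤ r) : Summable fun γ => d γ * monomial γ x := by
  refine Summable.of_norm_bounded hd fun γ => ?_
  rw [Real.norm_eq_abs, abs_mul]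
  gcongr
  exact abs_monomial_le γ hx

lemma contDiffAt_tsum_mul_monomial (hr : 0 < r) (hd : Summable fun γ => |d γ| * r ^ ∑ i, γ i) :
    ContDiffAt ℝ (⊤ : ℕ∞) (fun x => ∑' γ, d γ * monomial γ x) 0 := by
  lift r to NNReal using hr.le
  choose! M hM using fun (j : ℕ) (γ : Fin n → ℕ) (hγ : ∑ i, γ i = j) =>
    exists_multilinear_eq_monomial γ hγ
  let A : ℕ → Finset (Fin n → ℕ) := Finset.piAntidiag Finset.univ
  have hA : ∀ {j γ}, γ ∈ A j ↔ ∑ i, γ i = j := by simp [A, Finset.mem_piAntidiag]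
  let p : FormalMultilinearSeries ℝ (Fin n → ℝ) ℝ := fun j => ∑ γ ∈ A j, d γ • M j γ
  have hnorm : ∀ j, ‖p j‖ * r ^ j ≤ ∑' γ, |d γ| * (r : ℝ) ^ ∑ i, γ i := fun j =>
    calc ‖p j‖ * r ^ j ≤ (∑ γ ∈ A j, |d γ|) * r ^ j := by
          gcongr
          refine norm_sum_le_of_le _ fun γ hγ => ?_
          rw [norm_smul, Real.norm_eq_abs]
          exact mul_le_of_le_one_right (abs_nonneg _) (hM j γ (hA.mp hγ)).1
      _ = ∑ γ ∈ A j, |d γ| * r ^ ∑ i, γ i := by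
          rw [Finset.sum_mul]
          exact Finset.sum_congr rfl fun γ hγ => by rw [hA.mp hγ]
      _ ≤ ∑' γ, |d γ| * r ^ ∑ i, γ i := hd.sum_le_tsum _ fun γ _ => by positivity
  have hp : HasFPowerSeriesOnBall (fun x => ∑' γ, d γ * monomial γ x) p 0 r := by
    refine ⟨p.le_radius_of_bound _ hnorm, mod_cast hr, fun {y} hy => ?_⟩
    rw [Metric.eball_coe, mem_ball_zero_iff] at hy
    rw [zero_add]
    convert (summable_mul_monomial hd hy.le).hasSum.tsum_fiberwise (fun γ => ∑ i, γ i) using 2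
      with j
    have hfiber : (fun γ : Fin n → ℕ => ∑ i, γ i) ⁻¹' {j} = (A j : Set (Fin n → ℕ)) := by
      ext γ
      simp [hA]
    rw [hfiber, Finset.tsum_subtype' (A j) fun γ => d γ * monomial γ y]
    simp only [p, _root_.sum_apply, _root_.smul_apply, smul_eq_mul]
    exact Finset.sum_congr rfl fun γ hγ => by rw [(hM j γ (hA.mp hγ)).2]
  exact hp.analyticAt.contDiffAt

lemma exists_hasSum_monomial_mul {β : Fin n → ℕ} (hr : 0 < r)
    (hd : Summable fun γ => |d γ| * r ^ ∑ i, γ i) (hβ : ∀ α, d α ≠ 0 → β ≤ α) :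
    ∃ h : (Fin n → ℝ) → ℝ, ContDiffAt ℝ (⊤ : ℕ∞) h 0 ∧ h 0 = d β ∧
      ∀ᶠ x in 𝓝 0, HasSum (fun α => d α * monomial α x) (monomial β x * h x) := by
  have hinj : Function.Injective fun γ : Fin n → ℕ => γ + β := add_left_injective β
  have hshift : Summable fun γ => |d (γ + β)| * r ^ ∑ i, γ i := by
    refine ((hd.comp_injective hinj).mul_left (r ^ ∑ i, β i)⁻¹).congr fun γ => ?_
    simp only [Function.comp, Pi.add_apply, Finset.sum_add_distrib, pow_add]
    field_simp
  refine ⟨fun x => ∑' γ, d (γ + β) * monomial γ x, contDiffAt_tsum_mul_monomial hr hshift, ?_, ?_⟩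
  · dsimp only
    rw [tsum_eq_single 0 fun γ hγ => by rw [monomial_apply_zero hγ, mul_zero],
      monomial_zero_exponent, mul_one, zero_add]
  · filter_upwards [Metric.closedBall_mem_nhds 0 hr] with x hx
    rw [mem_closedBall_zero_iff] at hx
    have hrange : ∀ α ∉ Set.range (fun γ : Fin n → ℕ => γ + β), d α * monomial α x = 0 := by
      intro α hα
      by_contra hne
      exact hα ⟨α - β, tsub_add_cancel_of_le (hβ α (left_ne_zero_of_mul hne))⟩
    rw [← hinj.hasSum_iff hrange]
    refine ((summable_mul_monomial hshift hx).hasSum.mul_left (monomial β x)).congr_fun fun γ => ?_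
    rw [Function.comp_apply, monomial_add]
    ring

lemma exists_hasSum_sum_monomial_mul {D : Finset (Fin n → ℕ)}
    (hanti : IsAntichain (· ≤ ·) (D : Set (Fin n → ℕ))) (hr : 0 < r)
    (hd : Summable fun γ => |d γ| * r ^ ∑ i, γ i) (hD : ∀ α, d α ≠ 0 → ∃ β ∈ D, β ≤ α) :
    ∃ h : (Fin n → ℕ) → (Fin n → ℝ) → ℝ,
      (∀ β ∈ D, ContDiffAt ℝ (⊤ : ℕ∞) (h β) 0 ∧ h β 0 = d β) ∧
      ∀ᶠ x in 𝓝 0, HasSum (fun α => d α * monomial α x) (∑ β ∈ D, monomial β x * h β x) := by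
  classical
  choose! b hbD hble using hD
  let e : (Fin n → ℕ) → (Fin n → ℕ) → ℝ := fun β α => if b α = β then d α else 0
  have he : ∀ β α, |e β α| ≤ |d α| := fun β α => by
    simp only [e]
    split_ifs <;> simp
  have hsum : ∀ β, Summable fun γ => |e β γ| * r ^ ∑ i, γ i := fun β =>
    hd.of_nonneg_of_le (fun γ => by positivity) fun γ =>
      mul_le_mul_of_nonneg_right (he β γ) (by positivity)
  have hdiv : ∀ β α, e β α ≠ 0 → β ≤ α := by
    intro β α hα
    obtain ⟨rfl, hdα⟩ := ite_ne_right_iff.mp hα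
    exact hble α hdα
  choose h hsmooth hzero hhas using fun β => exists_hasSum_monomial_mul hr (hsum β) (hdiv β)
  refine ⟨h, fun β hβ => ⟨hsmooth β, (hzero β).trans ?_⟩, ?_⟩
  · by_cases hdβ : d β = 0
    · simp [e, hdβ]
    · exact if_pos (hanti.eq (hbD β hdβ) hβ (hble β hdβ))
  · filter_upwards [(Finset.eventually_all D).mpr fun β _ => hhas β] with x hx
    convert hasSum_sum hx using 2 with α
    by_cases hdα : d α = 0
    · simp [e, hdα]
    · simp only [e, ite_mul, zero_mul]
      rw [Finset.sum_ite_eq, if_pos (hbD α hdα)]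

end PowerSeries

section MinimalExponents

lemma finite_setOf_minimal_exponent (c : (Fin n → ℕ) → ℝ) :
    {α | Minimal (fun γ => c γ ≠ 0) α}.Finite :=
  WellQuasiOrderedLE.finite_of_isAntichain (setOfPred_minimal_antichain _)

/-- The minimal exponents of the series `c`: their octants generate the Newton polyhedron. -/
def minExponents (c : (Fin n → ℕ) → ℝ) : Finset (Fin n → ℕ) :=
  (finite_setOf_minimal_exponent c).toFinset

variable {c : (Fin n → ℕ) → ℝ}

lemma mem_minExponents {α : Fin n → ℕ} :
    α ∈ minExponents c ↔ Minimal (fun γ => c γ ≠ 0) α :=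
  (finite_setOf_minimal_exponent c).mem_toFinset

lemma isAntichain_minExponents (c : (Fin n → ℕ) → ℝ) :
    IsAntichain (· ≤ ·) (minExponents c : Set (Fin n → ℕ)) := by
  rw [minExponents, Set.Finite.coe_toFinset]
  exact setOfPred_minimal_antichain _

lemma exists_minExponents_le {α : Fin n → ℕ} (hα : c α ≠ 0) : ∃ β ∈ minExponents c, β ≤ α := by
  obtain ⟨β, hβα, hβ⟩ := exists_minimal_le_of_wellFoundedLT (fun γ => c γ ≠ 0) α hα
  exact ⟨β, mem_minExponents.mpr hβ, hβα⟩

lemma minExponents_nonempty (hc : c ≠ 0) : (minExponents c).Nonempty := by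
  obtain ⟨α, hα⟩ := Function.ne_iff.mp hc
  obtain ⟨β, hβ, -⟩ := exists_minExponents_le hα
  exact ⟨β, hβ⟩

end MinimalExponents

section Taylor

/-- The exponents of degree at most `N`; this is the index set in `IsTaylorSeriesAt`. -/
def exponentsOfDegreeLE (n N : ℕ) : Finset (Fin n → ℕ) :=
  (Fintype.piFinset fun _ : Fin n => Finset.range (N + 1)).filter fun α => ∑ i, α i ≤ N

lemma mem_exponentsOfDegreeLE {N : ℕ} {α : Fin n → ℕ} :
    α ∈ exponentsOfDegreeLE n N ↔ ∑ i, α i ≤ N := by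
  simp only [exponentsOfDegreeLE, Finset.mem_filter, Fintype.mem_piFinset, Finset.mem_range,
    Nat.lt_succ_iff, and_iff_right_iff_imp]
  exact fun h i => (Finset.single_le_sum (fun _ _ => Nat.zero_le _) (Finset.mem_univ i)).trans h

/-- The Taylor polynomial of order `N` of the series `c`. -/
def taylorPoly (c : (Fin n → ℕ) → ℝ) (N : ℕ) (x : Fin n → ℝ) : ℝ :=
  ∑ α ∈ exponentsOfDegreeLE n N, c α * monomial α x

variable {f : (Fin n → ℝ) → ℝ} {c : (Fin n → ℕ) → ℝ}

lemma contDiff_taylorPoly (c : (Fin n → ℕ) → ℝ) (N : ℕ) {k : WithTop ℕ∞} :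
    ContDiff ℝ k (taylorPoly c N) :=
  ContDiff.sum fun α _ => contDiff_const.mul (contDiff_monomial α)

lemma taylorPoly_zero (c : (Fin n → ℕ) → ℝ) (N : ℕ) : taylorPoly c N 0 = c 0 := by
  rw [taylorPoly, Finset.sum_eq_single 0]
  · rw [monomial_zero_exponent, mul_one]
  · intro α _ hα
    rw [monomial_apply_zero hα, mul_zero]
  · simp [mem_exponentsOfDegreeLE]

lemma fderiv_taylorPoly_one_single (c : (Fin n → ℕ) → ℝ) (i : Fin n) :
    fderiv ℝ (taylorPoly c 1) 0 (Pi.single i 1) = c (Pi.single i 1) := by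
  have hderiv : HasFDerivAt (taylorPoly c 1) _ (0 : Fin n → ℝ) :=
    HasFDerivAt.fun_sum fun α _ => (hasFDerivAt_monomial α 0).const_mul (c α)
  have hterm : ∀ α : Fin n → ℕ,
      (∑ j, (α j * monomial (α - Pi.single j 1) 0) •
        (ContinuousLinearMap.proj j : (Fin n → ℝ) →L[ℝ] ℝ)) (Pi.single i 1) =
      α i * monomial (α - Pi.single i 1) 0 := fun α => by
    simp [_root_.sum_apply, Pi.single_apply]
  rw [hderiv.fderiv]
  simp only [_root_.sum_apply, _root_.smul_apply, hterm, smul_eq_mul]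
  rw [Finset.sum_eq_single (Pi.single i 1)]
  · simp [monomial_zero_exponent]
  · intro α _ hne
    rcases Nat.eq_zero_or_pos (α i) with hzero | hpos
    · simp [hzero]
    · rw [monomial_apply_zero, mul_zero, mul_zero]
      intro hle
      refine hne (le_antisymm (tsub_eq_zero_iff_le.mp hle) fun j => ?_)
      rcases eq_or_ne j i with rfl | hj
      · simpa using Nat.one_le_iff_ne_zero.mpr hpos.ne'
      · simp [hj]
  · simp [mem_exponentsOfDegreeLE]

lemma IsTaylorSeriesAt.isLittleO_sub_taylorPoly (h : IsTaylorSeriesAt f c) (N : ℕ) :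
    (f - taylorPoly c N) =o[𝓝 0] fun x => ‖x‖ ^ N :=
  h N

lemma IsTaylorSeriesAt.coeff_zero (h : IsTaylorSeriesAt f c) : c 0 = f 0 := by
  have hrem : (f - taylorPoly c 1) =O[𝓝 0] fun x => ‖x - 0‖ ^ 1 := by
    simpa only [sub_zero] using (h.isLittleO_sub_taylorPoly 1).isBigO
  have hzero := hrem.eq_zero_of_norm_pow one_ne_zero
  rw [Pi.sub_apply, taylorPoly_zero, sub_eq_zero] at hzero
  exact hzero.symm

lemma IsTaylorSeriesAt.coeff_single (h : IsTaylorSeriesAt f c) (i : Fin n) :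
    c (Pi.single i 1) = fderiv ℝ f 0 (Pi.single i 1) := by
  have hrem : HasFDerivAt (f - taylorPoly c 1) (0 : (Fin n → ℝ) →L[ℝ] ℝ) 0 := by
    rw [hasFDerivAt_iff_isLittleO]
    refine Asymptotics.IsLittleO.of_norm_right ?_
    simpa [taylorPoly_zero, h.coeff_zero] using! h.isLittleO_sub_taylorPoly 1
  have hpoly := (contDiff_taylorPoly c 1).differentiable one_ne_zero 0 |>.hasFDerivAt
  have hf : HasFDerivAt f (fderiv ℝ (taylorPoly c 1) 0) 0 := by
    simpa using hrem.add hpoly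
  rw [hf.fderiv, fderiv_taylorPoly_one_single]

end Taylor

section LocalExpansion

variable {f : (Fin n → ℝ) → ℝ} {c : (Fin n → ℕ) → ℝ}

lemma abs_monomial_le_abs_monomial {α β : Fin n → ℕ} (h : β ≤ α) {x : Fin n → ℝ} (hx : ‖x‖ ≤ 1) :
    |monomial α x| ≤ |monomial β x| := by
  rw [monomial, monomial, Finset.abs_prod, Finset.abs_prod]
  refine Finset.prod_le_prod (fun i _ => abs_nonneg _) fun i _ => ?_
  rw [abs_pow, abs_pow]
  exact pow_le_pow_of_le_one (abs_nonneg _) ((norm_le_pi_norm x i).trans hx) (h i)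

lemma exists_coeff_single_ne_zero {i : Fin n}
    (h : ∃ x ∈ newtonPolyhedron c, ∀ j, j ≠ i → x j = 0) : ∃ p : ℕ, c (Pi.single i p) ≠ 0 := by
  by_contra! hzero
  obtain ⟨x, hx, hx0⟩ := h
  have hsub : newtonPolyhedron c ⊆ {x | 1 ≤ ∑ j ∈ Finset.univ.erase i, x j} := by
    refine convexHull_min ?_ (convex_halfSpace_ge (IsLinearMap.mk (fun x y => ?_) fun a x => ?_) 1)
    · rintro y ⟨α, hα, hαy⟩
      obtain ⟨j, hji, hj⟩ : ∃ j, j ≠ i ∧ α j ≠ 0 := by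
        by_contra! hsupp
        refine hα ?_
        rw [← hzero (α i)]
        congr 1
        ext j
        rcases eq_or_ne j i with rfl | hj
        · simp
        · simp [hj, hsupp j hj]
      calc (1 : ℝ) ≤ α j := mod_cast Nat.one_le_iff_ne_zero.mpr hj
        _ ≤ y j := hαy j
        _ ≤ ∑ j ∈ Finset.univ.erase i, y j :=
          Finset.single_le_sum (fun k _ => (Nat.cast_nonneg (α k)).trans (hαy k))
            (Finset.mem_erase.mpr ⟨hji, Finset.mem_univ j⟩)
    · simp [Finset.sum_add_distrib]
    · simp only [Pi.smul_apply, smul_eq_mul, Finset.mul_sum]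
  have hone : 1 ≤ ∑ j ∈ Finset.univ.erase i, x j := hsub hx
  rw [Finset.sum_eq_zero fun j hj => hx0 j (Finset.ne_of_mem_erase hj)] at hone
  exact absurd hone (by norm_num)

lemma exists_norm_pow_le_sum_abs_monomial (hn : 0 < n)
    (h : ∀ i : Fin n, ∃ p : ℕ, c (Pi.single i p) ≠ 0) :
    ∃ N : ℕ, ∀ x : Fin n → ℝ, ‖x‖ ≤ 1 → ‖x‖ ^ N ≤ ∑ β ∈ minExponents c, |monomial β x| := by
  choose p hp using h
  refine ⟨∑ i, p i, fun x hx => ?_⟩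
  obtain ⟨i, hi⟩ : ∃ i, ‖x i‖ = ‖x‖ := by
    have : Nonempty (Fin n) := ⟨⟨0, hn⟩⟩
    obtain ⟨i, hi⟩ := Finite.exists_max fun i => ‖x i‖
    exact ⟨i, (norm_le_pi_norm x i).antisymm ((pi_norm_le_iff_of_nonneg (norm_nonneg _)).mpr hi)⟩
  obtain ⟨β, hβ, hle⟩ := exists_minExponents_le (hp i)
  calc ‖x‖ ^ ∑ i, p i ≤ ‖x‖ ^ p i :=
        pow_le_pow_of_le_one (norm_nonneg _) hx
          (Finset.single_le_sum (fun _ _ => Nat.zero_le _) (Finset.mem_univ i))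
    _ = |monomial (Pi.single i (p i)) x| := by
        rw [monomial_single, abs_pow, ← Real.norm_eq_abs, hi]
    _ ≤ |monomial β x| := abs_monomial_le_abs_monomial hle hx
    _ ≤ ∑ β ∈ minExponents c, |monomial β x| :=
        Finset.single_le_sum (f := fun β => |monomial β x|) (fun _ _ => abs_nonneg _) hβ

lemma HasTaylorSeriesAtOrigin.exists_summable (h : HasTaylorSeriesAtOrigin f c) :
    ∃ r > 0, Summable fun γ => |c γ| * r ^ ∑ i, γ i := by
  obtain ⟨r, hr, hball⟩ := Metric.eventually_nhds_iff_ball.mp h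
  refine ⟨r / 2, half_pos hr, ?_⟩
  have hmem : (fun _ => r / 2 : Fin n → ℝ) ∈ Metric.ball 0 r := by
    rw [mem_ball_zero_iff, pi_norm_lt_iff hr]
    intro _
    rw [Real.norm_of_nonneg (half_pos hr).le]
    exact half_lt_self hr
  refine (hball _ hmem).summable.abs.congr fun γ => ?_
  rw [abs_mul, monomial, Finset.prod_pow_eq_pow_sum, abs_of_pos (pow_pos (half_pos hr) _)]

/-- `f` is expanded over its minimal monomials to order `a`: up to a remainder whose `a`-th
derivative is negligible against these monomials, `f` is a combination of them with smooth
coefficients `h`. -/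
structure IsMinimalExpansion (f : (Fin n → ℝ) → ℝ) (c : (Fin n → ℕ) → ℝ) (a : ℕ)
    (h : (Fin n → ℕ) → (Fin n → ℝ) → ℝ) (R : (Fin n → ℝ) → ℝ) : Prop where
  contDiffAt : ∀ β ∈ minExponents c, ContDiffAt ℝ (⊤ : ℕ∞) (h β) 0
  apply_zero : ∀ β ∈ minExponents c, h β 0 = c β
  contDiffAt_remainder : ContDiffAt ℝ (⊤ : ℕ∞) R 0
  isLittleO_remainder :
    iteratedFDeriv ℝ a R =o[𝓝 0] fun x => ∑ β ∈ minExponents c, |monomial β x|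
  eventually_eq : ∀ᶠ x in 𝓝 0, f x = ∑ β ∈ minExponents c, monomial β x * h β x + R x

lemma HasTaylorSeriesAtOrigin.exists_isMinimalExpansion (hA : HasTaylorSeriesAtOrigin f c)
    (a : ℕ) : ∃ h, IsMinimalExpansion f c a h fun _ => 0 := by
  obtain ⟨r, hr, hsum⟩ := hA.exists_summable
  obtain ⟨h, hh, hhas⟩ := exists_hasSum_sum_monomial_mul (isAntichain_minExponents c) hr hsum
    fun α hα => exists_minExponents_le hα
  refine ⟨h, fun β hβ => (hh β hβ).1, fun β hβ => (hh β hβ).2, contDiffAt_const, ?_, ?_⟩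
  · rw [iteratedFDeriv_fun_zero]
    exact Asymptotics.isLittleO_zero _ _
  · filter_upwards [hA, hhas] with x hfx hx
    rw [add_zero, hfx.unique hx]

lemma exists_taylorPoly_eq_sum_monomial_mul (c : (Fin n → ℕ) → ℝ) {N : ℕ}
    (hN : ∀ β ∈ minExponents c, ∑ i, β i ≤ N) :
    ∃ h : (Fin n → ℕ) → (Fin n → ℝ) → ℝ,
      (∀ β ∈ minExponents c, ContDiffAt ℝ (⊤ : ℕ∞) (h β) 0 ∧ h β 0 = c β) ∧
      ∀ᶠ x in 𝓝 0, taylorPoly c N x = ∑ β ∈ minExponents c, monomial β x * h β x := by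
  classical
  let d : (Fin n → ℕ) → ℝ := fun α => if α ∈ exponentsOfDegreeLE n N then c α else 0
  have hd : ∀ α ∉ exponentsOfDegreeLE n N, d α = 0 := fun α hα => if_neg hα
  have hsum : Summable fun γ => |d γ| * (1 : ℝ) ^ ∑ i, γ i :=
    summable_of_ne_finset_zero fun α hα => by rw [hd α hα, abs_zero, zero_mul]
  obtain ⟨h, hh, hhas⟩ := exists_hasSum_sum_monomial_mul (isAntichain_minExponents c) zero_lt_one
    hsum fun α hα => exists_minExponents_le (ite_ne_right_iff.mp hα).2
  refine ⟨h, fun β hβ => ⟨(hh β hβ).1, (hh β hβ).2.trans ?_⟩, ?_⟩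
  · exact if_pos (mem_exponentsOfDegreeLE.mpr (hN β hβ))
  · filter_upwards [hhas] with x hx
    have hfin : HasSum (fun α => d α * monomial α x)
        (∑ α ∈ exponentsOfDegreeLE n N, d α * monomial α x) :=
      hasSum_sum_of_ne_finset_zero fun α hα => by rw [hd α hα, zero_mul]
    rw [← hfin.unique hx]
    exact Finset.sum_congr rfl fun α hα => by simp only [d, if_pos hα]

lemma IsTaylorSeriesAt.exists_isMinimalExpansion (hn : 0 < n) (hT : IsTaylorSeriesAt f c)
    (hf : ContDiffAt ℝ (⊤ : ℕ∞) f 0)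
    (haxis : ∀ i : Fin n, ∃ x ∈ newtonPolyhedron c, ∀ j, j ≠ i → x j = 0) (a : ℕ) :
    ∃ h R, IsMinimalExpansion f c a h R := by
  obtain ⟨N, hN⟩ := exists_norm_pow_le_sum_abs_monomial hn fun i =>
    exists_coeff_single_ne_zero (haxis i)
  let Q := ∑ β ∈ minExponents c, ∑ i, β i
  let M := 2 ^ a * (N + Q + 1)
  have hM : N + Q + 1 ≤ M := Nat.le_mul_of_pos_left _ (by positivity)
  have hdeg : ∀ β ∈ minExponents c, ∑ i, β i ≤ M := fun β hβ =>
    (Finset.single_le_sum (f := fun β : Fin n → ℕ => ∑ i, β i) (fun _ _ => Nat.zero_le _)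
      hβ).trans (by lia)
  obtain ⟨h, hh, heq⟩ := exists_taylorPoly_eq_sum_monomial_mul c hdeg
  have hR : ContDiffAt ℝ (⊤ : ℕ∞) (f - taylorPoly c M) 0 :=
    hf.sub (contDiff_taylorPoly c M).contDiffAt
  have hdecay : iteratedFDeriv ℝ a (f - taylorPoly c M) =O[𝓝 0] fun x => ‖x‖ ^ (N + Q + 1) :=
    isBigO_iteratedFDeriv_of_isBigO_norm_pow (by lia)
      (hR.of_le (by exact_mod_cast le_top)) (hT.isLittleO_sub_taylorPoly M).isBigO
  refine ⟨h, f - taylorPoly c M, fun β hβ => (hh β hβ).1, fun β hβ => (hh β hβ).2, hR, ?_, ?_⟩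
  · have hpow : (fun x : Fin n → ℝ => ‖x‖ ^ (N + Q + 1)) =o[𝓝 0] fun x => ‖x‖ ^ N :=
      Asymptotics.isLittleO_norm_pow_norm_pow (by lia)
    refine hdecay.trans_isLittleO (hpow.trans_isBigO (Asymptotics.IsBigO.of_bound 1 ?_))
    filter_upwards [Metric.closedBall_mem_nhds 0 one_pos] with x hx
    rw [one_mul, norm_pow, norm_norm, Real.norm_of_nonneg (by positivity)]
    exact hN x (mem_closedBall_zero_iff.mp hx)
  · filter_upwards [heq] with x hx
    rw [← hx, Pi.sub_apply, add_sub_cancel]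

end LocalExpansion

section Convergence

variable {f R : (Fin n → ℝ) → ℝ} {c : (Fin n → ℕ) → ℝ} {a : ℕ}
  {h : (Fin n → ℕ) → (Fin n → ℝ) → ℝ} {ι : Type*} {l : Filter ι} {s : ι → Fin n → ℝ}
  {μ : ι → ℝ} {r : (Fin n → ℕ) → ℝ}

lemma contDiffAt_sum_mul_monomial_mul {D : Finset (Fin n → ℕ)}
    (hh : ∀ β ∈ D, ContDiffAt ℝ (⊤ : ℕ∞) (h β) 0) (ρ : D → ℝ) (u : Fin n → ℝ) :
    ContDiffAt ℝ (⊤ : ℕ∞) (fun p : ((D → ℝ) × (Fin n → ℝ)) × (Fin n → ℝ) =>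
      ∑ β : D, p.1.1 β * (monomial β p.2 * h β (p.1.2 * p.2))) ((ρ, 0), u) := by
  refine ContDiffAt.sum fun β _ => ContDiffAt.mul ?_ (ContDiffAt.mul ?_ ?_)
  · exact ((contDiff_apply ℝ ℝ β).comp (contDiff_fst.comp contDiff_fst)).contDiffAt
  · exact ((contDiff_monomial β.1).comp contDiff_snd).contDiffAt
  · refine ContDiffAt.comp _ ?_ ((contDiff_snd.comp contDiff_fst).mul contDiff_snd).contDiffAt
    simpa using hh β β.2

lemma tendsto_mul_prod_nhds_zero (hs : Tendsto s l (𝓝 0)) (u₀ : Fin n → ℝ) :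
    Tendsto (fun q : ι × (Fin n → ℝ) => s q.1 * q.2) (l ×ˢ 𝓝 u₀) (𝓝 0) := by
  simpa using (hs.comp tendsto_fst).mul (tendsto_snd (f := l) (g := 𝓝 u₀))

lemma eventually_contDiffAt_rescale {k : ℕ} (hf : ContDiffAt ℝ k f 0) (hs : Tendsto s l (𝓝 0))
    (μ : ι → ℝ) (u₀ : Fin n → ℝ) :
    ∀ᶠ q : ι × (Fin n → ℝ) in l ×ˢ 𝓝 u₀, ContDiffAt ℝ k (rescale f (μ q.1) (s q.1)) q.2 := by
  filter_upwards [(tendsto_mul_prod_nhds_zero hs u₀).eventually (hf.eventually (by simp))]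
    with q hq
  exact contDiffAt_const.mul (ContDiffAt.comp _ hq (contDiff_const.mul contDiff_id).contDiffAt)

lemma isBigO_sum_abs_monomial_mul
    (hr : ∀ β ∈ minExponents c, Tendsto (fun k => monomial β (s k) / μ k) l (𝓝 (r β)))
    (hμ : ∀ k, μ k ≠ 0) (u₀ : Fin n → ℝ) :
    (fun q : ι × (Fin n → ℝ) => ∑ β ∈ minExponents c, |monomial β (s q.1 * q.2)|)
      =O[l ×ˢ 𝓝 u₀] fun q => μ q.1 := by
  refine Asymptotics.IsBigO.fun_sum fun β hβ => Asymptotics.IsBigO.abs_left ?_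
  have hlim : Tendsto (fun q : ι × (Fin n → ℝ) => monomial β (s q.1) / μ q.1 * monomial β q.2)
      (l ×ˢ 𝓝 u₀) (𝓝 (r β * monomial β u₀)) :=
    ((hr β hβ).comp tendsto_fst).mul
      (((contDiff_monomial β (k := 0)).continuous.tendsto u₀).comp tendsto_snd)
  refine ((hlim.isBigO_one ℝ).mul (Asymptotics.isBigO_refl (fun q => μ q.1) _)).congr
    (fun q => ?_) fun q => one_mul _
  rw [monomial_mul]
  field_simp [hμ q.1]

lemma IsMinimalExpansion.tendsto_iteratedFDeriv_rescale_remainder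
    (hexp : IsMinimalExpansion f c a h R) (hs : Tendsto s l (𝓝 0)) (hs0 : ∀ k i, s k i ≠ 0)
    (hμ : ∀ k, μ k ≠ 0)
    (hr : ∀ β ∈ minExponents c, Tendsto (fun k => monomial β (s k) / μ k) l (𝓝 (r β)))
    (u₀ : Fin n → ℝ) :
    Tendsto (fun q : ι × (Fin n → ℝ) => iteratedFDeriv ℝ a (rescale R (μ q.1) (s q.1)) q.2)
      (l ×ˢ 𝓝 u₀) (𝓝 0) := by
  have hderiv : (fun q : ι × (Fin n → ℝ) => iteratedFDeriv ℝ a R (s q.1 * q.2))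
      =o[l ×ˢ 𝓝 u₀] fun q => μ q.1 :=
    (hexp.isLittleO_remainder.comp_tendsto
      (tendsto_mul_prod_nhds_zero hs u₀)).trans_isBigO (isBigO_sum_abs_monomial_mul hr hμ u₀)
  have hlim : Tendsto (fun q : ι × (Fin n → ℝ) =>
      |μ q.1|⁻¹ * ‖iteratedFDeriv ℝ a R (s q.1 * q.2)‖ * ‖s q.1‖ ^ a) (l ×ˢ 𝓝 u₀) (𝓝 0) := by
    have hquot := hderiv.norm_norm.tendsto_div_nhds_zero
    have hpow := (hs.norm.pow a).comp (tendsto_fst (f := l) (g := 𝓝 u₀))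
    simpa [div_eq_inv_mul] using hquot.mul hpow
  exact squeeze_zero_norm (fun q => norm_iteratedFDeriv_rescale_le (hμ q.1) (hs0 q.1) q.2 a) hlim

lemma IsMinimalExpansion.eventually_rescale_eq (hexp : IsMinimalExpansion f c a h R)
    (hs : Tendsto s l (𝓝 0)) (μ : ι → ℝ) (u₀ : Fin n → ℝ) :
    ∀ᶠ q : ι × (Fin n → ℝ) in l ×ˢ 𝓝 u₀, rescale f (μ q.1) (s q.1) =ᶠ[𝓝 q.2]
      (fun v => ∑ β : minExponents c,
        monomial β (s q.1) / μ q.1 * (monomial β v * h β (s q.1 * v))) +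
        rescale R (μ q.1) (s q.1) := by
  filter_upwards [(tendsto_mul_prod_nhds_zero hs u₀).eventually
    hexp.eventually_eq.eventually_nhds] with q hq
  have hcont : Tendsto (fun v => s q.1 * v) (𝓝 q.2) (𝓝 (s q.1 * q.2)) :=
    tendsto_const_nhds.mul tendsto_id
  filter_upwards [hcont.eventually hq] with v hv
  simp only [rescale, Pi.add_apply, Finset.sum_coe_sort (minExponents c) fun β =>
    monomial β (s q.1) / μ q.1 * (monomial β v * h β (s q.1 * v))]
  rw [hv, mul_add, Finset.mul_sum]
  congr 1
  refine Finset.sum_congr rfl fun β _ => ?_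
  rw [monomial_mul]
  ring

lemma IsMinimalExpansion.tendsto_iteratedFDeriv_rescale
    (hexp : IsMinimalExpansion f c a h R) (hs : Tendsto s l (𝓝 0)) (hs0 : ∀ k i, s k i ≠ 0)
    (hμ : ∀ k, μ k ≠ 0)
    (hr : ∀ β ∈ minExponents c, Tendsto (fun k => monomial β (s k) / μ k) l (𝓝 (r β)))
    (u₀ : Fin n → ℝ) :
    Tendsto (fun q : ι × (Fin n → ℝ) => iteratedFDeriv ℝ a (rescale f (μ q.1) (s q.1)) q.2)
      (l ×ˢ 𝓝 u₀) (𝓝 (iteratedFDeriv ℝ a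
        (fun v => ∑ β ∈ minExponents c, r β * (c β * monomial β v)) u₀)) := by
  let Φ : ((minExponents c → ℝ) × (Fin n → ℝ)) × (Fin n → ℝ) → ℝ := fun p =>
    ∑ β : minExponents c, p.1.1 β * (monomial β p.2 * h β (p.1.2 * p.2))
  let ρ : ι → (minExponents c → ℝ) × (Fin n → ℝ) := fun k => (fun β => monomial β (s k) / μ k, s k)
  have hΦ : ContDiffAt ℝ a Φ ((fun β => r β, 0), u₀) :=
    (contDiffAt_sum_mul_monomial_mul hexp.contDiffAt _ u₀).of_le (by exact_mod_cast le_top)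
  have hρ : Tendsto ρ l (𝓝 (fun β => r β, 0)) :=
    (tendsto_pi_nhds.mpr fun β : minExponents c => hr β β.2).prodMk_nhds hs
  have hlimit : (fun v => Φ ((fun β => r β, 0), v)) =
      fun v => ∑ β ∈ minExponents c, r β * (c β * monomial β v) := by
    ext v
    rw [← Finset.sum_coe_sort]
    refine Finset.sum_congr rfl fun β _ => ?_
    rw [zero_mul, hexp.apply_zero β β.2, mul_comm (c β)]
  have hpair : Tendsto (fun q : ι × (Fin n → ℝ) => (ρ q.1, q.2)) (l ×ˢ 𝓝 u₀)
      (𝓝 ((fun β => r β, 0), u₀)) := by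
    rw [nhds_prod_eq]
    exact hρ.prodMap tendsto_id
  have hmain := tendsto_iteratedFDeriv_of_contDiffAt hΦ hρ
  have hrem := hexp.tendsto_iteratedFDeriv_rescale_remainder hs hs0 hμ hr u₀
  rw [hlimit] at hmain
  refine (Tendsto.congr' ?_ (hmain.add hrem)).trans_eq (by rw [add_zero])
  filter_upwards [hexp.eventually_rescale_eq hs μ u₀, hpair.eventually (hΦ.eventually (by simp)),
    eventually_contDiffAt_rescale (k := a) (hexp.contDiffAt_remainder.of_le
      (by exact_mod_cast le_top)) hs μ u₀] with q hq hΦq hRq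
  have hΦv : ContDiffAt ℝ a (fun v => Φ (ρ q.1, v)) q.2 :=
    hΦq.comp q.2 (contDiff_const.prodMk contDiff_id).contDiffAt
  rw [(hq.iteratedFDeriv ℝ a).eq_of_nhds, iteratedFDeriv_add_apply hΦv hRq]

end Convergence

section NewtonPolyhedron

/-- The exponent `α` as a point of the space in which the Newton polyhedron lives. -/
def exponentPoint (α : Fin n → ℕ) : Fin n → ℝ := fun i => α i

lemma exponentPoint_injective : Function.Injective (exponentPoint : (Fin n → ℕ) → Fin n → ℝ) :=
  fun _ _ h => funext fun i => Nat.cast_injective (congrFun h i)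

lemma exponentPoint_strictMono : StrictMono (exponentPoint : (Fin n → ℕ) → Fin n → ℝ) :=
  Monotone.strictMono_of_injective (fun _ _ h i => Nat.cast_le.mpr (h i)) exponentPoint_injective

lemma dotProduct_lt_dotProduct_of_pos {w x y : Fin n → ℝ} (hw : ∀ i, 0 < w i) (hxy : x < y) :
    w ⬝ᵥ x < w ⬝ᵥ y := by
  obtain ⟨hle, i, hi⟩ := Pi.lt_def.mp hxy
  exact Finset.sum_lt_sum (fun j _ => mul_le_mul_of_nonneg_left (hle j) (hw j).le)
    ⟨i, Finset.mem_univ i, mul_lt_mul_of_pos_left hi (hw i)⟩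

lemma convex_setOf_lt_union {E : Type*} [AddCommGroup E] [Module ℝ E] {K : Set E}
    (hK : Convex ℝ K) (ℓ : E →ₗ[ℝ] ℝ) {d : ℝ} (hℓ : ∀ x ∈ K, ℓ x = d) :
    Convex ℝ ({x | d < ℓ x} ∪ K) := by
  rw [convex_iff_forall_pos]
  have hd : ∀ x ∈ {x | d < ℓ x} ∪ K, d ≤ ℓ x := fun x hx =>
    hx.elim (fun h : d < ℓ x => h.le) fun h => (hℓ x h).ge
  intro x hx y hy a b ha hb hab
  by_cases hxy : x ∈ K ∧ y ∈ K
  · exact Or.inr (hK hxy.1 hxy.2 ha.le hb.le hab)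
  left
  have hd' : d = a * d + b * d := by rw [← add_mul, hab, one_mul]
  rw [mem_ofPred_eq, map_add, map_smul, map_smul, smul_eq_mul, smul_eq_mul, hd']
  rcases not_and_or.mp hxy with hxK | hyK
  · exact add_lt_add_of_lt_of_le (mul_lt_mul_of_pos_left (hx.resolve_right hxK) ha)
      (mul_le_mul_of_nonneg_left (hd y hy) hb.le)
  · exact add_lt_add_of_le_of_lt (mul_le_mul_of_nonneg_left (hd x hx) ha.le)
      (mul_lt_mul_of_pos_left (hy.resolve_right hyK) hb)

variable {c : (Fin n → ℕ) → ℝ} {α : Fin n → ℕ} {v w x : Fin n → ℝ}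

lemma mem_newtonPolyhedron_of_le (hα : c α ≠ 0) (hx : exponentPoint α ≤ x) :
    x ∈ newtonPolyhedron c :=
  subset_convexHull ℝ _ ⟨α, hα, hx⟩

lemma newtonVertices_subset_image_minExponents (c : (Fin n → ℕ) → ℝ) :
    newtonVertices c ⊆ exponentPoint '' (minExponents c : Set (Fin n → ℕ)) := by
  intro v hv
  obtain ⟨α, hα, hle⟩ := extremePoints_convexHull_subset hv
  obtain ⟨β, hβ, hβα⟩ := exists_minExponents_le hα
  have hβv : exponentPoint β ≤ v := (exponentPoint_strictMono.monotone hβα).trans hle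
  have hcβ : c β ≠ 0 := (mem_minExponents.mp hβ).prop
  -- `v` is the midpoint of `β` and of its reflection `2v - β`, which lies in the octant above `β`.
  refine ⟨β, hβ, (mem_extremePoints.mp hv).2 _ (mem_newtonPolyhedron_of_le hcβ le_rfl)
    ((2 : ℝ) • v - exponentPoint β) (mem_newtonPolyhedron_of_le hcβ fun i => ?_) ?_ |>.1⟩
  · have := hβv i
    simp only [Pi.sub_apply, Pi.smul_apply, smul_eq_mul]
    linarith
  · refine ⟨1 / 2, 1 / 2, by norm_num, by norm_num, by norm_num, ?_⟩
    module

lemma starFn_le_sum_abs_monomial (c : (Fin n → ℕ) → ℝ) (x : Fin n → ℝ) :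
    starFn c x ≤ ∑ β ∈ minExponents c, |monomial β x| := by
  have hV := newtonVertices_subset_image_minExponents c
  have hfin : (newtonVertices c).Finite := ((minExponents c).finite_toSet.image _).subset hV
  have hsub : hfin.toFinset ⊆ (minExponents c).image exponentPoint := by
    rw [← Finset.coe_subset, hfin.coe_toFinset, Finset.coe_image]
    exact hV
  calc starFn c x = ∑ v ∈ hfin.toFinset, ∏ i, |x i| ^ v i := by
        rw [← Finset.tsum_subtype', hfin.coe_toFinset]
        rfl
    _ ≤ ∑ v ∈ (minExponents c).image exponentPoint, ∏ i, |x i| ^ v i :=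
        Finset.sum_le_sum_of_subset_of_nonneg hsub fun v _ _ => by positivity
    _ = ∑ β ∈ minExponents c, |monomial β x| := by
        rw [Finset.sum_image exponentPoint_injective.injOn]
        simp [exponentPoint, monomial, Finset.abs_prod]

end NewtonPolyhedron

section InitialForms

variable {c : (Fin n → ℕ) → ℝ} {α β : Fin n → ℕ} {w x : Fin n → ℝ} {D : Finset (Fin n → ℕ)}

/-- The exponents in `D` of least `w`-weighted degree. -/
def lowestExponents (D : Finset (Fin n → ℕ)) (w : Fin n → ℝ) : Finset (Fin n → ℕ) :=
  D.filter fun α => ∀ β ∈ D, w ⬝ᵥ exponentPoint α ≤ w ⬝ᵥ exponentPoint β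

lemma mem_lowestExponents : α ∈ lowestExponents D w ↔
    α ∈ D ∧ ∀ β ∈ D, w ⬝ᵥ exponentPoint α ≤ w ⬝ᵥ exponentPoint β :=
  Finset.mem_filter

lemma lowestExponents_nonempty (hD : D.Nonempty) (w : Fin n → ℝ) :
    (lowestExponents D w).Nonempty :=
  let ⟨α, hα, hmin⟩ := D.exists_min_image (fun α => w ⬝ᵥ exponentPoint α) hD
  ⟨α, mem_lowestExponents.mpr ⟨hα, hmin⟩⟩

lemma dotProduct_exponentPoint_eq (hα : α ∈ lowestExponents D w) (hβ : β ∈ lowestExponents D w) :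
    w ⬝ᵥ exponentPoint β = w ⬝ᵥ exponentPoint α :=
  le_antisymm ((mem_lowestExponents.mp hβ).2 α (mem_lowestExponents.mp hα).1)
    ((mem_lowestExponents.mp hα).2 β (mem_lowestExponents.mp hβ).1)

lemma dotProduct_exponentPoint_lt (hα : α ∈ lowestExponents D w) (hβ : β ∈ D)
    (hβw : β ∉ lowestExponents D w) : w ⬝ᵥ exponentPoint α < w ⬝ᵥ exponentPoint β := by
  refine lt_of_le_of_ne ((mem_lowestExponents.mp hα).2 β hβ) fun h => hβw ?_
  exact mem_lowestExponents.mpr ⟨hβ, h ▸ (mem_lowestExponents.mp hα).2⟩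

/-- The face of the Newton polyhedron on which a functional `w` with positive entries is least. -/
def initialFace (c : (Fin n → ℕ) → ℝ) (w : Fin n → ℝ) : Set (Fin n → ℝ) :=
  convexHull ℝ (exponentPoint '' (lowestExponents (minExponents c) w : Set (Fin n → ℕ)))

/-- The `w`-initial form of the power series with coefficients `c`. Only minimal exponents occur,
since a functional with positive entries is not minimized by any other exponent. -/
def initialForm (c : (Fin n → ℕ) → ℝ) (w x : Fin n → ℝ) : ℝ :=
  ∑ α ∈ lowestExponents (minExponents c) w, c α * monomial α x

lemma contDiff_initialForm (c : (Fin n → ℕ) → ℝ) (w : Fin n → ℝ) {k : WithTop ℕ∞} :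
    ContDiff ℝ k (initialForm c w) :=
  ContDiff.sum fun α _ => contDiff_const.mul (contDiff_monomial α)

lemma initialFace_subset_newtonPolyhedron : initialFace c w ⊆ newtonPolyhedron c := by
  refine convexHull_mono ?_
  rintro _ ⟨α, hα, rfl⟩
  exact ⟨α, (mem_minExponents.mp (mem_lowestExponents.mp hα).1).prop, fun i => le_rfl⟩

lemma dotProduct_eq_of_mem_initialFace (hα : α ∈ lowestExponents (minExponents c) w)
    (hx : x ∈ initialFace c w) : w ⬝ᵥ x = w ⬝ᵥ exponentPoint α := by
  have hsub : initialFace c w ⊆ {x | w ⬝ᵥ x = w ⬝ᵥ exponentPoint α} := by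
    refine convexHull_min ?_ (convex_hyperplane (dotProductBilin ℝ ℝ w).isLinear _)
    rintro _ ⟨β, hβ, rfl⟩
    exact dotProduct_exponentPoint_eq hα hβ
  exact hsub hx

lemma dotProduct_lt_or_mem_initialFace (hw : ∀ i, 0 < w i)
    (hα : α ∈ lowestExponents (minExponents c) w) (hx : x ∈ newtonPolyhedron c) :
    w ⬝ᵥ exponentPoint α < w ⬝ᵥ x ∨ x ∈ initialFace c w := by
  refine convexHull_min ?_ (convex_setOf_lt_union (convex_convexHull ℝ _) (dotProductBilin ℝ ℝ w)
    fun y => dotProduct_eq_of_mem_initialFace hα) hx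
  rintro y ⟨γ, hγ, hγy⟩
  obtain ⟨β, hβ, hβγ⟩ := exists_minExponents_le hγ
  have hβy : exponentPoint β ≤ y := (exponentPoint_strictMono.monotone hβγ).trans hγy
  have hαβ := (mem_lowestExponents.mp hα).2 β hβ
  rcases hβy.lt_or_eq with hlt | rfl
  · exact Or.inl (hαβ.trans_lt (dotProduct_lt_dotProduct_of_pos hw hlt))
  by_cases hβw : β ∈ lowestExponents (minExponents c) w
  · exact Or.inr (subset_convexHull ℝ _ ⟨β, hβw, rfl⟩)
  · exact Or.inl (dotProduct_exponentPoint_lt hα hβ hβw)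

lemma isExposed_initialFace (hw : ∀ i, 0 < w i)
    (hα : α ∈ lowestExponents (minExponents c) w) :
    IsExposed ℝ (newtonPolyhedron c) (initialFace c w) := by
  have hαF : exponentPoint α ∈ initialFace c w := subset_convexHull ℝ _ ⟨α, hα, rfl⟩
  refine fun _ => ⟨-LinearMap.toContinuousLinearMap (dotProductBilin ℝ ℝ w), ?_⟩
  ext x
  simp only [mem_ofPred_eq, neg_apply, neg_le_neg_iff,
    LinearMap.coe_toContinuousLinearMap', dotProductBilin_apply_apply]
  constructor
  · intro hx
    refine ⟨initialFace_subset_newtonPolyhedron hx, fun y hy => ?_⟩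
    rw [dotProduct_eq_of_mem_initialFace hα hx]
    rcases dotProduct_lt_or_mem_initialFace hw hα hy with hlt | hyF
    · exact hlt.le
    · exact (dotProduct_eq_of_mem_initialFace hα hyF).ge
  · rintro ⟨hx, hmin⟩
    have hle := hmin _ (initialFace_subset_newtonPolyhedron hαF)
    exact (dotProduct_lt_or_mem_initialFace hw hα hx).resolve_left hle.not_gt

lemma isCompactFace_initialFace (hc : c ≠ 0) (hw : ∀ i, 0 < w i) :
    IsCompactFace c (initialFace c w) := by
  obtain ⟨α, hα⟩ := lowestExponents_nonempty (minExponents_nonempty hc) w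
  refine ⟨isExposed_initialFace hw hα, ⟨_, subset_convexHull ℝ _ ⟨α, hα, rfl⟩⟩, ?_⟩
  exact ((Finset.finite_toSet _).image _).isCompact_convexHull (𝕜 := ℝ)

lemma mem_lowestExponents_of_mem_initialFace (hw : ∀ i, 0 < w i) (hβ : c β ≠ 0)
    (hβw : exponentPoint β ∈ initialFace c w) : β ∈ lowestExponents (minExponents c) w := by
  obtain ⟨γ, hγ, hγβ⟩ := exists_minExponents_le hβ
  obtain ⟨α, hα⟩ := lowestExponents_nonempty ⟨γ, hγ⟩ w
  have hβα := dotProduct_eq_of_mem_initialFace hα hβw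
  have hmin : ∀ δ ∈ minExponents c, w ⬝ᵥ exponentPoint β ≤ w ⬝ᵥ exponentPoint δ := fun δ hδ =>
    hβα.trans_le ((mem_lowestExponents.mp hα).2 δ hδ)
  rcases hγβ.lt_or_eq with hlt | rfl
  · exact absurd (hmin γ hγ) (dotProduct_lt_dotProduct_of_pos hw
      (exponentPoint_strictMono hlt)).not_ge
  · exact mem_lowestExponents.mpr ⟨hγ, hmin⟩

lemma facePoly_initialFace (hw : ∀ i, 0 < w i) :
    facePoly c (initialFace c w) = initialForm c w := by
  ext x
  let S := {α : Fin n → ℕ | exponentPoint α ∈ initialFace c w}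
  calc facePoly c (initialFace c w) x = ∑' α, S.indicator (fun α => c α * monomial α x) α :=
        tsum_subtype S fun α => c α * monomial α x
    _ = ∑ α ∈ lowestExponents (minExponents c) w,
          S.indicator (fun α => c α * monomial α x) α := by
        refine tsum_eq_sum fun α hα => ?_
        by_cases hαS : α ∈ S
        · rw [indicator_of_mem hαS, not_ne_iff.mp fun hcα =>
            hα (mem_lowestExponents_of_mem_initialFace hw hcα hαS), zero_mul]
        · exact indicator_of_notMem hαS _
    _ = initialForm c w x := Finset.sum_congr rfl fun α hα =>
        indicator_of_mem (show α ∈ S from subset_convexHull ℝ _ ⟨α, hα, rfl⟩) _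

end InitialForms

section NonvanishingDerivatives

variable {c : (Fin n → ℕ) → ℝ} {α : Fin n → ℕ} {w x : Fin n → ℝ} {o : ℕ}

lemma iteratedFDeriv_zero_eq_zero_iff {E F : Type*} [NormedAddCommGroup E] [NormedSpace ℝ E]
    [NormedAddCommGroup F] [NormedSpace ℝ F] {P : E → F} {x : E} :
    iteratedFDeriv ℝ 0 P x = 0 ↔ P x = 0 := by
  rw [← norm_eq_zero, norm_iteratedFDeriv_zero, norm_eq_zero]

lemma iteratedFDeriv_one_eq_zero_iff {E F : Type*} [NormedAddCommGroup E] [NormedSpace ℝ E]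
    [NormedAddCommGroup F] [NormedSpace ℝ F] {P : E → F} {x : E} :
    iteratedFDeriv ℝ 1 P x = 0 ↔ fderiv ℝ P x = 0 := by
  rw [← norm_eq_zero, norm_iteratedFDeriv_one, norm_eq_zero]

lemma exists_iteratedFDeriv_initialForm_ne_zero (hc : c ≠ 0) (ho : newtonOrder c = o)
    (hw : ∀ i, 0 < w i) (hx : ∀ i, x i ≠ 0) :
    ∃ a ≤ o, iteratedFDeriv ℝ a (initialForm c w) x ≠ 0 := by
  by_contra! hzero
  have horder : ((o + 1 : ℕ) : ℕ∞) ≤ newtonOrder c := by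
    refine le_sSup ⟨_, isCompactFace_initialFace hc hw, x, hx, ?_, le_sSup fun j hj => ?_⟩ <;>
      rw [facePoly_initialFace hw]
    · exact iteratedFDeriv_zero_eq_zero_iff.mp (hzero 0 o.zero_le)
    · exact hzero j (Nat.lt_succ_iff.mp (by exact_mod_cast hj))
  rw [ho] at horder
  exact (Nat.lt_succ_self o).not_ge (by exact_mod_cast horder)

lemma fderiv_monomial_mul_self (α : Fin n → ℕ) (w x : Fin n → ℝ) :
    fderiv ℝ (monomial α) x (w * x) = (w ⬝ᵥ exponentPoint α) * monomial α x := by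
  rw [(hasFDerivAt_monomial α x).fderiv, dotProduct, Finset.sum_mul]
  simp only [sum_apply, smul_apply,
    ContinuousLinearMap.proj_apply, Pi.mul_apply, smul_eq_mul, exponentPoint]
  refine Finset.sum_congr rfl fun i _ => ?_
  rcases Nat.eq_zero_or_pos (α i) with hi | hi
  · simp [hi]
  have hα : α - Pi.single i 1 + Pi.single i 1 = α := by
    ext j
    rcases eq_or_ne j i with rfl | hj
    · simpa using Nat.sub_add_cancel hi
    · simp [hj]
  have hmon : monomial α x = monomial (α - Pi.single i 1) x * x i := by
    rw [← pow_one (x i), ← monomial_single, ← monomial_add, hα]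
  rw [hmon]
  ring

lemma fderiv_initialForm_apply (c : (Fin n → ℕ) → ℝ) (w x v : Fin n → ℝ) :
    fderiv ℝ (initialForm c w) x v =
      ∑ α ∈ lowestExponents (minExponents c) w, c α * fderiv ℝ (monomial α) x v := by
  have h : HasFDerivAt (initialForm c w)
      (∑ α ∈ lowestExponents (minExponents c) w, c α • fderiv ℝ (monomial α) x) x :=
    HasFDerivAt.fun_sum fun α _ =>
      (hasFDerivAt_monomial α x).differentiableAt.hasFDerivAt.const_mul _
  simp [h.fderiv]

lemma fderiv_initialForm_mul_self (hα : α ∈ lowestExponents (minExponents c) w)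
    (x : Fin n → ℝ) :
    fderiv ℝ (initialForm c w) x (w * x) = (w ⬝ᵥ exponentPoint α) * initialForm c w x := by
  rw [fderiv_initialForm_apply, initialForm, Finset.mul_sum]
  refine Finset.sum_congr rfl fun β hβ => ?_
  rw [fderiv_monomial_mul_self, dotProduct_exponentPoint_eq hα hβ]
  ring

lemma fderiv_apply_eq_mul_of_fderiv_fderiv_eq_zero {E : Type*} [NormedAddCommGroup E]
    [NormedSpace ℝ E] {P : E → ℝ} {x : E} {L : E →L[ℝ] E} {d : ℝ} (hP : ContDiffAt ℝ 2 P x)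
    (heuler : ∀ᶠ y in 𝓝 x, fderiv ℝ P y (L y) = d * P y) (h2 : fderiv ℝ (fderiv ℝ P) x = 0)
    (v : E) : fderiv ℝ P x (L v) = d * fderiv ℝ P x v := by
  have hd1 : DifferentiableAt ℝ (fderiv ℝ P) x :=
    (hP.fderiv_right (m := 1) (by norm_num)).differentiableAt one_ne_zero
  have hleft := hd1.hasFDerivAt.clm_apply L.hasFDerivAt
  have hright := ((hP.differentiableAt two_ne_zero).hasFDerivAt.const_mul d).congr_of_eventuallyEq
    heuler
  simpa [h2] using congr($(hleft.unique hright) v)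

lemma apply_eq_zero_of_mem_lowestExponents {j : Fin n} (hw : ∀ i, 0 < w i)
    (hc1 : c (Pi.single j 1) = 0) (hα : α ∈ lowestExponents (minExponents c) w)
    (hj : w j = w ⬝ᵥ exponentPoint α) : α j = 0 := by
  by_contra hαj
  have hsingle : w ⬝ᵥ exponentPoint (Pi.single j 1) = w j := by
    simp [exponentPoint, dotProduct, Pi.single_apply]
  have hle : Pi.single j 1 ≤ α := fun i => by
    rcases eq_or_ne i j with rfl | hi
    · simpa using Nat.one_le_iff_ne_zero.mpr hαj
    · simp [hi]
  have hne : Pi.single j 1 ≠ α := by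
    rintro rfl
    exact (mem_minExponents.mp (mem_lowestExponents.mp hα).1).prop hc1
  have := dotProduct_lt_dotProduct_of_pos hw
    (exponentPoint_strictMono (hle.lt_of_ne hne))
  linarith

lemma fderiv_initialForm_eq_zero (hc : c ≠ 0) (hc1 : ∀ i, c (Pi.single i 1) = 0)
    (hw : ∀ i, 0 < w i) (h2 : iteratedFDeriv ℝ 2 (initialForm c w) x = 0) :
    fderiv ℝ (initialForm c w) x = 0 := by
  obtain ⟨α, hα⟩ := lowestExponents_nonempty (minExponents_nonempty hc) w
  have h2' : fderiv ℝ (fderiv ℝ (initialForm c w)) x = 0 := by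
    ext v z
    simpa [h2] using (iteratedFDeriv_two_apply (𝕜 := ℝ) (initialForm c w) x ![v, z]).symm
  have hscale := fderiv_apply_eq_mul_of_fderiv_fderiv_eq_zero
    (L := ContinuousLinearMap.mul ℝ (Fin n → ℝ) w) (contDiff_initialForm c w).contDiffAt
    (Eventually.of_forall (fderiv_initialForm_mul_self hα)) h2'
  refine ContinuousLinearMap.coe_injective ((Pi.basisFun ℝ (Fin n)).ext fun j => ?_)
  simp only [Pi.basisFun_apply, ContinuousLinearMap.coe_coe, ContinuousLinearMap.toLinearMap_zero,
    LinearMap.zero_apply]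
  rcases eq_or_ne (w j) (w ⬝ᵥ exponentPoint α) with hj | hj
  · rw [fderiv_initialForm_apply]
    refine Finset.sum_eq_zero fun β hβ => ?_
    have hβj : β j = 0 := apply_eq_zero_of_mem_lowestExponents hw (hc1 j) hβ
      (hj.trans (dotProduct_exponentPoint_eq hβ hα))
    rw [(hasFDerivAt_monomial β x).fderiv]
    simp [Pi.single_apply, hβj]
  · have hsingle : w * Pi.single j 1 = w j • Pi.single j (1 : ℝ) := by
      ext i
      rcases eq_or_ne i j with rfl | hi <;> simp [*]
    have h := hscale (Pi.single j 1)
    rw [ContinuousLinearMap.mul_apply', hsingle, map_smul, smul_eq_mul] at h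
    exact (mul_eq_mul_right_iff.mp h).resolve_left hj

lemma initialForm_eq_zero_of_fderiv_eq_zero (hc : c ≠ 0) (hc0 : c 0 = 0) (hw : ∀ i, 0 < w i)
    (h1 : fderiv ℝ (initialForm c w) x = 0) : initialForm c w x = 0 := by
  obtain ⟨α, hα⟩ := lowestExponents_nonempty (minExponents_nonempty hc) w
  have hα0 : 0 < α := by
    refine pos_iff_ne_zero.mpr ?_
    rintro rfl
    exact (mem_minExponents.mp (mem_lowestExponents.mp hα).1).prop hc0
  have hdeg : 0 < w ⬝ᵥ exponentPoint α := by
    have hzero : exponentPoint (0 : Fin n → ℕ) = 0 := funext fun _ => Nat.cast_zero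
    simpa [hzero] using dotProduct_lt_dotProduct_of_pos hw
      (exponentPoint_strictMono hα0)
  have heuler := fderiv_initialForm_mul_self hα x
  rw [h1, zero_apply, zero_eq_mul] at heuler
  exact heuler.resolve_left hdeg.ne'

lemma exists_two_le_iteratedFDeriv_initialForm_ne_zero (hc : c ≠ 0) (hc0 : c 0 = 0)
    (hc1 : ∀ i, c (Pi.single i 1) = 0) (ho : newtonOrder c = o)
    (hw : ∀ i, 0 < w i) (hx : ∀ i, x i ≠ 0) :
    ∃ a, 2 ≤ a ∧ a ≤ max 2 o ∧ iteratedFDeriv ℝ a (initialForm c w) x ≠ 0 := by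
  by_contra! hzero
  have h1 := fderiv_initialForm_eq_zero hc hc1 hw (hzero 2 le_rfl (le_max_left _ _))
  obtain ⟨a, hao, ha⟩ := exists_iteratedFDeriv_initialForm_ne_zero hc ho hw hx
  match a with
  | 0 => exact ha (iteratedFDeriv_zero_eq_zero_iff.mpr
      (initialForm_eq_zero_of_fderiv_eq_zero hc hc0 hw h1))
  | 1 => exact ha (iteratedFDeriv_one_eq_zero_iff.mpr h1)
  | a + 2 => exact ha (hzero _ (Nat.le_add_left 2 a) (hao.trans (le_max_right _ _)))

end NonvanishingDerivatives

section DyadicScales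

variable {ι : Type*} {D : Finset (Fin n → ℕ)}

/-- The side lengths `2 ^ (-kᵢ)` of the dyadic rectangles with index `k`. -/
def dyadicScale (k : Fin n → ℤ) : Fin n → ℝ := fun i => 2 ^ (-(k i))

/-- The dyadic order of magnitude of the monomial with exponent `α` at the scale `k`. -/
def dyadicOrder (α : Fin n → ℕ) (k : Fin n → ℤ) : ℤ := ∑ i, k i * α i

lemma dyadicScale_pos (k : Fin n → ℤ) (i : Fin n) : 0 < dyadicScale k i :=
  zpow_pos two_pos _

lemma tendsto_zpow_neg_atTop_zero : Tendsto (fun j : ℤ => (2 : ℝ) ^ (-j)) atTop (𝓝 0) := by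
  simp only [zpow_neg]
  refine Tendsto.inv_tendsto_atTop (tendsto_atTop_mono' _ ?_ tendsto_intCast_atTop_atTop)
  filter_upwards [eventually_ge_atTop (0 : ℤ)] with j hj
  lift j to ℕ using hj
  exact_mod_cast Nat.lt_two_pow_self.le

lemma tendsto_dyadicScale : Tendsto (dyadicScale (n := n)) atTop (𝓝 0) :=
  tendsto_pi_nhds.mpr fun i => tendsto_zpow_neg_atTop_zero.comp <| tendsto_atTop.mpr fun b =>
    (eventually_ge_atTop fun _ => b).mono fun _ hk => hk i

lemma prod_zpow_eq_zpow_sum {K ι : Type*} [Field K] {a : K} (ha : a ≠ 0) (s : Finset ι)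
    (e : ι → ℤ) : ∏ i ∈ s, a ^ e i = a ^ ∑ i ∈ s, e i := by
  classical
  induction s using Finset.induction_on with
  | empty => simp
  | insert i s hi ih => rw [Finset.prod_insert hi, Finset.sum_insert hi, zpow_add₀ ha, ih]

lemma monomial_dyadicScale (α : Fin n → ℕ) (k : Fin n → ℤ) :
    monomial α (dyadicScale k) = 2 ^ (-(dyadicOrder α k)) := by
  rw [dyadicOrder, ← Finset.sum_neg_distrib, ← prod_zpow_eq_zpow_sum two_ne_zero]
  refine Finset.prod_congr rfl fun i _ => ?_
  rw [dyadicScale, ← zpow_natCast, ← zpow_mul, neg_mul]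

lemma dotProduct_intCast_sub (k k' : Fin n → ℤ) (α : Fin n → ℕ) :
    (fun i => ((k' i - k i : ℤ) : ℝ)) ⬝ᵥ exponentPoint α =
      ((dyadicOrder α k' - dyadicOrder α k : ℤ) : ℝ) := by
  simp [dotProduct, dyadicOrder, exponentPoint, sub_mul]

lemma eventually_eventually_eq_or_tendsto_atTop {Z : Type*} [LinearOrder Z] [LocallyFiniteOrder Z]
    (l : Ultrafilter ι) {e : ι → Z} {b : Z} (hb : ∀ᶠ i in (l : Filter ι), b ≤ e i) :
    (∀ᶠ i in (l : Filter ι), ∀ᶠ j in (l : Filter ι), e j = e i) ∨ Tendsto e l atTop := by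
  refine or_iff_not_imp_right.mpr fun h => ?_
  obtain ⟨B, hB⟩ := not_forall.mp (mt tendsto_atTop.mpr h)
  have hmem : ∀ᶠ i in (l : Filter ι), ∃ E ∈ Set.Icc b B, e i = E := by
    filter_upwards [hb, Ultrafilter.eventually_not.mpr hB] with i hbi hBi
    exact ⟨e i, ⟨hbi, (not_le.mp hBi).le⟩, rfl⟩
  obtain ⟨E, -, hE⟩ := (Ultrafilter.eventually_exists_mem_iff (Set.finite_Icc b B)).mp hmem
  filter_upwards [hE] with i hi
  filter_upwards [hE] with j hj
  rw [hi, hj]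

lemma exists_forall_eventually_eq_or_lt {κ Z : Type*} [LinearOrder Z] [LocallyFiniteOrder Z]
    [NoMaxOrder Z] (l : Ultrafilter ι) {D : Finset κ} {e : κ → ι → Z} {b : Z}
    (hb : ∀ β ∈ D, ∀ᶠ i in (l : Filter ι), b ≤ e β i) :
    ∃ i₀, ∀ᶠ i₁ in (l : Filter ι), ∀ β ∈ D,
      (e β i₁ = e β i₀ ∧ ∀ᶠ i in (l : Filter ι), e β i = e β i₀) ∨
        (e β i₀ < e β i₁ ∧ Tendsto (e β) l atTop) := by
  have hdich : ∀ᶠ i₀ in (l : Filter ι), ∀ β ∈ D,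
      (∀ᶠ i in (l : Filter ι), e β i = e β i₀) ∨ Tendsto (e β) l atTop := by
    refine (Finset.eventually_all D).mpr fun β hβ => ?_
    rcases eventually_eventually_eq_or_tendsto_atTop l (hb β hβ) with hconst | htop
    · exact hconst.mono fun _ => Or.inl
    · exact Eventually.of_forall fun _ => Or.inr htop
  obtain ⟨i₀, hi₀⟩ := hdich.exists
  exact ⟨i₀, (Finset.eventually_all D).mpr fun β hβ => (hi₀ β hβ).elim
    (fun h => h.mono fun i₁ hi₁ => Or.inl ⟨hi₁, h⟩)
    fun h => (h.eventually_gt_atTop _).mono fun i₁ hi₁ => Or.inr ⟨hi₁, h⟩⟩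

lemma exists_eventually_dyadicOrder_le (l : Ultrafilter (Fin n → ℤ)) (hD : D.Nonempty) :
    ∃ α ∈ D, ∀ᶠ k in (l : Filter (Fin n → ℤ)), ∀ β ∈ D, dyadicOrder α k ≤ dyadicOrder β k :=
  (Ultrafilter.eventually_exists_mem_iff D.finite_toSet).mp <| Eventually.of_forall fun k =>
    D.exists_min_image (fun α => dyadicOrder α k) hD

lemma exists_pos_lowestExponents_dyadicOrder {l : Ultrafilter (Fin n → ℤ)}
    (hl : (l : Filter (Fin n → ℤ)) ≤ atTop) (hD : D.Nonempty) :
    ∃ (α : Fin n → ℕ) (w : Fin n → ℝ) (k₀ : Fin n → ℤ), (∀ i, 0 < w i) ∧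
      (∀ β ∈ lowestExponents D w, ∀ᶠ k in (l : Filter (Fin n → ℤ)),
        dyadicOrder β k - dyadicOrder α k = dyadicOrder β k₀ - dyadicOrder α k₀) ∧
      ∀ β ∈ D, β ∉ lowestExponents D w →
        Tendsto (fun k => dyadicOrder β k - dyadicOrder α k) l atTop := by
  obtain ⟨α, hα, hmin⟩ := exists_eventually_dyadicOrder_le l hD
  let e : (Fin n → ℕ) → (Fin n → ℤ) → ℤ := fun β k => dyadicOrder β k - dyadicOrder α k
  obtain ⟨k₀, hk₀⟩ := exists_forall_eventually_eq_or_lt l (D := D) (e := e) (b := 0) fun β hβ =>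
    hmin.mono fun k hk => sub_nonneg.mpr (hk β hβ)
  obtain ⟨k₁, hk₁, hge⟩ := (hk₀.and (hl (eventually_ge_atTop (k₀ + 1)))).exists
  -- Positive weights come from comparing two scales chosen far out along the ultrafilter.
  let w : Fin n → ℝ := fun i => ((k₁ i - k₀ i : ℤ) : ℝ)
  have hw : ∀ β, w ⬝ᵥ exponentPoint β - w ⬝ᵥ exponentPoint α = ((e β k₁ - e β k₀ : ℤ) : ℝ) := by
    intro β
    simp only [w, dotProduct_intCast_sub, e]
    push_cast
    ring
  have hαw : α ∈ lowestExponents D w := mem_lowestExponents.mpr ⟨hα, fun β hβ => sub_nonneg.mp <| by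
    rw [hw, Int.cast_nonneg_iff, sub_nonneg]
    exact (hk₁ β hβ).elim (fun h => h.1.ge) fun h => h.1.le⟩
  refine ⟨α, w, k₀, fun i => Int.cast_pos.mpr (sub_pos.mpr (hge i)), fun β hβ => ?_,
    fun β hβ hβw => ?_⟩
  · have heq : e β k₁ - e β k₀ = 0 := by
      exact_mod_cast (hw β).symm.trans (sub_eq_zero.mpr (dotProduct_exponentPoint_eq hαw hβ))
    exact ((hk₁ β (mem_lowestExponents.mp hβ).1).resolve_right
      fun h => h.1.ne' (sub_eq_zero.mp heq)).2
  · have hlt : 0 < e β k₁ - e β k₀ := by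
      exact_mod_cast (sub_pos.mpr (dotProduct_exponentPoint_lt hαw hβ hβw)).trans_eq (hw β)
    exact ((hk₁ β hβ).resolve_left fun h => (sub_pos.mp hlt).ne' h.1).2

lemma exists_tendsto_monomial_dyadicScale_div {l : Ultrafilter (Fin n → ℤ)}
    (hl : (l : Filter (Fin n → ℤ)) ≤ atTop) (hD : D.Nonempty) :
    ∃ (w s₀ : Fin n → ℝ) (μ : (Fin n → ℤ) → ℝ), (∀ i, 0 < w i) ∧ (∀ i, 0 < s₀ i) ∧
      (∀ k, 0 < μ k) ∧ ∀ β ∈ D, Tendsto (fun k => monomial β (dyadicScale k) / μ k) l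
        (𝓝 (if β ∈ lowestExponents D w then monomial β s₀ else 0)) := by
  obtain ⟨α, w, k₀, hw, hconst, htop⟩ := exists_pos_lowestExponents_dyadicOrder hl hD
  let μ : (Fin n → ℤ) → ℝ := fun k => 2 ^ (dyadicOrder α k₀ - dyadicOrder α k)
  have hdiv : ∀ β k, monomial β (dyadicScale k) / μ k =
      2 ^ (-(dyadicOrder β k - dyadicOrder α k)) * 2 ^ (-dyadicOrder α k₀) := fun β k => by
    rw [monomial_dyadicScale, ← zpow_sub₀ two_ne_zero, ← zpow_add₀ two_ne_zero]
    congr 1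
    ring
  refine ⟨w, dyadicScale k₀, μ, hw, dyadicScale_pos k₀, fun k => zpow_pos two_pos _,
    fun β hβ => ?_⟩
  simp only [hdiv]
  split_ifs with hβw
  · refine tendsto_const_nhds.congr' ?_
    filter_upwards [hconst β hβw] with k hk
    rw [hk, monomial_dyadicScale, ← zpow_add₀ two_ne_zero]
    congr 1
    ring
  · simpa only [zero_mul, Function.comp_def] using
      (tendsto_zpow_neg_atTop_zero.comp (htop β hβ hβw)).mul_const (2 ^ (-dyadicOrder α k₀))

end DyadicScales

section UltrafilterLimits

variable {f : (Fin n → ℝ) → ℝ} {c : (Fin n → ℕ) → ℝ}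

lemma sum_ite_mul_monomial_eq_initialForm (c : (Fin n → ℕ) → ℝ) (w s v : Fin n → ℝ) :
    ∑ β ∈ minExponents c, (if β ∈ lowestExponents (minExponents c) w then monomial β s else 0) *
      (c β * monomial β v) = initialForm c w (s * v) := by
  have hsub : lowestExponents (minExponents c) w ⊆ minExponents c := Finset.filter_subset _ _
  simp only [ite_mul, zero_mul]
  rw [← Finset.sum_filter, Finset.filter_mem_eq_inter, Finset.inter_eq_right.mpr hsub, initialForm]
  refine Finset.sum_congr rfl fun β _ => ?_
  rw [monomial_mul]
  ring

lemma starFn_mul_le {s u : Fin n → ℝ} (hs : ∀ i, 0 < s i) (hu : ‖u‖ ≤ 1) :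
    starFn c (s * u) ≤ ∑ β ∈ minExponents c, monomial β s := by
  refine (starFn_le_sum_abs_monomial c _).trans (Finset.sum_le_sum fun β _ => ?_)
  rw [monomial_mul, abs_mul, abs_of_pos (monomial_pos β hs)]
  exact mul_le_of_le_one_right (monomial_pos β hs).le (by simpa using abs_monomial_le β hu)

lemma exists_eventually_starFn_le_mul {ι : Type*} {l : Filter ι} {s : ι → Fin n → ℝ} {μ : ι → ℝ}
    {r : (Fin n → ℕ) → ℝ} (hs : ∀ k i, 0 < s k i) (hμ : ∀ k, 0 < μ k)
    (hr : ∀ β ∈ minExponents c, Tendsto (fun k => monomial β (s k) / μ k) l (𝓝 (r β))) :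
    ∃ C : ℝ, ∀ᶠ k in l, ∀ u, ‖u‖ ≤ 1 → starFn c (s k * u) ≤ C * μ k := by
  have hsum := tendsto_finsetSum (minExponents c) hr
  refine ⟨∑ β ∈ minExponents c, r β + 1, ?_⟩
  filter_upwards [hsum.eventually_le_const (lt_add_one _)] with k hk u hu
  rw [← Finset.sum_div, div_le_iff₀ (hμ k)] at hk
  exact (starFn_mul_le (hs k) hu).trans hk

lemma exists_tendsto_iteratedFDeriv_rescale_initialForm
    (hexp : ∀ a, ∃ h R, IsMinimalExpansion f c a h R) (hc : c ≠ 0) {l : Ultrafilter (Fin n → ℤ)}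
    (hl : (l : Filter (Fin n → ℤ)) ≤ atTop) :
    ∃ (w s₀ : Fin n → ℝ) (μ : (Fin n → ℤ) → ℝ) (C : ℝ), (∀ i, 0 < w i) ∧ (∀ i, 0 < s₀ i) ∧
      (∀ k, 0 < μ k) ∧
      (∀ᶠ k in (l : Filter (Fin n → ℤ)), ∀ u, ‖u‖ ≤ 1 →
        starFn c (dyadicScale k * u) ≤ C * μ k) ∧
      ∀ a u₀, Tendsto (fun q : (Fin n → ℤ) × (Fin n → ℝ) =>
        iteratedFDeriv ℝ a (rescale f (μ q.1) (dyadicScale q.1)) q.2) (l ×ˢ 𝓝 u₀)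
        (𝓝 (iteratedFDeriv ℝ a (fun v => initialForm c w (s₀ * v)) u₀)) := by
  obtain ⟨w, s₀, μ, hw, hs₀, hμ, hlim⟩ :=
    exists_tendsto_monomial_dyadicScale_div hl (minExponents_nonempty hc)
  obtain ⟨C, hC⟩ := exists_eventually_starFn_le_mul dyadicScale_pos hμ hlim
  refine ⟨w, s₀, μ, C, hw, hs₀, hμ, hC, fun a u₀ => ?_⟩
  obtain ⟨h, R, hR⟩ := hexp a
  simpa only [sum_ite_mul_monomial_eq_initialForm] using hR.tendsto_iteratedFDeriv_rescale
    (tendsto_dyadicScale.mono_left hl) (fun k i => (dyadicScale_pos k i).ne')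
    (fun k => (hμ k).ne') hlim u₀

end UltrafilterLimits

section Boxes

open BoxIntegral

variable {P : Set (Fin n → ℝ) → Prop}

lemma boxOf_eq_Icc (lo hi : Fin n → ℝ) : boxOf lo hi = Set.Icc lo hi :=
  Set.pi_univ_Icc lo hi

lemma image_mul_boxOf {s : Fin n → ℝ} (hs : ∀ i, 0 < s i) (lo hi : Fin n → ℝ) :
    (fun u => s * u) '' boxOf lo hi = boxOf (s * lo) (s * hi) := by
  ext x
  simp only [boxOf, Set.mem_image, Set.mem_univ_pi, Set.mem_Icc, Pi.mul_apply]
  constructor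
  · rintro ⟨u, hu, rfl⟩ i
    exact ⟨mul_le_mul_of_nonneg_left (hu i).1 (hs i).le,
      mul_le_mul_of_nonneg_left (hu i).2 (hs i).le⟩
  · intro hx
    exact ⟨fun i => x i / s i, fun i => ⟨(le_div_iff₀' (hs i)).mpr (hx i).1,
      (div_le_iff₀' (hs i)).mpr (hx i).2⟩, funext fun i => mul_div_cancel₀ _ (hs i).ne'⟩

lemma closure_coe_box (I : Box (Fin n)) : closure (I : Set (Fin n → ℝ)) = Box.Icc I := by
  rw [Box.coe_eq_pi, closure_pi_set, Box.Icc_eq_pi]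
  exact Set.pi_congr rfl fun i _ => closure_Ioc (I.lower_ne_upper i)

lemma iUnion_Icc_of_isPartition {I : Box (Fin n)} {p : Prepartition I} (hp : p.IsPartition) :
    ⋃ B ∈ p.boxes, Box.Icc B = Box.Icc I := by
  simp only [← closure_coe_box, ← hp.iUnion_eq, Prepartition.iUnion_def']
  exact (p.boxes.finite_toSet.closure_biUnion _).symm

lemma exists_isPartition_forall_Icc (hP : Antitone P) (I : Box (Fin n))
    (h : ∀ x ∈ Box.Icc I, ∃ V ∈ 𝓝[Box.Icc I] x, P V) :
    ∃ p : Prepartition I, p.IsPartition ∧ ∀ B ∈ p, P (Box.Icc B) := by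
  have hball : ∀ x, ∃ r : Set.Ioi (0 : ℝ), x ∈ Box.Icc I →
      P (Metric.closedBall x r ∩ Box.Icc I) := fun x => by
    by_cases hx : x ∈ Box.Icc I
    · obtain ⟨V, hV, hPV⟩ := h x hx
      obtain ⟨r, hr, hrV⟩ := (nhdsWithin_hasBasis Metric.nhds_basis_closedBall _).mem_iff.mp hV
      exact ⟨⟨r, hr⟩, fun _ => hP hrV hPV⟩
    · exact ⟨⟨1, Set.mem_Ioi.mpr one_pos⟩, fun hx' => absurd hx' hx⟩
  choose r hr using hball
  obtain ⟨p, hp, -, hsub, -⟩ :=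
    Box.exists_taggedPartition_isHenstock_isSubordinate_homothetic I r
  exact ⟨p.toPrepartition, hp, fun B hB => hP
    (Set.subset_inter (hsub B hB) (Box.le_iff_Icc.mp (p.le_of_mem hB)))
    (hr _ (p.tag_mem_Icc B))⟩

lemma exists_iUnion_boxOf_eq (hP : Antitone P) {lo hi : Fin n → ℝ} (hlt : ∀ i, lo i < hi i)
    (h : ∀ x ∈ boxOf lo hi, ∃ V ∈ 𝓝[boxOf lo hi] x, P V) :
    ∃ (N : ℕ) (lo' hi' : Fin N → Fin n → ℝ), ⋃ j, boxOf (lo' j) (hi' j) = boxOf lo hi ∧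
      ∀ j, P (boxOf (lo' j) (hi' j)) := by
  simp only [boxOf_eq_Icc] at h ⊢
  obtain ⟨p, hp, hPp⟩ := exists_isPartition_forall_Icc hP ⟨lo, hi, hlt⟩ h
  let e := p.boxes.equivFin
  refine ⟨_, fun j => (e.symm j).1.lower, fun j => (e.symm j).1.upper, ?_,
    fun j => hPp _ (e.symm j).2⟩
  rw [e.symm.surjective.iUnion_comp fun B : p.boxes => Set.Icc B.1.lower B.1.upper,
    Set.iUnion_subtype]
  exact iUnion_Icc_of_isPartition hp

end Boxes

section DyadicRectangles

/-- The lower corner of the rectangle `∏ ±[1/2, 1]` with the signs of `σ`. -/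
def unitLower (σ : Fin n → Bool) : Fin n → ℝ := fun i => if σ i then 1 / 2 else -1

/-- The upper corner of the rectangle `∏ ±[1/2, 1]` with the signs of `σ`. -/
def unitUpper (σ : Fin n → Bool) : Fin n → ℝ := fun i => if σ i then 1 else -(1 / 2)

lemma unitLower_lt_unitUpper (σ : Fin n → Bool) (i : Fin n) : unitLower σ i < unitUpper σ i := by
  rw [unitLower, unitUpper]
  split_ifs <;> norm_num

lemma image_dyadicScale_mul_unitBox (k : Fin n → ℤ) (σ : Fin n → Bool) :
    (fun u => dyadicScale k * u) '' boxOf (unitLower σ) (unitUpper σ) = dyadicRect k σ := by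
  rw [image_mul_boxOf (dyadicScale_pos k), boxOf, dyadicRect]
  refine Set.pi_congr rfl fun i _ => ?_
  simp only [Pi.mul_apply, dyadicScale, unitLower, unitUpper, zpow_sub_one₀ (two_ne_zero' ℝ)]
  split_ifs <;> simp

lemma norm_le_one_of_mem_unitBox {σ : Fin n → Bool} {u : Fin n → ℝ}
    (hu : u ∈ boxOf (unitLower σ) (unitUpper σ)) : ‖u‖ ≤ 1 := by
  refine (pi_norm_le_iff_of_nonneg zero_le_one).mpr fun i => abs_le.mpr ?_
  have hi := hu i (Set.mem_univ i)
  simp only [unitLower, unitUpper, Set.mem_Icc] at hi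
  split_ifs at hi <;> constructor <;> linarith [hi.1, hi.2]

lemma ne_zero_of_mem_unitBox {σ : Fin n → Bool} {u : Fin n → ℝ}
    (hu : u ∈ boxOf (unitLower σ) (unitUpper σ)) (i : Fin n) : u i ≠ 0 := by
  have hi := hu i (Set.mem_univ i)
  simp only [unitLower, unitUpper, Set.mem_Icc] at hi
  intro h0
  split_ifs at hi <;> linarith [hi.1, hi.2]

lemma exists_mem_nhds_zero_of_eventually_atTop {Q : (Fin n → ℤ) → Prop}
    (hQ : ∀ᶠ k in atTop, Q k) :
    ∃ U ∈ 𝓝 (0 : Fin n → ℝ), ∀ k σ, dyadicRect k σ ⊆ U → Q k := by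
  obtain ⟨k₁, hk₁⟩ := eventually_atTop.mp hQ
  refine ⟨{x | ∀ i, |x i| < dyadicScale k₁ i}, eventually_all.mpr fun i => ?_,
    fun k σ hsub => hk₁ k fun i => ?_⟩
  · exact (continuous_apply i).abs.continuousAt.eventually_lt_const
      (by simpa using dyadicScale_pos k₁ i)
  let corner : Fin n → ℝ := fun i => if σ i then 1 else -1
  have hcorner : corner ∈ boxOf (unitLower σ) (unitUpper σ) := fun i _ => by
    simp only [corner, unitLower, unitUpper, Set.mem_Icc]
    split_ifs <;> norm_num
  have habs : |corner i| = 1 := by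
    simp only [corner]
    split_ifs <;> simp
  have hlt : |dyadicScale k i * corner i| < dyadicScale k₁ i := hsub
    (image_dyadicScale_mul_unitBox k σ ▸ Set.mem_image_of_mem _ hcorner) i
  rw [abs_mul, habs, mul_one, abs_of_pos (dyadicScale_pos k i), dyadicScale, dyadicScale,
    zpow_lt_zpow_iff_right₀ one_lt_two, neg_lt_neg_iff] at hlt
  exact hlt.le

end DyadicRectangles

section LargeDerivatives

variable {κ : Type*} {f g : (Fin n → ℝ) → ℝ} {c : (Fin n → ℕ) → ℝ} {o : ℕ}

/-- On the set `B`, some directional derivative of `f` with order in `A` and direction in the box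
of half-sides `s` is at least `η` times the supremum of `f^*`. -/
def HasLargeDerivative (f : (Fin n → ℝ) → ℝ) (c : (Fin n → ℕ) → ℝ) (A : Set ℕ) (s : Fin n → ℝ)
    (η : ℝ) (B : Set (Fin n → ℝ)) : Prop :=
  ∃ a ∈ A, ∃ y : Fin n → ℝ, (∀ i, |y i| ≤ s i) ∧
    ∀ x ∈ B, η * sSup (starFn c '' B) ≤ |iteratedFDeriv ℝ a f x fun _ => y|

lemma starFn_nonneg (c : (Fin n → ℕ) → ℝ) (x : Fin n → ℝ) : 0 ≤ starFn c x :=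
  tsum_nonneg fun _ => Finset.prod_nonneg fun _ _ => Real.rpow_nonneg (abs_nonneg _) _

lemma HasLargeDerivative.mono {A : Set ℕ} {s : Fin n → ℝ} {η η' : ℝ} {B : Set (Fin n → ℝ)}
    (h : HasLargeDerivative f c A s η B) (hη : η' ≤ η) : HasLargeDerivative f c A s η' B := by
  obtain ⟨a, ha, y, hy, hB⟩ := h
  have hsup : 0 ≤ sSup (starFn c '' B) :=
    Real.sSup_nonneg (Set.forall_mem_image.mpr fun x _ => starFn_nonneg c x)
  exact ⟨a, ha, y, hy, fun x hx => (mul_le_mul_of_nonneg_right hη hsup).trans (hB x hx)⟩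

lemma exists_eventually_le_abs_iteratedFDeriv {l : Filter κ} {s : κ → Fin n → ℝ} {μ : κ → ℝ}
    {a : ℕ} {u₀ : Fin n → ℝ} (hs : ∀ k i, 0 < s k i) (hμ : ∀ k, 0 < μ k)
    (hg : ContDiffAt ℝ (⊤ : WithTop ℕ∞) g u₀) (hga : iteratedFDeriv ℝ a g u₀ ≠ 0)
    (hlim : Tendsto (fun q : κ × (Fin n → ℝ) => iteratedFDeriv ℝ a (rescale f (μ q.1) (s q.1)) q.2)
      (l ×ˢ 𝓝 u₀) (𝓝 (iteratedFDeriv ℝ a g u₀))) :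
    ∃ z : Fin n → ℝ, ‖z‖ ≤ 1 ∧ ∃ δ > 0, ∃ V ∈ 𝓝 u₀, ∀ᶠ k in l, ∀ u ∈ V,
      δ * μ k ≤ |iteratedFDeriv ℝ a f (s k * u) fun _ => s k * z| := by
  obtain ⟨z, hz, hne⟩ := exists_norm_le_one_iteratedFDeriv_ne_zero hg hga
  have hlimz := ((continuous_eval_const fun _ : Fin a => z).tendsto _).comp hlim
  have hev := hlimz.abs.eventually_const_le (half_lt_self (abs_pos.mpr hne))
  obtain ⟨p, hp, q, hq, hpq⟩ := eventually_prod_iff.mp hev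
  refine ⟨z, hz, _, half_pos (abs_pos.mpr hne), {u | q u}, hq, hp.mono fun k hk u hu => ?_⟩
  have hle := hpq hk hu
  simp only [Function.comp_apply, iteratedFDeriv_rescale (hμ k).ne' fun i => (hs k i).ne', abs_mul,
    abs_inv, abs_of_pos (hμ k)] at hle
  rwa [← div_eq_inv_mul, le_div_iff₀ (hμ k)] at hle

lemma hasLargeDerivative_image_mul {A : Set ℕ} {a : ℕ} (ha : a ∈ A) {s z : Fin n → ℝ}
    {μ δ C : ℝ} {N : ℕ} {B : Set (Fin n → ℝ)} (hs : ∀ i, 0 < s i) (hμ : 0 < μ) (hz : ‖z‖ ≤ 1)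
    (hstar : ∀ u ∈ B, starFn c (s * u) ≤ C * μ) (hN : C ≤ (N + 1) * δ)
    (hδ : ∀ u ∈ B, δ * μ ≤ |iteratedFDeriv ℝ a f (s * u) fun _ => s * z|) :
    HasLargeDerivative f c A s (1 / (N + 1)) ((fun u => s * u) '' B) := by
  refine ⟨a, ha, s * z, fun i => ?_, Set.forall_mem_image.mpr fun u hu => ?_⟩
  · rw [Pi.mul_apply, abs_mul, abs_of_pos (hs i)]
    exact mul_le_of_le_one_right (hs i).le ((norm_le_pi_norm z i).trans hz)
  · have hsup : sSup (starFn c '' ((fun u => s * u) '' B)) ≤ C * μ :=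
      csSup_le (((Set.nonempty_of_mem hu).image _).image _) <|
        Set.forall_mem_image.mpr (Set.forall_mem_image.mpr hstar)
    calc 1 / ((N : ℝ) + 1) * sSup (starFn c '' ((fun u => s * u) '' B))
        ≤ 1 / ((N : ℝ) + 1) * ((N + 1) * δ * μ) := by gcongr; exact hsup.trans (by gcongr)
      _ = δ * μ := by field_simp
      _ ≤ _ := hδ u hu

lemma exists_eventually_hasLargeDerivative {A : Set ℕ} {l : Filter κ} {s : κ → Fin n → ℝ}
    {μ : κ → ℝ} {C : ℝ} {a : ℕ} {u₀ : Fin n → ℝ} (ha : a ∈ A) (hs : ∀ k i, 0 < s k i)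
    (hμ : ∀ k, 0 < μ k) (hstar : ∀ᶠ k in l, ∀ u, ‖u‖ ≤ 1 → starFn c (s k * u) ≤ C * μ k)
    (hg : ContDiffAt ℝ (⊤ : WithTop ℕ∞) g u₀) (hga : iteratedFDeriv ℝ a g u₀ ≠ 0)
    (hlim : Tendsto (fun q : κ × (Fin n → ℝ) => iteratedFDeriv ℝ a (rescale f (μ q.1) (s q.1)) q.2)
      (l ×ˢ 𝓝 u₀) (𝓝 (iteratedFDeriv ℝ a g u₀))) :
    ∃ (N : ℕ), ∃ V ∈ 𝓝 u₀, ∀ᶠ k in l, ∀ B ⊆ V, (∀ u ∈ B, ‖u‖ ≤ 1) →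
      HasLargeDerivative f c A (s k) (1 / (N + 1)) ((fun u => s k * u) '' B) := by
  obtain ⟨z, hz, δ, hδ, V, hV, hle⟩ := exists_eventually_le_abs_iteratedFDeriv hs hμ hg hga hlim
  obtain ⟨N, hN⟩ := exists_nat_ge (C / δ)
  refine ⟨N, V, hV, ?_⟩
  filter_upwards [hstar, hle] with k hstark hlek B hBV hB
  refine hasLargeDerivative_image_mul ha (hs k) (hμ k) hz (fun u hu => hstark u (hB u hu)) ?_
    fun u hu => hlek u (hBV hu)
  exact (div_le_iff₀ hδ).mp (hN.trans (le_add_of_nonneg_right zero_le_one))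

end LargeDerivatives

section Subdivisions

variable {f : (Fin n → ℝ) → ℝ} {c : (Fin n → ℕ) → ℝ} {o : ℕ}

/-- `f` has a derivative of order at most `o`, and one of order between `2` and `max 2 o`, that is
large on `B` in the sense of `HasLargeDerivative`. -/
def HasLargeDerivatives (f : (Fin n → ℝ) → ℝ) (c : (Fin n → ℕ) → ℝ) (o : ℕ) (s : Fin n → ℝ)
    (η : ℝ) (B : Set (Fin n → ℝ)) : Prop :=
  HasLargeDerivative f c (Set.Iic o) s η B ∧ HasLargeDerivative f c (Set.Icc 2 (max 2 o)) s η B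

/-- The dyadic rectangle with index `k` and signs `σ` splits into at most `K` boxes on which `f` has
large derivatives. A single parameter `K` controls both the number of boxes and the constant
`η = 1 / (K + 1)`. -/
def HasSubdivision (f : (Fin n → ℝ) → ℝ) (c : (Fin n → ℕ) → ℝ) (o K : ℕ) (k : Fin n → ℤ)
    (σ : Fin n → Bool) : Prop :=
  ∃ J ≤ K, ∃ lo hi : Fin J → Fin n → ℝ, ⋃ j, boxOf (lo j) (hi j) = dyadicRect k σ ∧
    ∀ j, HasLargeDerivatives f c o (dyadicScale k) (1 / (K + 1)) (boxOf (lo j) (hi j))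

lemma HasLargeDerivatives.mono {s : Fin n → ℝ} {N K : ℕ} {B : Set (Fin n → ℝ)}
    (h : HasLargeDerivatives f c o s (1 / (N + 1)) B) (hNK : N ≤ K) :
    HasLargeDerivatives f c o s (1 / (K + 1)) B := by
  have hle : 1 / ((K : ℝ) + 1) ≤ 1 / (N + 1) := by gcongr
  exact ⟨h.1.mono hle, h.2.mono hle⟩

lemma HasSubdivision.mono {K K' : ℕ} {k : Fin n → ℤ} {σ : Fin n → Bool}
    (h : HasSubdivision f c o K k σ) (hK : K ≤ K') : HasSubdivision f c o K' k σ := by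
  obtain ⟨J, hJ, lo, hi, hcover, hlarge⟩ := h
  exact ⟨J, hJ.trans hK, lo, hi, hcover, fun j => (hlarge j).mono hK⟩

lemma iteratedFDeriv_comp_mul_left_ne_zero {s : Fin n → ℝ} (hs : ∀ i, s i ≠ 0)
    {g : (Fin n → ℝ) → ℝ} {a : ℕ} {u : Fin n → ℝ} (h : iteratedFDeriv ℝ a g (s * u) ≠ 0) :
    iteratedFDeriv ℝ a (fun x => g (s * x)) u ≠ 0 := by
  refine fun h0 => h (ContinuousMultilinearMap.ext fun v => ?_)
  have hv := iteratedFDeriv_comp_mul_left hs g u fun j => s⁻¹ * v j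
  have hinv : (fun j => s * (s⁻¹ * v j)) = v :=
    funext fun j => funext fun i => mul_inv_cancel_left₀ (hs i) _
  rw [h0, hinv] at hv
  exact hv.symm

lemma exists_eventually_hasLargeDerivatives (hexp : ∀ a, ∃ h R, IsMinimalExpansion f c a h R)
    (hc : c ≠ 0) (hc0 : c 0 = 0) (hc1 : ∀ i, c (Pi.single i 1) = 0) (ho : newtonOrder c = o)
    {l : Ultrafilter (Fin n → ℤ)} (hl : (l : Filter (Fin n → ℤ)) ≤ atTop) {u₀ : Fin n → ℝ}
    (hu₀ : ∀ i, u₀ i ≠ 0) :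
    ∃ N : ℕ, ∃ V ∈ 𝓝 u₀, ∀ᶠ k in (l : Filter (Fin n → ℤ)), ∀ B ⊆ V, (∀ u ∈ B, ‖u‖ ≤ 1) →
      HasLargeDerivatives f c o (dyadicScale k) (1 / (N + 1))
        ((fun u => dyadicScale k * u) '' B) := by
  obtain ⟨w, s₀, μ, C, hw, hs₀, hμ, hstar, hlim⟩ :=
    exists_tendsto_iteratedFDeriv_rescale_initialForm hexp hc hl
  have hs₀' : ∀ i, s₀ i ≠ 0 := fun i => (hs₀ i).ne'
  have hx : ∀ i, (s₀ * u₀) i ≠ 0 := fun i => mul_ne_zero (hs₀' i) (hu₀ i)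
  have hg : ContDiffAt ℝ (⊤ : WithTop ℕ∞) (fun v => initialForm c w (s₀ * v)) u₀ :=
    ((contDiff_initialForm c w).comp (contDiff_const.mul contDiff_id)).contDiffAt
  obtain ⟨a₁, ha₁, hne₁⟩ := exists_iteratedFDeriv_initialForm_ne_zero hc ho hw hx
  obtain ⟨a₂, ha₂, ha₂', hne₂⟩ :=
    exists_two_le_iteratedFDeriv_initialForm_ne_zero hc hc0 hc1 ho hw hx
  obtain ⟨N₁, V₁, hV₁, h₁⟩ := exists_eventually_hasLargeDerivative (A := Set.Iic o) ha₁
    dyadicScale_pos hμ hstar hg (iteratedFDeriv_comp_mul_left_ne_zero hs₀' hne₁) (hlim a₁ u₀)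
  obtain ⟨N₂, V₂, hV₂, h₂⟩ := exists_eventually_hasLargeDerivative (A := Set.Icc 2 (max 2 o))
    ⟨ha₂, ha₂'⟩ dyadicScale_pos hμ hstar hg (iteratedFDeriv_comp_mul_left_ne_zero hs₀' hne₂)
    (hlim a₂ u₀)
  refine ⟨max N₁ N₂, V₁ ∩ V₂, inter_mem hV₁ hV₂, ?_⟩
  filter_upwards [h₁, h₂] with k hk₁ hk₂ B hB hB1
  exact ⟨(hk₁ B (fun u hu => (hB hu).1) hB1).mono (by gcongr; exact le_max_left _ _),
    (hk₂ B (fun u hu => (hB hu).2) hB1).mono (by gcongr; exact le_max_right _ _)⟩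

lemma exists_eventually_hasSubdivision (hexp : ∀ a, ∃ h R, IsMinimalExpansion f c a h R)
    (hc : c ≠ 0) (hc0 : c 0 = 0) (hc1 : ∀ i, c (Pi.single i 1) = 0) (ho : newtonOrder c = o)
    {l : Ultrafilter (Fin n → ℤ)} (hl : (l : Filter (Fin n → ℤ)) ≤ atTop) (σ : Fin n → Bool) :
    ∃ K, ∀ᶠ k in (l : Filter (Fin n → ℤ)), HasSubdivision f c o K k σ := by
  let P : Set (Fin n → ℝ) → Prop := fun V => ∃ N : ℕ, ∀ᶠ k in (l : Filter (Fin n → ℤ)),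
    ∀ B ⊆ V, (∀ u ∈ B, ‖u‖ ≤ 1) →
      HasLargeDerivatives f c o (dyadicScale k) (1 / (N + 1)) ((fun u => dyadicScale k * u) '' B)
  have hP : Antitone P := fun V W hVW ⟨N, hN⟩ =>
    ⟨N, hN.mono fun k hk B hB => hk B (hB.trans hVW)⟩
  obtain ⟨J, lo, hi, hcover, hlarge⟩ := exists_iUnion_boxOf_eq hP (unitLower_lt_unitUpper σ)
    fun u₀ hu₀ => by
      obtain ⟨N, V, hV, hN⟩ := exists_eventually_hasLargeDerivatives hexp hc hc0 hc1 ho hl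
        (ne_zero_of_mem_unitBox hu₀)
      exact ⟨V, mem_nhdsWithin_of_mem_nhds hV, N, hN⟩
  choose N hN using hlarge
  obtain ⟨K, hK⟩ := Finite.exists_le N
  refine ⟨max J K, (eventually_all.mpr hN).mono fun k hk => ⟨J, le_max_left _ _,
    fun j => dyadicScale k * lo j, fun j => dyadicScale k * hi j, ?_, fun j => ?_⟩⟩
  · simp only [← image_mul_boxOf (dyadicScale_pos k), ← Set.image_iUnion, hcover,
      image_dyadicScale_mul_unitBox]
  · rw [← image_mul_boxOf (dyadicScale_pos k)]
    refine (hk j _ subset_rfl fun u hu => ?_).mono ((hK j).trans (le_max_right _ _))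
    exact norm_le_one_of_mem_unitBox (hcover.subset (Set.mem_iUnion_of_mem j hu))

lemma exists_mem_nhds_hasSubdivision (hexp : ∀ a, ∃ h R, IsMinimalExpansion f c a h R)
    (hc : c ≠ 0) (hc0 : c 0 = 0) (hc1 : ∀ i, c (Pi.single i 1) = 0) (ho : newtonOrder c = o) :
    ∃ U ∈ 𝓝 (0 : Fin n → ℝ), ∃ K, ∀ k σ, dyadicRect k σ ⊆ U → HasSubdivision f c o K k σ := by
  have hunif : ∃ K, ∀ᶠ k in atTop, ∀ σ, HasSubdivision f c o K k σ := by
    refine exists_eventually_of_forall_ultrafilter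
      (fun K K' hK k hk σ => (hk σ).mono hK) fun l hl => ?_
    choose K hK using exists_eventually_hasSubdivision hexp hc hc0 hc1 ho hl
    obtain ⟨K', hK'⟩ := Finite.exists_le K
    exact ⟨K', (eventually_all.mpr hK).mono fun k hk σ => (hk σ).mono (hK' σ)⟩
  obtain ⟨K, hK⟩ := hunif
  obtain ⟨U, hU, hsub⟩ := exists_mem_nhds_zero_of_eventually_atTop hK
  exact ⟨U, hU, K, fun k σ hkσ => hsub k σ hkσ σ⟩

end Subdivisions

/-- **Lemma 2.2 (Lemma 3.7 of [G1]).** If `f` is smooth near `0` with `f(0) = 0`,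
`∇f(0) = 0`, nonvanishing Taylor expansion `c`, and `f` is either real-analytic or its
Newton polyhedron intersects each coordinate axis, then there are a neighborhood `U` of
the origin and constants `K`, `η > 0` such that any dyadic rectangle `R ⊆ U` may be
divided into at most `K` rectangles `R_j`, on each of which there are an integer `a`
and a single `y` with `|y_i| ≤ 2^{-k_i}` such that `|(y·∇)^a f| ≥ η sup_{R_j} f^*` on
`R_j`; moreover for each `j` one can arrange `0 ≤ a ≤ o(f)`, or `2 ≤ a ≤ max(2, o(f))`. -/
theorem lemma_2_2
    (n : ℕ) (hn : 0 < n)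
    (f : (Fin n → ℝ) → ℝ) (c : (Fin n → ℕ) → ℝ)
    (U₀ : Set (Fin n → ℝ)) (hU₀ : U₀ ∈ 𝓝 (0 : Fin n → ℝ)) (hsmooth : ContDiffOn ℝ (⊤ : ℕ∞) f U₀)
    (hf0 : f 0 = 0) (hf1 : fderiv ℝ f 0 = 0)
    (hTaylor : IsTaylorSeriesAt f c) (hc : c ≠ 0)
    (oF : ℕ) (hoF : newtonOrder c = (oF : ℕ∞))
    (hcase : HasTaylorSeriesAtOrigin f c ∨
      ∀ i : Fin n, ∃ x ∈ newtonPolyhedron c, ∀ j, j ≠ i → x j = 0) :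
    ∃ U ∈ 𝓝 (0 : Fin n → ℝ), ∃ K : ℕ, ∃ η : ℝ, 0 < η ∧
      ∀ (k : Fin n → ℤ) (σ : Fin n → Bool), dyadicRect k σ ⊆ U →
        ∃ J : ℕ, J ≤ K ∧ ∃ lo hi : Fin J → Fin n → ℝ,
          (⋃ j, boxOf (lo j) (hi j)) = dyadicRect k σ ∧
          ∀ j : Fin J,
            (∃ aDeg : ℕ, aDeg ≤ oF ∧ ∃ y : Fin n → ℝ,
              (∀ i, |y i| ≤ (2 : ℝ) ^ (-(k i))) ∧
              ∀ x ∈ boxOf (lo j) (hi j),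
                η * sSup (starFn c '' boxOf (lo j) (hi j)) ≤
                  |iteratedFDeriv ℝ aDeg f x fun _ => y|) ∧
            (∃ aDeg : ℕ, 2 ≤ aDeg ∧ aDeg ≤ max 2 oF ∧ ∃ y : Fin n → ℝ,
              (∀ i, |y i| ≤ (2 : ℝ) ^ (-(k i))) ∧
              ∀ x ∈ boxOf (lo j) (hi j),
                η * sSup (starFn c '' boxOf (lo j) (hi j)) ≤
                  |iteratedFDeriv ℝ aDeg f x fun _ => y|) := by
  have hf : ContDiffAt ℝ (⊤ : ℕ∞) f 0 := hsmooth.contDiffAt hU₀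
  have hc0 : c 0 = 0 := hTaylor.coeff_zero.trans hf0
  have hc1 : ∀ i, c (Pi.single i 1) = 0 := fun i => by simp [hTaylor.coeff_single, hf1]
  have hexp : ∀ a, ∃ h R, IsMinimalExpansion f c a h R := fun a => hcase.elim
    (fun hA => (hA.exists_isMinimalExpansion a).imp fun h hh => ⟨_, hh⟩)
    fun haxis => hTaylor.exists_isMinimalExpansion hn hf haxis a
  obtain ⟨U, hU, K, hK⟩ := exists_mem_nhds_hasSubdivision hexp hc hc0 hc1 hoF
  refine ⟨U, hU, K, 1 / (K + 1), by positivity, fun k σ hkσ => ?_⟩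
  obtain ⟨J, hJ, lo, hi, hcover, hlarge⟩ := hK k σ hkσ
  refine ⟨J, hJ, lo, hi, hcover, fun j => ?_⟩
  obtain ⟨h₁, a, ⟨ha, ha'⟩, h₂⟩ := hlarge j
  exact ⟨h₁, a, ha, ha', h₂⟩

end Paper
end
end
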